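/- Assume 𝒜, ℬ as in the context with Λ_𝒜 spanning. Let ν⁰ be a Borel probability measure on 𝕍 with finite first moment, ν^∞ a Borel probability measure on 𝕊_𝕍, t > 0, and set z = ν̄⁰ + t ν̄^∞ (barycentres). Suppose F(ν̄⁰) ≤ ∫_𝕍 F dν⁰ holds for every 𝒜-quasiconvex F ∈ ℍ. Then (ν⁰, t ν^∞) ∈ Y(z) if and only if for every 𝒜-quasiconvex F ∈ ℍ one has G_F(ν̄^∞) ≤ ∫_{𝕊_𝕍} F^∞ dν^∞, where G_F(w) = sup{ ζ·w : ζ = F'(z₀) for some point z₀ of differentiability of F } is the support function of the set of derivatives of F. -/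

import Mathlib

open MeasureTheory Filter Topology

noncomputable section

/-! ## Basic PDE setup -/

abbrev Dom (n : ℕ) := Fin n → ℝ

def unitCube (n : ℕ) : Set (Dom n) := Set.univ.pi fun _ => Set.Ioo (-(1/2) : ℝ) (1/2)

def closedUnitCube (n : ℕ) : Set (Dom n) := Set.univ.pi fun _ => Set.Icc (-(1/2) : ℝ) (1/2)

/-- The finite set of multi-indices of degree `k`. -/
def degSet (n k : ℕ) : Finset (Fin n → ℕ) :=
  (Fintype.piFinset fun _ : Fin n => Finset.range (k+1)).filter fun α => (∑ i, α i) = k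

/-- Partial derivative in the `j`-th coordinate direction. -/
def pderivDir {n : ℕ} {V : Type*} [NormedAddCommGroup V] [NormedSpace ℝ V]
    (j : Fin n) (u : Dom n → V) : Dom n → V :=
  fun x => fderiv ℝ u x (Pi.single j 1)

/-- The multi-index partial derivative `∂^α`. -/
def mderiv {n : ℕ} {V : Type*} [NormedAddCommGroup V] [NormedSpace ℝ V]
    (α : Fin n → ℕ) (u : Dom n → V) : Dom n → V :=
  (List.finRange n).foldr (fun j f => (pderivDir j)^[α j] f) u

/-- The action of a homogeneous `k`-th order constant-coefficient operator with
coefficients `A α` on a function. -/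
def opApply {n : ℕ} {V W : Type*} [NormedAddCommGroup V] [NormedSpace ℝ V]
    [NormedAddCommGroup W] [NormedSpace ℝ W]
    (A : (Fin n → ℕ) → (V →L[ℝ] W)) (k : ℕ) (u : Dom n → V) (x : Dom n) : W :=
  ∑ α ∈ degSet n k, A α (mderiv α u x)

/-- The symbol `𝒜(ξ) = Σ_{|α|=k} ξ^α A_α`. -/
def opSymbol {n : ℕ} {V W : Type*} [NormedAddCommGroup V] [NormedSpace ℝ V]
    [NormedAddCommGroup W] [NormedSpace ℝ W]
    (A : (Fin n → ℕ) → (V →L[ℝ] W)) (k : ℕ) (ξ : Dom n) : V →L[ℝ] W :=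
  ∑ α ∈ degSet n k, (∏ i, ξ i ^ α i) • A α

/-- The wave cone `Λ_𝒜 = ⋃_{ξ ≠ 0} ker 𝒜(ξ)`. -/
def waveCone {n : ℕ} {V W : Type*} [NormedAddCommGroup V] [NormedSpace ℝ V]
    [NormedAddCommGroup W] [NormedSpace ℝ W]
    (A : (Fin n → ℕ) → (V →L[ℝ] W)) (k : ℕ) : Set V :=
  {v | ∃ ξ : Dom n, ξ ≠ 0 ∧ opSymbol A k ξ v = 0}

/-- The wave cone is spanning. -/
def SpanningCone {n : ℕ} {V W : Type*} [NormedAddCommGroup V] [NormedSpace ℝ V]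
    [NormedAddCommGroup W] [NormedSpace ℝ W]
    (A : (Fin n → ℕ) → (V →L[ℝ] W)) (k : ℕ) : Prop :=
  Submodule.span ℝ (waveCone A k) = ⊤

/-- `ℬ` is an exact potential of `𝒜`:  `ker 𝒜(ξ) = im ℬ(ξ)` for all `ξ ≠ 0`. -/
def ExactPotential {n : ℕ} {U V W : Type*} [NormedAddCommGroup V] [NormedSpace ℝ V]
    [NormedAddCommGroup W] [NormedSpace ℝ W] [NormedAddCommGroup U] [NormedSpace ℝ U]
    (A : (Fin n → ℕ) → (V →L[ℝ] W)) (k : ℕ)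
    (B : (Fin n → ℕ) → (U →L[ℝ] V)) (l : ℕ) : Prop :=
  ∀ ξ : Dom n, ξ ≠ 0 → LinearMap.ker (opSymbol A k ξ : V →ₗ[ℝ] W) = LinearMap.range (opSymbol B l ξ : U →ₗ[ℝ] V)

/-- `ℤⁿ`-periodicity. -/
def ZPeriodic {n : ℕ} {V : Type*} (v : Dom n → V) : Prop :=
  ∀ (x : Dom n) (m : Fin n → ℤ), v (x + fun i => (m i : ℝ)) = v x

/-- `𝒜`-quasiconvexity of a continuous integrand. -/
def AQuasiconvex {n : ℕ} {V W : Type*} [NormedAddCommGroup V] [NormedSpace ℝ V]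
    [NormedAddCommGroup W] [NormedSpace ℝ W]
    (A : (Fin n → ℕ) → (V →L[ℝ] W)) (k : ℕ) (f : V → ℝ) : Prop :=
  Continuous f ∧ ∀ (z : V) (v : Dom n → V), ContDiff ℝ (⊤ : ℕ∞) v → ZPeriodic v →
    (∫ x in unitCube n, v x) = 0 → (∀ x, opApply A k v x = 0) →
    f z ≤ ∫ x in unitCube n, f (z + v x)

def LinearGrowth {V : Type*} [NormedAddCommGroup V] (f : V → ℝ) : Prop :=
  ∃ c : ℝ, ∀ z, |f z| ≤ c * (1 + ‖z‖)

/-- Upper recession function `f^∞(z) = limsup_{t→∞, z'→z} f(tz')/t`. -/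
def urec {V : Type*} [NormedAddCommGroup V] [NormedSpace ℝ V] (f : V → ℝ) (z : V) : ℝ :=
  limsup (fun p : ℝ × V => f (p.1 • p.2) / p.1) (atTop ×ˢ 𝓝 z)

/-- The radial recession function `z ↦ limsup_{t→∞} f(tz)/t`. -/
def rrec {V : Type*} [NormedAddCommGroup V] [NormedSpace ℝ V] (f : V → ℝ) (z : V) : ℝ :=
  limsup (fun t : ℝ => f (t • z) / t) atTop

/-- `g` is the recession function of `Φ`, the limit being locally uniform. -/
def HasRec {V : Type*} [NormedAddCommGroup V] [NormedSpace ℝ V] (Φ g : V → ℝ) : Prop :=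
  TendstoLocallyUniformly (fun (t : ℝ) (z : V) => Φ (t • z) / t) g atTop

/-- Membership in the class `ℍ`. -/
def MemH {V : Type*} [NormedAddCommGroup V] [NormedSpace ℝ V] (Φ : V → ℝ) : Prop :=
  Continuous Φ ∧ LinearGrowth Φ ∧ ∃ g : V → ℝ, HasRec Φ g

/-- `C_c^∞` functions with support in `Ω`. -/
def CcSmooth {n : ℕ} {U : Type*} [NormedAddCommGroup U] [NormedSpace ℝ U]
    (Ω : Set (Dom n)) (u : Dom n → U) : Prop :=
  ContDiff ℝ (⊤ : ℕ∞) u ∧ HasCompactSupport u ∧ tsupport u ⊆ Ω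

/-- The `W^{l-1,1}` norm : sum of the `L¹` norms of derivatives of order `< l`. -/
def sobNorm {n : ℕ} {U : Type*} [NormedAddCommGroup U] [NormedSpace ℝ U]
    (l : ℕ) (u : Dom n → U) : ℝ :=
  ∑ j ∈ Finset.range l, ∫ x : Dom n, ‖iteratedFDeriv ℝ j u x‖

/-- Membership of a pair `(ν⁰, ν^∞)` in the set `Y(z)` of Young measures generated by
sequences `z + ℬ u_j` with `u_j ∈ C_c^∞(𝕏, 𝕌)` and `‖u_j‖_{W^{l-1,1}} → 0`. -/
def memY {n : ℕ} {U V : Type*} [NormedAddCommGroup V] [InnerProductSpace ℝ V]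
    [FiniteDimensional ℝ V] [MeasurableSpace V] [BorelSpace V]
    [NormedAddCommGroup U] [NormedSpace ℝ U]
    (B : (Fin n → ℕ) → (U →L[ℝ] V)) (l : ℕ) (z : V)
    (nu0 : Measure V) (nuInf : Measure (Metric.sphere (0:V) 1)) : Prop :=
  ∃ u : ℕ → Dom n → U,
    (∀ j, CcSmooth (unitCube n) (u j)) ∧
    Tendsto (fun j => sobNorm l (u j)) atTop (𝓝 0) ∧
    ∀ Φ : V → ℝ, MemH Φ →
      Tendsto (fun j => ∫ x in unitCube n, Φ (z + opApply B l (u j) x)) atTop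
        (𝓝 ((∫ v, Φ v ∂nu0) + ∫ w, rrec Φ (w : V) ∂nuInf))

/-! ## The transform T, Lipschitz test classes, derivative sets, envelopes -/

/-- The transformed integrand on the open unit ball. -/
def transf {V : Type*} [NormedAddCommGroup V] [NormedSpace ℝ V] (Φ : V → ℝ) (zh : V) : ℝ :=
  (1 - ‖zh‖) * Φ ((1 - ‖zh‖)⁻¹ • zh)

/-- The function `TΦ` on the closed unit ball (as a function on `V`). -/
def Tfun {V : Type*} [NormedAddCommGroup V] [NormedSpace ℝ V] (Φ : V → ℝ) (zh : V) : ℝ :=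
  if ‖zh‖ < 1 then transf Φ zh else rrec Φ zh

/-- `‖TΦ‖_LIP ≤ 1` on the closed unit ball. -/
def TLipUnit {V : Type*} [NormedAddCommGroup V] [NormedSpace ℝ V] (Φ : V → ℝ) : Prop :=
  ∃ K : NNReal, LipschitzOnWith K (Tfun Φ) (Metric.closedBall (0:V) 1) ∧
    (⨆ zh ∈ Metric.closedBall (0:V) 1, |Tfun Φ zh|) + (K : ℝ) ≤ 1

/-- `‖η‖_LIP ≤ 1` on `Ω̄` (with the `ℓ^∞` metric on `ℝⁿ`). -/
def etaLipUnit {n : ℕ} (Ω : Set (Dom n)) (η : Dom n → ℝ) : Prop :=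
  ∃ K : NNReal, LipschitzOnWith K η (closure Ω) ∧
    (⨆ x ∈ closure Ω, |η x|) + (K : ℝ) ≤ 1

/-- The set of derivatives `F'(z₀)` of `F` (realized as vectors via the inner product). -/
def derivSet {V : Type*} [NormedAddCommGroup V] [InnerProductSpace ℝ V]
    [FiniteDimensional ℝ V] (F : V → ℝ) : Set V :=
  {ζ : V | ∃ z₀ : V, HasFDerivAt F (InnerProductSpace.toDual ℝ V ζ : V →L[ℝ] ℝ) z₀}

/-- The support function of a set `D ⊂ 𝕍`. -/
def suppFn {V : Type*} [NormedAddCommGroup V] [InnerProductSpace ℝ V]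
    (D : Set V) (w : V) : ℝ :=
  sSup ((fun ζ => (inner ℝ ζ w : ℝ)) '' D)

/-- The `𝒜`-quasiconvex envelope, with values in `[-∞, ∞)` (realized in `EReal`). -/
def qcEnv {n : ℕ} {V W : Type*} [NormedAddCommGroup V] [InnerProductSpace ℝ V]
    [FiniteDimensional ℝ V] [NormedAddCommGroup W] [NormedSpace ℝ W]
    (A : (Fin n → ℕ) → (V →L[ℝ] W)) (k : ℕ) (Φ : V → ℝ) (ξ : V) : EReal :=
  sInf {r : EReal | ∃ v : Dom n → V, ContDiff ℝ (⊤ : ℕ∞) v ∧ ZPeriodic v ∧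
    (∫ x in unitCube n, v x) = 0 ∧ (∀ x, opApply A k v x = 0) ∧
    r = ((∫ x in unitCube n, Φ (ξ + v x) : ℝ) : EReal)}

/-- A standard mollifier: smooth, nonnegative, supported in the closed unit cube,
positive on the open unit cube, with integral one. -/
def IsStdMollifier (n : ℕ) (ρ : Dom n → ℝ) : Prop :=
  ContDiff ℝ (⊤ : ℕ∞) ρ ∧ (∀ x, 0 ≤ ρ x) ∧ tsupport ρ ⊆ closedUnitCube n ∧
    (∀ x ∈ unitCube n, 0 < ρ x) ∧ (∫ x : Dom n, ρ x) = 1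

/-- A mollifier (no interior positivity required). -/
def IsMollifier (n : ℕ) (ρ : Dom n → ℝ) : Prop :=
  ContDiff ℝ (⊤ : ℕ∞) ρ ∧ (∀ x, 0 ≤ ρ x) ∧ tsupport ρ ⊆ closedUnitCube n ∧
    (∫ x : Dom n, ρ x) = 1

/-- The rescaled mollifier kernel `φ_t(x) = t^{-n} φ(x/t)`. -/
def mollK {n : ℕ} (ρ : Dom n → ℝ) (t : ℝ) (x : Dom n) : ℝ := ((t : ℝ) ^ n)⁻¹ * ρ (t⁻¹ • x)

section Part1

/-! ## Derivative machinery -/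

section DerivMachinery
variable {n : ℕ} {E E' : Type*} [NormedAddCommGroup E] [NormedSpace ℝ E]
  [NormedAddCommGroup E'] [NormedSpace ℝ E']

def Ddir (L : List (Fin n)) (u : Dom n → E) : Dom n → E := L.foldr pderivDir u

def dirs (α : Fin n → ℕ) : List (Fin n) := (List.finRange n).flatMap fun j => List.replicate (α j) j

lemma Ddir_nil (u : Dom n → E) : Ddir [] u = u := rfl
lemma Ddir_cons (j : Fin n) (L : List (Fin n)) (u : Dom n → E) :
    Ddir (j :: L) u = pderivDir j (Ddir L u) := rfl

lemma Ddir_append (L L' : List (Fin n)) (u : Dom n → E) :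
    Ddir (L ++ L') u = Ddir L (Ddir L' u) := by
  simp [Ddir, List.foldr_append]

lemma Ddir_replicate (j : Fin n) (m : ℕ) (u : Dom n → E) :
    Ddir (List.replicate m j) u = (pderivDir j)^[m] u := by
  induction m with
  | zero => rfl
  | succ m ih => rw [List.replicate_succ, Ddir_cons, ih, Function.iterate_succ_apply']

lemma mderiv_eq_Ddir (α : Fin n → ℕ) (u : Dom n → E) : mderiv α u = Ddir (dirs α) u := by
  unfold mderiv dirs
  induction List.finRange n with
  | nil => rfl
  | cons j L ih => rw [List.foldr_cons, List.flatMap_cons, Ddir_append, ← ih, Ddir_replicate]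

lemma dirs_count (α : Fin n → ℕ) (j : Fin n) : (dirs α).count j = α j := by
  unfold dirs
  rw [List.count_flatMap]
  have : ∀ L : List (Fin n), L.Nodup → ((L.map (List.count j ∘ fun j => List.replicate (α j) j)).sum
      = if j ∈ L then α j else 0) := by
    intro L hL
    induction L with
    | nil => simp
    | cons a L ih =>
      rw [List.nodup_cons] at hL
      rw [List.map_cons, List.sum_cons, ih hL.2]
      by_cases h : a = j
      · subst h; simp [hL.1]
      · simp [List.count_replicate, h, Ne.symm h]
  rw [this _ (List.nodup_finRange n)]
  simp

lemma dirs_length (α : Fin n → ℕ) : (dirs α).length = ∑ i, α i := by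
  unfold dirs
  simp [List.length_flatMap, Fin.sum_univ_def]

lemma mem_degSet {m : ℕ} {α : Fin n → ℕ} : α ∈ degSet n m ↔ ∑ i, α i = m := by
  unfold degSet
  simp only [Finset.mem_filter, Fintype.mem_piFinset, Finset.mem_range, and_iff_right_iff_imp]
  intro h i
  have := Finset.single_le_sum (f := α) (fun _ _ => Nat.zero_le _) (Finset.mem_univ i)
  omega

lemma pderivDir_smooth (j : Fin n) {u : Dom n → E} (hu : ContDiff ℝ (⊤ : ℕ∞) u) :
    ContDiff ℝ (⊤ : ℕ∞) (pderivDir j u) := by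
  unfold pderivDir
  exact (hu.fderiv_right (m := (⊤ : ℕ∞)) (by simp)).clm_apply contDiff_const

lemma Ddir_smooth (L : List (Fin n)) {u : Dom n → E} (hu : ContDiff ℝ (⊤ : ℕ∞) u) :
    ContDiff ℝ (⊤ : ℕ∞) (Ddir L u) := by
  induction L with
  | nil => exact hu
  | cons j L ih => exact pderivDir_smooth j ih

lemma sm_diff {u : Dom n → E} (hu : ContDiff ℝ (⊤ : ℕ∞) u) : Differentiable ℝ u :=
  hu.differentiable (by simp)

lemma Ddir_congr {L : List (Fin n)} {u u' : Dom n → E} {x : Dom n} (h : u =ᶠ[𝓝 x] u') :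
    Ddir L u =ᶠ[𝓝 x] Ddir L u' := by
  induction L with
  | nil => exact h
  | cons j L ih =>
    rw [Ddir_cons, Ddir_cons]
    filter_upwards [ih.fderiv (𝕜 := ℝ)] with y hy
    simp [pderivDir, hy]

lemma pderivDir_comm (i j : Fin n) {u : Dom n → E} (hu : ContDiff ℝ (⊤ : ℕ∞) u) :
    pderivDir i (pderivDir j u) = pderivDir j (pderivDir i u) := by
  have key : ∀ (i j : Fin n) (x : Dom n), pderivDir i (pderivDir j u) x
      = fderiv ℝ (fderiv ℝ u) x (Pi.single i 1) (Pi.single j 1) := by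
    intro i j x
    have hd : DifferentiableAt ℝ (fderiv ℝ u) x :=
      ((hu.fderiv_right (m := (⊤ : ℕ∞)) (by simp)).differentiable (by simp)) x
    unfold pderivDir
    rw [fderiv_clm_apply hd (by fun_prop)]
    simp
  funext x
  rw [key, key]
  have := (hu.contDiffAt (x := x)).isSymmSndFDerivAt
    (by simp only [minSmoothness_of_isRCLikeNormedField]; exact WithTop.coe_le_coe.2 (le_top : (2 : ℕ∞) ≤ ⊤))
  exact this _ _

lemma Ddir_perm {L L' : List (Fin n)} (h : L.Perm L') {u : Dom n → E}
    (hu : ContDiff ℝ (⊤ : ℕ∞) u) : Ddir L u = Ddir L' u := by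
  induction h with
  | nil => rfl
  | cons a _ ih => rw [Ddir_cons, Ddir_cons, ih]
  | swap a b L =>
    rw [Ddir_cons, Ddir_cons, Ddir_cons, Ddir_cons]
    exact pderivDir_comm _ _ (Ddir_smooth L hu)
  | trans _ _ ih1 ih2 => rw [ih1, ih2]

lemma mderiv_mderiv (α β : Fin n → ℕ) {u : Dom n → E} (hu : ContDiff ℝ (⊤ : ℕ∞) u) :
    mderiv α (mderiv β u) = mderiv (α + β) u := by
  rw [mderiv_eq_Ddir, mderiv_eq_Ddir, mderiv_eq_Ddir, ← Ddir_append]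
  apply Ddir_perm _ hu
  rw [List.perm_iff_count]
  intro j
  rw [List.count_append, dirs_count, dirs_count, dirs_count]; rfl

lemma Ddir_clm (T : E →L[ℝ] E') (L : List (Fin n)) {u : Dom n → E}
    (hu : ContDiff ℝ (⊤ : ℕ∞) u) : Ddir L (fun x => T (u x)) = fun x => T (Ddir L u x) := by
  induction L with
  | nil => rfl
  | cons j L ih =>
    rw [Ddir_cons, Ddir_cons, ih]
    funext x
    unfold pderivDir
    have := (T.hasFDerivAt.comp x ((sm_diff (Ddir_smooth L hu)) x).hasFDerivAt).fderiv
    simp only [Function.comp_def] at this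
    rw [this]; rfl

lemma Ddir_add (L : List (Fin n)) {u u' : Dom n → E} (hu : ContDiff ℝ (⊤ : ℕ∞) u)
    (hu' : ContDiff ℝ (⊤ : ℕ∞) u') : Ddir L (fun x => u x + u' x) =
      fun x => Ddir L u x + Ddir L u' x := by
  induction L with
  | nil => rfl
  | cons j L ih =>
    rw [Ddir_cons, Ddir_cons, Ddir_cons, ih]
    funext x
    unfold pderivDir
    rw [fderiv_fun_add ((sm_diff (Ddir_smooth L hu)) x) ((sm_diff (Ddir_smooth L hu')) x)]
    rfl

lemma Ddir_smul (L : List (Fin n)) (c : ℝ) {u : Dom n → E} (hu : ContDiff ℝ (⊤ : ℕ∞) u) :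
    Ddir L (fun x => c • u x) = fun x => c • Ddir L u x :=
  Ddir_clm (c • ContinuousLinearMap.id ℝ E) L hu

lemma Ddir_zero (L : List (Fin n)) : Ddir L (fun _ : Dom n => (0 : E)) = fun _ => 0 := by
  induction L with
  | nil => rfl
  | cons j L ih => rw [Ddir_cons, ih]; funext x; simp [pderivDir]

lemma smooth_comp_aff (N : ℝ) (c : Dom n) {u : Dom n → E} (hu : ContDiff ℝ (⊤ : ℕ∞) u) :
    ContDiff ℝ (⊤ : ℕ∞) (fun x => u (N • x - c)) := by
  apply hu.comp; fun_prop

lemma Ddir_scale (N : ℝ) (c : Dom n) (L : List (Fin n)) {u : Dom n → E}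
    (hu : ContDiff ℝ (⊤ : ℕ∞) u) :
    Ddir L (fun x => u (N • x - c)) = fun x => N ^ L.length • Ddir L u (N • x - c) := by
  induction L with
  | nil => simp [Ddir_nil]
  | cons j L ih =>
    rw [Ddir_cons, Ddir_cons, ih]
    funext x
    unfold pderivDir
    have h1 : HasFDerivAt (fun x : Dom n => N • x - c) (N • ContinuousLinearMap.id ℝ (Dom n)) x :=
      ((hasFDerivAt_id x).const_smul N).sub_const c
    have h2 := (((sm_diff (Ddir_smooth L hu)) (N • x - c)).hasFDerivAt.comp x h1).const_smul
      (N ^ L.length)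
    have h3 : fderiv ℝ (fun x => N ^ L.length • Ddir L u (N • x - c)) x = _ := h2.fderiv
    rw [h3]
    simp [pow_succ, smul_smul]

lemma Ddir_periodic (L : List (Fin n)) {u : Dom n → E} (hp : ZPeriodic u) :
    ZPeriodic (Ddir L u) := by
  induction L with
  | nil => exact hp
  | cons j L ih =>
    intro x m
    rw [Ddir_cons]
    unfold pderivDir
    have h : (fun y => Ddir L u (y + fun i => (m i : ℝ))) = Ddir L u := by
      funext y; exact ih y m
    rw [← fderiv_comp_add_right, h]

lemma Ddir_eq_iterated (L : List (Fin n)) {u : Dom n → E} (hu : ContDiff ℝ (⊤ : ℕ∞) u)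
    (x : Dom n) : Ddir L u x = iteratedFDeriv ℝ L.length u x
      (fun i => Pi.single (L.get i) 1) := by
  induction L generalizing x with
  | nil => simp [Ddir_nil]
  | cons j L ih =>
    rw [Ddir_cons]
    have hf : Ddir L u = fun y => iteratedFDeriv ℝ L.length u y
      (fun i => Pi.single (L.get i) 1) := funext ih
    unfold pderivDir
    rw [hf]
    have hd : DifferentiableAt ℝ (iteratedFDeriv ℝ L.length u) x :=
      (hu.differentiable_iteratedFDeriv (m := L.length) (by exact_mod_cast ENat.natCast_lt_top _)) x
    rw [fderiv_continuousMultilinear_apply_const_apply hd]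
    exact (iteratedFDeriv_succ_apply_left (n := L.length)
      (fun i : Fin (L.length + 1) => (Pi.single ((j :: L).get i) 1 : Dom n))).symm

lemma Ddir_norm_le (L : List (Fin n)) {u : Dom n → E} (hu : ContDiff ℝ (⊤ : ℕ∞) u)
    (x : Dom n) : ‖Ddir L u x‖ ≤ ‖iteratedFDeriv ℝ L.length u x‖ := by
  rw [Ddir_eq_iterated L hu x]
  refine (ContinuousMultilinearMap.le_opNorm _ _).trans ?_
  have : ∏ i, ‖(Pi.single (L.get i) 1 : Dom n)‖ = 1 := by
    apply Finset.prod_eq_one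
    intro i _
    rw [Pi.norm_single, norm_one]
  rw [this, mul_one]

end DerivMachinery

section OpMachinery
variable {n : ℕ} {V W : Type*} [NormedAddCommGroup V] [NormedSpace ℝ V]
  [NormedAddCommGroup W] [NormedSpace ℝ W] (A : (Fin n → ℕ) → (V →L[ℝ] W)) (k : ℕ)

lemma opApply_smooth {u : Dom n → V} (hu : ContDiff ℝ (⊤ : ℕ∞) u) :
    ContDiff ℝ (⊤ : ℕ∞) (opApply A k u) := by
  unfold opApply
  apply ContDiff.sum
  intro α _
  rw [mderiv_eq_Ddir]
  exact (A α).contDiff.comp (Ddir_smooth _ hu)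

lemma opApply_congr {u u' : Dom n → V} {x : Dom n} (h : u =ᶠ[𝓝 x] u') :
    opApply A k u x = opApply A k u' x := by
  unfold opApply
  refine Finset.sum_congr rfl fun α _ => ?_
  rw [mderiv_eq_Ddir, mderiv_eq_Ddir, (Ddir_congr h).eq_of_nhds]

lemma opApply_add {u u' : Dom n → V} (hu : ContDiff ℝ (⊤ : ℕ∞) u)
    (hu' : ContDiff ℝ (⊤ : ℕ∞) u') (x : Dom n) :
    opApply A k (fun x => u x + u' x) x = opApply A k u x + opApply A k u' x := by
  unfold opApply
  rw [← Finset.sum_add_distrib]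
  refine Finset.sum_congr rfl fun α _ => ?_
  rw [mderiv_eq_Ddir, mderiv_eq_Ddir, mderiv_eq_Ddir, Ddir_add _ hu hu', map_add]

lemma opApply_smul (c : ℝ) {u : Dom n → V} (hu : ContDiff ℝ (⊤ : ℕ∞) u) (x : Dom n) :
    opApply A k (fun x => c • u x) x = c • opApply A k u x := by
  unfold opApply
  rw [Finset.smul_sum]
  refine Finset.sum_congr rfl fun α _ => ?_
  rw [mderiv_eq_Ddir, mderiv_eq_Ddir, Ddir_smul _ _ hu, map_smul]

lemma opApply_zero (x : Dom n) : opApply A k (fun _ => (0 : V)) x = 0 := by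
  unfold opApply
  refine Finset.sum_eq_zero fun α _ => ?_
  rw [mderiv_eq_Ddir, Ddir_zero, map_zero]

lemma opApply_scale (N : ℝ) (c : Dom n) {u : Dom n → V} (hu : ContDiff ℝ (⊤ : ℕ∞) u)
    (x : Dom n) : opApply A k (fun x => u (N • x - c)) x = N ^ k • opApply A k u (N • x - c) := by
  unfold opApply
  rw [Finset.smul_sum]
  refine Finset.sum_congr rfl fun α hα => ?_
  rw [mderiv_eq_Ddir, mderiv_eq_Ddir, Ddir_scale _ _ _ hu, map_smul, dirs_length,
    mem_degSet.1 hα]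

lemma opApply_periodic {u : Dom n → V} (hp : ZPeriodic u) : ZPeriodic (opApply A k u) := by
  intro x m
  unfold opApply
  refine Finset.sum_congr rfl fun α hα => ?_
  rw [mderiv_eq_Ddir, Ddir_periodic _ hp]

lemma opApply_norm_le : ∃ C : ℝ, 0 ≤ C ∧ ∀ u : Dom n → V, ContDiff ℝ (⊤ : ℕ∞) u →
    ∀ x, ‖opApply A k u x‖ ≤ C * ‖iteratedFDeriv ℝ k u x‖ := by
  refine ⟨∑ α ∈ degSet n k, ‖A α‖, Finset.sum_nonneg fun _ _ => norm_nonneg _, ?_⟩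
  intro u hu x
  unfold opApply
  rw [Finset.sum_mul]
  refine norm_sum_le_of_le _ fun α hα => ?_
  refine ((A α).le_opNorm _).trans ?_
  gcongr
  rw [mderiv_eq_Ddir]
  have := Ddir_norm_le (dirs α) hu x
  rwa [dirs_length, mem_degSet.1 hα] at this

end OpMachinery

end Part1

section Part2

/-! ## Cube geometry and periodic integrals -/
section CubeGeom
open scoped Pointwise
set_option linter.unusedSectionVars false
variable {n : ℕ} {E : Type*} [NormedAddCommGroup E] [NormedSpace ℝ E]

lemma unitCube_eq_ball : unitCube n = Metric.ball (0 : Dom n) (1/2) := by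
  unfold unitCube
  rw [ball_pi _ (by norm_num)]
  simp [Real.ball_eq_Ioo]

lemma closedUnitCube_eq : closedUnitCube n = Metric.closedBall (0 : Dom n) (1/2) := by
  unfold closedUnitCube
  rw [closedBall_pi _ (by norm_num)]
  simp [Real.closedBall_eq_Icc]

lemma cube_meas : MeasurableSet (unitCube n) := by
  rw [unitCube_eq_ball]; exact measurableSet_ball

lemma cube_open : IsOpen (unitCube n) := by
  rw [unitCube_eq_ball]; exact Metric.isOpen_ball

lemma cube_vol : volume (unitCube n) = 1 := by
  rw [unitCube_eq_ball, Real.volume_pi_ball _ (by norm_num)]; simp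

instance cube_prob : IsProbabilityMeasure (volume.restrict (unitCube n)) :=
  ⟨by simp [cube_vol]⟩

lemma cube_int {f : Dom n → E} (hf : Continuous f) : IntegrableOn f (unitCube n) := by
  apply (hf.continuousOn.integrableOn_compact (isCompact_closedBall (0 : Dom n) (1/2))).mono_set
  rw [unitCube_eq_ball]; exact Metric.ball_subset_closedBall

lemma cube_ae_closed : unitCube n =ᵐ[volume] closedUnitCube n :=
  Measure.univ_pi_Ioo_ae_eq_Icc.trans (by unfold closedUnitCube; rw [Set.pi_univ_Icc]; exact ae_eq_refl _)

lemma rnd_mem (x : Dom n) : (x - fun i => ((round (x i) : ℤ) : ℝ)) ∈ closedUnitCube n := by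
  intro i _
  have := abs_sub_round (x i)
  rw [abs_le] at this
  exact ⟨by simpa using this.1, by simpa using this.2⟩

lemma ZPeriodic.sub {g : Dom n → E} (hp : ZPeriodic g) (x : Dom n) (m : Fin n → ℤ) :
    g (x - fun i => (m i : ℝ)) = g x := by
  have := hp (x - fun i => (m i : ℝ)) m
  rw [sub_add_cancel] at this
  exact this.symm

lemma periodic_bdd {g : Dom n → E} (hg : Continuous g) (hp : ZPeriodic g) :
    ∃ M : ℝ, 0 ≤ M ∧ ∀ x, ‖g x‖ ≤ M := by
  have hc : IsCompact (closedUnitCube n) := by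
    rw [closedUnitCube_eq]; exact isCompact_closedBall _ _
  obtain ⟨M, hM⟩ := hc.exists_bound_of_continuousOn hg.continuousOn
  have key : ∀ x, ‖g x‖ ≤ M := fun x => by
    rw [← hp.sub x (fun i => round (x i))]; exact hM _ (rnd_mem x)
  exact ⟨M, (norm_nonneg _).trans (key 0), key⟩

lemma periodic_shift {g : Dom n → E} (hp : ZPeriodic g) (a : Dom n) :
    ∫ y in unitCube n, g (a + y) = ∫ y in unitCube n, g y := by
  classical
  set b := Pi.basisFun ℝ (Fin n)
  set D := ZSpan.fundamentalDomain b
  have hD : IsAddFundamentalDomain (Submodule.span ℤ (Set.range b)).toAddSubgroup D volume :=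
    ZSpan.isAddFundamentalDomain' b volume
  haveI : Countable (Submodule.span ℤ (Set.range b)).toAddSubgroup :=
    inferInstanceAs (Countable (Submodule.span ℤ (Set.range b)))
  have hinv : ∀ (m : (Submodule.span ℤ (Set.range b)).toAddSubgroup) (x : Dom n), g (m +ᵥ x) = g x := by
    intro m x
    have hm := (b.mem_span_iff_repr_mem ℤ (m : Dom n)).1 m.2
    choose c hc using hm
    have hmc : (m : Dom n) = fun i => (c i : ℝ) := by
      funext i
      have := hc i
      simpa [b] using this.symm
    have : m +ᵥ x = x + fun i => (c i : ℝ) := by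
      rw [← hmc, add_comm]; rfl
    rw [this, hp]
  have h1 : ∀ a : Dom n, ∫ y in D, g (a + y) = ∫ y in D, g y := by
    intro a
    have h2 := (hD.vadd_of_comm a).setIntegral_eq hD hinv
    rw [← h2]
    have := (measurePreserving_add_left volume a).setIntegral_preimage_emb
      (MeasurableEquiv.addLeft a).measurableEmbedding g (a +ᵥ D)
    rw [← this]
    congr 2
    ext y
    simp [Set.mem_vadd_set_iff_neg_vadd_mem]
  have h3 : ∀ h : Dom n → E, ∫ y in unitCube n, h y = ∫ y in D, h ((fun _ => -(1/2)) + y) := by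
    intro h
    have hae : unitCube n =ᵐ[volume] (Set.univ.pi fun _ => Set.Ico (-(1/2) : ℝ) (1/2)) :=
      Measure.univ_pi_Ioo_ae_eq_Icc.trans Measure.univ_pi_Ico_ae_eq_Icc.symm
    rw [setIntegral_congr_set hae]
    have := (measurePreserving_add_left volume (fun _ : Fin n => -(1/2 : ℝ))).setIntegral_preimage_emb
      (MeasurableEquiv.addLeft (fun _ : Fin n => -(1/2 : ℝ))).measurableEmbedding h
      (Set.univ.pi fun _ => Set.Ico (-(1/2) : ℝ) (1/2))
    rw [← this]
    congr 2
    ext y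
    simp only [Set.mem_preimage, Set.mem_pi, Set.mem_univ, true_implies, Pi.add_apply,
      Set.mem_Ico, D, ZSpan.mem_fundamentalDomain, b, Pi.basisFun_repr]
    refine forall_congr' fun i => ?_
    constructor
    · rintro ⟨h1, h2⟩; constructor <;> linarith
    · rintro ⟨h1, h2⟩; constructor <;> linarith
  rw [h3, h3]
  simp_rw [← add_assoc]
  rw [h1, h1]

lemma periodic_int_deriv {g : Dom n → E} (hg : ContDiff ℝ (⊤ : ℕ∞) g) (hp : ZPeriodic g)
    (j : Fin n) : ∫ y in unitCube n, pderivDir j g y = 0 := by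
  obtain ⟨M, hM0, hM⟩ := periodic_bdd (pderivDir_smooth j hg).continuous (Ddir_periodic [j] hp)
  have h := hasDerivAt_integral_of_dominated_loc_of_deriv_le (μ := volume.restrict (unitCube n))
    (F := fun (s : ℝ) (y : Dom n) => g (s • (Pi.single j 1) + y))
    (F' := fun s y => pderivDir j g (s • (Pi.single j 1) + y)) (x₀ := (0 : ℝ))
    (s := Set.univ) (bound := fun _ => M) univ_mem
    (Eventually.of_forall fun s => (hg.continuous.comp (by fun_prop)).aestronglyMeasurable)
    (cube_int (hg.continuous.comp (by fun_prop)))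
    ((pderivDir_smooth j hg).continuous.comp (by fun_prop)).aestronglyMeasurable
    (Eventually.of_forall fun y s _ => hM _)
    (integrable_const _)
    (Eventually.of_forall fun y s _ => by
      have h1 : HasDerivAt (fun s : ℝ => s • (Pi.single j 1 : Dom n) + y) (Pi.single j 1) s := by
        simpa using ((hasDerivAt_id s).smul_const (Pi.single j 1 : Dom n)).add_const y
      exact ((sm_diff hg) _).hasFDerivAt.comp_hasDerivAt s h1)
  have h2 := h.2
  have hc : (fun s : ℝ => ∫ y in unitCube n, g (s • (Pi.single j 1) + y)) =
      fun _ => ∫ y in unitCube n, g y := by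
    funext s; exact periodic_shift hp _
  rw [hc] at h2
  have := h2.unique (hasDerivAt_const _ _)
  simpa using this

/-! ### Tiling -/

def ctr (N : ℕ) (i : Fin n → Fin N) : Dom n := fun a => ((i a : ℕ) : ℝ) - ((N : ℝ) - 1) / 2

lemma mem_cube_iff {x : Dom n} : x ∈ unitCube n ↔ ∀ a, |x a| < 1/2 := by
  unfold unitCube
  simp only [Set.mem_pi, Set.mem_univ, true_implies, Set.mem_Ioo, abs_lt]

lemma ctr_sep {N : ℕ} {i i' : Fin n → Fin N} {x : Dom n} (h : x - ctr N i ∈ unitCube n)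
    (h' : x - ctr N i' ∈ closedUnitCube n) : i = i' := by
  rw [mem_cube_iff] at h
  funext a
  have h1 := h a
  have h2 := h' a (Set.mem_univ a)
  simp only [ctr, Pi.sub_apply, abs_lt, Set.mem_Icc] at h1 h2
  have h3 : ((i a : ℕ) : ℝ) < (i' a : ℕ) + 1 := by linarith [h1.1, h2.2]
  have h4 : ((i' a : ℕ) : ℝ) < (i a : ℕ) + 1 := by linarith [h1.2, h2.1]
  have h5 : (i a : ℕ) < (i' a : ℕ) + 1 := by exact_mod_cast h3
  have h6 : (i' a : ℕ) < (i a : ℕ) + 1 := by exact_mod_cast h4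
  ext; omega

lemma ctr_sub {N : ℕ} (hN : 0 < N) {i : Fin n → Fin N} {x : Dom n}
    (h : x - ctr N i ∈ unitCube n) : (N : ℝ)⁻¹ • x ∈ unitCube n := by
  rw [mem_cube_iff] at h ⊢
  intro a
  have h1 := h a
  have hN' : (0 : ℝ) < N := by exact_mod_cast hN
  simp only [ctr, Pi.sub_apply, abs_lt, Pi.smul_apply, smul_eq_mul] at h1 ⊢
  have h2 : ((i a : ℕ) : ℝ) + 1 ≤ N := by exact_mod_cast (i a).2
  have h3 : (0 : ℝ) ≤ ((i a : ℕ) : ℝ) := by positivity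
  rw [inv_mul_eq_div, div_lt_iff₀ hN', lt_div_iff₀ hN']
  constructor <;> linarith [h1.1, h1.2]

lemma tile_integral {N : ℕ} (hN : 0 < N) {h : Dom n → ℝ} (hh : Continuous h) :
    ∫ x in unitCube n, h x =
      ∑ i : Fin n → Fin N, ((N : ℝ) ^ n)⁻¹ * ∫ y in unitCube n, h ((N : ℝ)⁻¹ • (ctr N i + y)) := by
  have hN' : (0 : ℝ) < N := by exact_mod_cast hN
  set f : Dom n → ℝ := fun x => h ((N : ℝ)⁻¹ • x) with hf
  have hfc : Continuous f := hh.comp (by fun_prop)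
  have e1 : ∫ x in unitCube n, h x = ∫ x in unitCube n, f ((N : ℝ) • x) := by
    simp [hf, smul_smul, inv_mul_cancel₀ hN'.ne']
  rw [e1, Measure.setIntegral_comp_smul_of_pos volume f _ hN']
  have hcb : (N : ℝ) • unitCube n = Metric.ball (0 : Dom n) (N / 2) := by
    rw [unitCube_eq_ball, smul_ball hN'.ne']
    simp; congr 1
  set T : (Fin n → Fin N) → Set (Dom n) := fun i => Metric.ball (ctr N i) (1/2) with hT
  have hTm : ∀ i x, x ∈ T i ↔ x - ctr N i ∈ unitCube n := by
    intro i x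
    rw [unitCube_eq_ball, hT]; simp [dist_eq_norm]
  have hdisj : Pairwise (Function.onFun Disjoint T) := by
    intro i i' hii
    rw [Function.onFun, Set.disjoint_left]
    intro x hx hx'
    apply hii
    rw [hTm] at hx hx'
    refine ctr_sep hx ?_
    rw [closedUnitCube_eq]; rw [unitCube_eq_ball] at hx'
    exact Metric.ball_subset_closedBall hx'
  have hsub : (⋃ i, T i) ⊆ (N : ℝ) • unitCube n := by
    intro x hx
    obtain ⟨i, hi⟩ := Set.mem_iUnion.1 hx
    rw [hTm] at hi
    rw [Set.mem_smul_set_iff_inv_smul_mem₀ hN'.ne']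
    exact ctr_sub hN hi
  have hvol : volume (⋃ i, T i) = volume ((N : ℝ) • unitCube n) := by
    rw [measure_iUnion hdisj (fun i => measurableSet_ball), hcb,
      Real.volume_pi_ball _ (by positivity)]
    simp only [hT, tsum_fintype]
    simp_rw [fun i => Real.volume_pi_ball (ctr N i) (show (0:ℝ) < 1/2 by norm_num)]
    simp [mul_div_cancel₀]
  have hae : (⋃ i, T i) =ᵐ[volume] (N : ℝ) • unitCube n := by
    refine ae_eq_of_subset_of_measure_ge hsub hvol.ge
      (MeasurableSet.iUnion fun i => measurableSet_ball).nullMeasurableSet ?_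
    rw [hcb]; exact measure_ball_lt_top.ne
  rw [← setIntegral_congr_set hae]
  rw [integral_iUnion_fintype (fun i => measurableSet_ball) hdisj (fun i =>
    (hfc.continuousOn.integrableOn_compact (isCompact_closedBall (ctr N i) (1/2))).mono_set
      Metric.ball_subset_closedBall)]
  rw [smul_eq_mul, Finset.mul_sum]
  refine Finset.sum_congr rfl fun i _ => ?_
  rw [Module.finrank_fin_fun]
  congr 1
  have := (measurePreserving_add_left volume (ctr N i)).setIntegral_preimage_emb
      (MeasurableEquiv.addLeft (ctr N i)).measurableEmbedding f (T i)
  rw [← this]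
  congr 2
  ext y
  rw [Set.mem_preimage, hTm]; simp

end CubeGeom

end Part2

section Part3

/-! ## Tiled functions -/
section Tiled
variable {n : ℕ} {U V : Type*} [NormedAddCommGroup U] [NormedSpace ℝ U]
  [NormedAddCommGroup V] [NormedSpace ℝ V]

def tileFn (N l : ℕ) (u : (Fin n → Fin N) → Dom n → U) : Dom n → U :=
  fun x => ∑ i, ((N : ℝ) ^ l)⁻¹ • u i ((N : ℝ) • x - ctr N i)

lemma ccSmooth_of {u : Dom n → U} (hu : ContDiff ℝ (⊤ : ℕ∞) u) {K : Set (Dom n)}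
    (hK : IsClosed K) (hs : Function.support u ⊆ K) (hKc : K ⊆ unitCube n) :
    CcSmooth (unitCube n) u := by
  have h1 : tsupport u ⊆ K := closure_minimal hs hK
  refine ⟨hu, ?_, h1.trans hKc⟩
  refine Metric.isCompact_of_isClosed_isBounded (isClosed_tsupport u) ?_
  refine (Metric.isBounded_ball (x := (0:Dom n)) (r := 1/2)).subset ?_
  rw [← unitCube_eq_ball]
  exact h1.trans hKc

lemma ccSmooth_zero_of_notMem {u : Dom n → U} (hu : CcSmooth (unitCube n) u) {x : Dom n}
    (hx : x ∉ unitCube n) : u x = 0 := by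
  by_contra h
  exact hx (hu.2.2 (subset_tsupport _ h))

lemma tileFn_smooth (N l : ℕ) {u : (Fin n → Fin N) → Dom n → U}
    (hu : ∀ i, ContDiff ℝ (⊤ : ℕ∞) (u i)) : ContDiff ℝ (⊤ : ℕ∞) (tileFn N l u) := by
  unfold tileFn
  apply ContDiff.sum
  intro i _
  exact (smooth_comp_aff _ _ (hu i)).const_smul _

lemma tileFn_cc {N : ℕ} (hN : 0 < N) (l : ℕ) {u : (Fin n → Fin N) → Dom n → U}
    (hu : ∀ i, CcSmooth (unitCube n) (u i)) : CcSmooth (unitCube n) (tileFn N l u) := by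
  have hN' : (0 : ℝ) < N := by exact_mod_cast hN
  refine ccSmooth_of (tileFn_smooth N l fun i => (hu i).1)
    (K := ⋃ i, (fun x : Dom n => (N : ℝ) • x - ctr N i) ⁻¹' tsupport (u i)) ?_ ?_ ?_
  · exact isClosed_iUnion_of_finite fun i => (isClosed_tsupport _).preimage (by fun_prop)
  · intro x hx
    by_contra h
    apply hx
    unfold tileFn
    refine Finset.sum_eq_zero fun i _ => ?_
    have : (N : ℝ) • x - ctr N i ∉ tsupport (u i) := fun h' =>
      h (Set.mem_iUnion.2 ⟨i, h'⟩)
    rw [image_eq_zero_of_notMem_tsupport this, smul_zero]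
  · intro x hx
    obtain ⟨i, hi⟩ := Set.mem_iUnion.1 hx
    have := ctr_sub hN ((hu i).2.2 hi)
    rwa [smul_smul, inv_mul_cancel₀ hN'.ne', one_smul] at this

lemma tileFn_op {N : ℕ} (hN : 0 < N) (B : (Fin n → ℕ) → (U →L[ℝ] V)) (l : ℕ)
    {u : (Fin n → Fin N) → Dom n → U}
    (hu : ∀ i, CcSmooth (unitCube n) (u i)) (i : Fin n → Fin N) {y : Dom n}
    (hy : y ∈ unitCube n) :
    opApply B l (tileFn N l u) ((N : ℝ)⁻¹ • (ctr N i + y)) = opApply B l (u i) y := by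
  have hN' : (0 : ℝ) < N := by exact_mod_cast hN
  set x := (N : ℝ)⁻¹ • (ctr N i + y) with hx
  have hxy : (N : ℝ) • x - ctr N i = y := by
    rw [hx, smul_smul, mul_inv_cancel₀ hN'.ne', one_smul, add_sub_cancel_left]
  have hnb : ∀ᶠ x' in 𝓝 x, (N : ℝ) • x' - ctr N i ∈ unitCube n := by
    have hc : ContinuousAt (fun x' : Dom n => (N : ℝ) • x' - ctr N i) x := by fun_prop
    apply hc
    show unitCube n ∈ 𝓝 ((N:ℝ) • x - ctr N i)
    rw [hxy]
    exact cube_open.mem_nhds hy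
  have heq : tileFn N l u =ᶠ[𝓝 x] fun x' => ((N : ℝ) ^ l)⁻¹ • u i ((N : ℝ) • x' - ctr N i) := by
    filter_upwards [hnb] with x' hx'
    unfold tileFn
    refine Finset.sum_eq_single_of_mem i (Finset.mem_univ i) fun i' _ hi' => ?_
    have : (N : ℝ) • x' - ctr N i' ∉ unitCube n := by
      intro h
      apply hi'
      refine (ctr_sep hx' ?_).symm
      rw [closedUnitCube_eq]; rw [unitCube_eq_ball] at h
      exact Metric.ball_subset_closedBall h
    rw [ccSmooth_zero_of_notMem (hu i') this, smul_zero]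
  rw [opApply_congr B l heq, opApply_smul B l _ (smooth_comp_aff _ _ (hu i).1),
    opApply_scale B l _ _ (hu i).1, hxy, smul_smul, inv_mul_cancel₀ (by positivity), one_smul]

lemma tile_main {N : ℕ} (hN : 0 < N) (B : (Fin n → ℕ) → (U →L[ℝ] V)) (l : ℕ)
    {u : (Fin n → Fin N) → Dom n → U}
    (hu : ∀ i, CcSmooth (unitCube n) (u i)) {H : Dom n → V → ℝ}
    (hH : Continuous (Function.uncurry H)) :
    ∫ x in unitCube n, H x (opApply B l (tileFn N l u) x) =
      ∑ i, ((N : ℝ) ^ n)⁻¹ * ∫ y in unitCube n,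
        H ((N : ℝ)⁻¹ • (ctr N i + y)) (opApply B l (u i) y) := by
  rw [tile_integral hN (h := fun x => H x (opApply B l (tileFn N l u) x))]
  · refine Finset.sum_congr rfl fun i _ => ?_
    congr 1
    refine setIntegral_congr_fun cube_meas fun y hy => ?_
    beta_reduce
    rw [tileFn_op hN B l hu i hy]
  · exact hH.comp (continuous_id.prodMk
      (opApply_smooth B l (tileFn_smooth N l fun i => (hu i).1)).continuous)

lemma iter_scale (j : ℕ) (N : ℝ) (c : Dom n) {u : Dom n → U} (hu : ContDiff ℝ (⊤ : ℕ∞) u)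
    (x : Dom n) :
    iteratedFDeriv ℝ j (fun x => u (N • x - c)) x = N ^ j • iteratedFDeriv ℝ j u (N • x - c) := by
  have h1 : ContDiff ℝ j (fun y => u (y - c)) :=
    (hu.of_le (by exact_mod_cast le_top)).comp (by fun_prop)
  have h2 := congrFun (iteratedFDeriv_comp_const_smul N h1) x
  simp only [iteratedFDeriv_comp_sub] at h2
  exact h2

lemma cc_iter_int (j : ℕ) {u : Dom n → U} (hu : CcSmooth (unitCube n) u) :
    Integrable (fun x => ‖iteratedFDeriv ℝ j u x‖) := by
  have hc : Continuous (iteratedFDeriv ℝ j u) :=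
    hu.1.continuous_iteratedFDeriv (by exact_mod_cast le_top)
  exact (hc.integrable_of_hasCompactSupport (hu.2.1.iteratedFDeriv j)).norm

lemma tileFn_sob {N : ℕ} (hN : 0 < N) (l : ℕ) {u : Dom n → U}
    (hu : CcSmooth (unitCube n) u) :
    sobNorm l (tileFn N l fun _ => u) ≤ (N : ℝ)⁻¹ * sobNorm l u := by
  have hN' : (0 : ℝ) < N := by exact_mod_cast hN
  unfold sobNorm
  rw [Finset.mul_sum]
  refine Finset.sum_le_sum fun j hj => ?_
  have hjl : j < l := Finset.mem_range.1 hj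
  have hscale : ∀ i : Fin n → Fin N, ∫ x : Dom n, ‖iteratedFDeriv ℝ j u ((N : ℝ) • x - ctr N i)‖ =
      ((N : ℝ) ^ n)⁻¹ * ∫ x : Dom n, ‖iteratedFDeriv ℝ j u x‖ := by
    intro i
    rw [Measure.integral_comp_smul_of_nonneg volume
      (fun x => ‖iteratedFDeriv ℝ j u (x - ctr N i)‖) (N : ℝ) (hR := hN'.le),
      integral_sub_right_eq_self (fun x => ‖iteratedFDeriv ℝ j u x‖)]
    simp
  have hint : ∀ i : Fin n → Fin N, Integrable
      (fun x : Dom n => ‖iteratedFDeriv ℝ j u ((N : ℝ) • x - ctr N i)‖) := by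
    intro i
    exact ((cc_iter_int j hu).comp_sub_right (ctr N i)).comp_smul hN'.ne'
  calc ∫ x, ‖iteratedFDeriv ℝ j (tileFn N l fun _ => u) x‖
      ≤ ∫ x, ∑ i : Fin n → Fin N, (((N : ℝ) ^ l)⁻¹ * (N : ℝ) ^ j) *
          ‖iteratedFDeriv ℝ j u ((N : ℝ) • x - ctr N i)‖ := by
        refine integral_mono (cc_iter_int j (tileFn_cc hN l fun _ => hu))
          (integrable_finsetSum _ fun i _ => (hint i).const_mul _) fun x => ?_
        have hsm : ∀ i : Fin n → Fin N, ContDiff ℝ j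
            (fun x : Dom n => ((N : ℝ) ^ l)⁻¹ • u ((N : ℝ) • x - ctr N i)) := fun i =>
          ((smooth_comp_aff (N : ℝ) (ctr N i) hu.1).of_le (by exact_mod_cast le_top)).const_smul _
        unfold tileFn
        rw [iteratedFDeriv_fun_sum_apply (fun i _ => (hsm i).contDiffAt)]
        refine norm_sum_le_of_le _ fun i _ => ?_
        rw [iteratedFDeriv_const_smul_apply' (((smooth_comp_aff (N : ℝ) (ctr N i) hu.1).of_le
          (by exact_mod_cast le_top)).contDiffAt), iter_scale _ _ _ hu.1, norm_smul, norm_smul,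
          mul_assoc]
        simp
    _ = (((N : ℝ) ^ l)⁻¹ * (N : ℝ) ^ j) * ∫ x, ‖iteratedFDeriv ℝ j u x‖ := by
        rw [integral_finsetSum _ fun i _ => (hint i).const_mul _]
        simp_rw [integral_const_mul, hscale]
        simp
        field_simp
    _ ≤ (N : ℝ)⁻¹ * ∫ x, ‖iteratedFDeriv ℝ j u x‖ := by
        gcongr
        have h1 : (1 : ℝ) ≤ N := by exact_mod_cast hN
        rw [inv_mul_le_iff₀ (by positivity), ← div_eq_mul_inv, le_div_iff₀ hN', ← pow_succ]
        exact pow_le_pow_right₀ h1 hjl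

end Tiled

end Part3

section Part4

/-! ## The envelope -/
section Envelope
variable {n : ℕ} {U V : Type*} [NormedAddCommGroup U] [NormedSpace ℝ U]
  [NormedAddCommGroup V] [NormedSpace ℝ V]

def Qenv (B : (Fin n → ℕ) → (U →L[ℝ] V)) (l : ℕ) (Φ : V → ℝ) (y : V) : ℝ :=
  ⨅ u : {u : Dom n → U // CcSmooth (unitCube n) u}, ∫ x in unitCube n, Φ (y + opApply B l u.1 x)

lemma cc_add {u u' : Dom n → U} (hu : CcSmooth (unitCube n) u) (hu' : CcSmooth (unitCube n) u') :
    CcSmooth (unitCube n) (fun x => u x + u' x) := by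
  refine ccSmooth_of (hu.1.add hu'.1) ((isClosed_tsupport u).union (isClosed_tsupport u')) ?_
    (Set.union_subset hu.2.2 hu'.2.2)
  intro x hx
  by_contra h
  apply hx
  rw [Set.mem_union, not_or] at h
  show u x + u' x = 0
  rw [image_eq_zero_of_notMem_tsupport h.1, image_eq_zero_of_notMem_tsupport h.2, add_zero]

lemma cc_smul (c : ℝ) {u : Dom n → U} (hu : CcSmooth (unitCube n) u) :
    CcSmooth (unitCube n) (fun x => c • u x) := by
  refine ccSmooth_of (contDiff_const.smul hu.1) (isClosed_tsupport u) ?_ hu.2.2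
  intro x hx
  by_contra h
  apply hx
  show c • u x = 0
  rw [image_eq_zero_of_notMem_tsupport h, smul_zero]

lemma cc_zero : CcSmooth (unitCube n) (fun _ : Dom n => (0 : U)) :=
  ccSmooth_of contDiff_const isClosed_empty (by intro x hx; exact absurd rfl hx)
    (Set.empty_subset _)

instance : Nonempty {u : Dom n → U // CcSmooth (unitCube n) u} := ⟨⟨_, cc_zero⟩⟩

variable {B : (Fin n → ℕ) → (U →L[ℝ] V)} {l : ℕ} {Φ : V → ℝ} {K : NNReal}

lemma cc_op_cont {u : Dom n → U} (hu : CcSmooth (unitCube n) u) : Continuous (opApply B l u) :=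
  (opApply_smooth B l hu.1).continuous

lemma int_cont_sub {Φ : V → ℝ} (hΦ : Continuous Φ) (y : V) {g : Dom n → V} (hg : Continuous g) :
    Integrable (fun x => Φ (y + g x)) (volume.restrict (unitCube n)) :=
  cube_int (hΦ.comp (continuous_const.add hg))

lemma lip_le (hΦ : LipschitzWith K Φ) (a b : V) : Φ a ≤ Φ b + K * ‖a - b‖ := by
  have := hΦ.dist_le_mul a b
  rw [Real.dist_eq, dist_eq_norm] at this
  linarith [le_abs_self (Φ a - Φ b)]

/-- comparison of integrals of Lipschitz functions -/
lemma lip_int_le (hΦ : LipschitzWith K Φ) {g g' : Dom n → V} (hg : Continuous g)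
    (hg' : Continuous g') {e : ℝ} (he : ∀ x ∈ unitCube n, ‖g x - g' x‖ ≤ e) :
    ∫ x in unitCube n, Φ (g x) ≤ (∫ x in unitCube n, Φ (g' x)) + K * e := by
  have h1 : (∫ x in unitCube n, Φ (g' x)) + K * e = ∫ x in unitCube n, (Φ (g' x) + K * e) := by
    rw [integral_add (show Integrable (fun x => Φ (g' x)) _ from cube_int (hΦ.continuous.comp hg'))
      (integrable_const _)]
    simp
  rw [h1]
  refine setIntegral_mono_on (cube_int (hΦ.continuous.comp hg))
    (cube_int ((hΦ.continuous.comp hg').add continuous_const)) cube_meas fun x hx => ?_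
  have := lip_le hΦ (g x) (g' x)
  have := mul_le_mul_of_nonneg_left (he x hx) K.2
  simp only [NNReal.val_eq_coe] at this
  linarith

variable (B l) in
def QBdd (Φ : V → ℝ) : Prop := ∃ (z : V) (r : ℝ), ∀ u : Dom n → U, CcSmooth (unitCube n) u →
    r ≤ ∫ x in unitCube n, Φ (z + opApply B l u x)

lemma Q_bdd (hΦ : LipschitzWith K Φ) (hb : QBdd B l Φ) (y : V) :
    BddBelow (Set.range fun u : {u : Dom n → U // CcSmooth (unitCube n) u} =>
      ∫ x in unitCube n, Φ (y + opApply B l u.1 x)) := by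
  obtain ⟨z, r, h⟩ := hb
  refine ⟨r - K * ‖z - y‖, ?_⟩
  rintro _ ⟨u, rfl⟩
  have h1 := h u.1 u.2
  have h2 := lip_int_le hΦ (g := fun x => z + opApply B l u.1 x) (g' := fun x => y + opApply B l u.1 x)
    (continuous_const.add (cc_op_cont u.2)) (continuous_const.add (cc_op_cont u.2))
    (e := ‖z - y‖) (fun x _ => by simp)
  simp only
  linarith

lemma Q_le (hΦ : LipschitzWith K Φ) (hb : QBdd B l Φ) (y : V) {u : Dom n → U}
    (hu : CcSmooth (unitCube n) u) :
    Qenv B l Φ y ≤ ∫ x in unitCube n, Φ (y + opApply B l u x) :=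
  ciInf_le (Q_bdd hΦ hb y) ⟨u, hu⟩

lemma Q_near (y : V) {e : ℝ} (he : 0 < e) :
    ∃ u : Dom n → U, CcSmooth (unitCube n) u ∧
      ∫ x in unitCube n, Φ (y + opApply B l u x) < Qenv B l Φ y + e := by
  obtain ⟨u, hu⟩ := exists_lt_of_ciInf_lt (show Qenv B l Φ y < Qenv B l Φ y + e by linarith)
  exact ⟨u.1, u.2, hu⟩

lemma Q_ge (y : V) {r : ℝ} (h : ∀ u : Dom n → U, CcSmooth (unitCube n) u →
    r ≤ ∫ x in unitCube n, Φ (y + opApply B l u x)) : r ≤ Qenv B l Φ y :=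
  le_ciInf fun u => h u.1 u.2

lemma Q_le_self (hΦ : LipschitzWith K Φ) (hb : QBdd B l Φ) (y : V) : Qenv B l Φ y ≤ Φ y := by
  refine (Q_le hΦ hb y cc_zero).trans_eq ?_
  simp [opApply_zero]

lemma Q_lip (hΦ : LipschitzWith K Φ) (hb : QBdd B l Φ) : LipschitzWith K (Qenv B l Φ) := by
  refine LipschitzWith.of_le_add_mul K fun y y' => ?_
  rw [dist_eq_norm, ← sub_le_iff_le_add]
  refine Q_ge y' fun u hu => ?_
  have h2 := lip_int_le hΦ (g := fun x => y + opApply B l u x) (g' := fun x => y' + opApply B l u x)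
    (continuous_const.add (cc_op_cont hu)) (continuous_const.add (cc_op_cont hu))
    (e := ‖y - y'‖) (fun x _ => by simp)
  have := Q_le hΦ hb y hu
  linarith

lemma Q_A1 (hΦ : LipschitzWith K Φ) (hb : QBdd B l Φ) (y : V) {φ : Dom n → U}
    (hφ : CcSmooth (unitCube n) φ) :
    Qenv B l Φ y ≤ ∫ x in unitCube n, Qenv B l Φ (y + opApply B l φ x) := by
  set g := opApply B l φ with hg
  have hgc : Continuous g := cc_op_cont hφ
  have hQ := Q_lip hΦ hb
  suffices h : ∀ e : ℝ, 0 < e → Qenv B l Φ y ≤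
      (∫ x in unitCube n, Qenv B l Φ (y + g x)) + (2 * K + 1) * e by
    refine le_of_forall_pos_le_add fun e he => ?_
    have h1 := h (e / (2 * K + 1)) (by positivity)
    rwa [mul_div_cancel₀ _ (by positivity)] at h1
  intro e he
  have huc := (isCompact_closedBall (0 : Dom n) (1/2)).uniformContinuousOn_of_continuous
    hgc.continuousOn
  obtain ⟨δ, hδ, hd⟩ := Metric.uniformContinuousOn_iff.1 huc e he
  obtain ⟨N, hN⟩ := exists_nat_one_div_lt hδ
  set M := N + 1 with hM
  have hM0 : 0 < M := Nat.succ_pos _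
  have hMr : (0:ℝ) < M := by exact_mod_cast hM0
  have hclose : ∀ (i : Fin n → Fin M), ∀ y' ∈ unitCube n,
      ‖g ((M:ℝ)⁻¹ • (ctr M i + y')) - g ((M:ℝ)⁻¹ • (ctr M i + 0))‖ ≤ e := by
    intro i y' hy'
    have hz : (0 : Dom n) ∈ unitCube n := by rw [unitCube_eq_ball]; simp
    have h1 : ∀ w ∈ unitCube n, (M:ℝ)⁻¹ • (ctr M i + w) ∈ Metric.closedBall (0 : Dom n) (1/2) := by
      intro w hw
      apply Metric.ball_subset_closedBall
      rw [← unitCube_eq_ball]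
      have := ctr_sub hM0 (i := i) (x := ctr M i + w) (by simpa using hw)
      exact this
    rw [← dist_eq_norm]
    refine (hd _ (h1 _ hy') _ (h1 _ hz) ?_).le
    rw [dist_eq_norm, ← smul_sub, add_sub_add_left_eq_sub, sub_zero, norm_smul, norm_inv,
      Real.norm_natCast]
    have h2 : ‖y'‖ < 1/2 := by rw [unitCube_eq_ball] at hy'; simpa using hy'
    have h3 : (M:ℝ)⁻¹ < δ := by rw [hM]; simpa using hN
    have : (M:ℝ)⁻¹ * ‖y'‖ ≤ (M:ℝ)⁻¹ * 1 := by gcongr; linarith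
    linarith
  choose u hu hu2 using fun i : Fin n → Fin M =>
    Q_near (B := B) (Φ := Φ) (l := l) (y + g ((M:ℝ)⁻¹ • (ctr M i + 0))) he
  have ht := tileFn_cc hM0 l hu
  have h1 := Q_le hΦ hb y (cc_add hφ ht)
  have h2 : ∫ x in unitCube n, Φ (y + opApply B l (fun x => φ x + tileFn M l u x) x) =
      ∫ x in unitCube n, Φ (y + g x + opApply B l (tileFn M l u) x) := by
    refine integral_congr_ae (Eventually.of_forall fun x => ?_)
    simp only
    rw [opApply_add B l hφ.1 ht.1, add_assoc]
  rw [h2, tile_main hM0 B l hu (H := fun x b => Φ (y + g x + b))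
    (by exact hΦ.continuous.comp (by fun_prop))] at h1
  rw [tile_integral hM0 (h := fun x => Qenv B l Φ (y + g x))
    (hQ.continuous.comp (by fun_prop))]
  have hcard : (2 * K + 1) * e = ∑ i : Fin n → Fin M, ((M:ℝ)^n)⁻¹ * ((2 * K + 1) * e) := by
    simp
  rw [hcard, ← Finset.sum_add_distrib]
  refine h1.trans (Finset.sum_le_sum fun i _ => ?_)
  rw [← mul_add]
  gcongr
  have a1 := lip_int_le hΦ
    (g := fun y' => y + g ((M:ℝ)⁻¹ • (ctr M i + y')) + opApply B l (u i) y')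
    (g' := fun y' => y + g ((M:ℝ)⁻¹ • (ctr M i + 0)) + opApply B l (u i) y')
    (by have := cc_op_cont (B := B) (l := l) (hu i); fun_prop)
    (by have := cc_op_cont (B := B) (l := l) (hu i); fun_prop) (e := e)
    (fun x hx => by simpa using hclose i x hx)
  have a2 := lip_int_le hQ
    (g' := fun y' => y + g ((M:ℝ)⁻¹ • (ctr M i + y')))
    (g := fun y' : Dom n => y + g ((M:ℝ)⁻¹ • (ctr M i + 0)))
    (by fun_prop) (by fun_prop) (e := e)
    (fun x hx => by rw [norm_sub_rev]; simpa using hclose i x hx)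
  rw [setIntegral_const] at a2
  simp only [Measure.real, cube_vol, ENNReal.toReal_one, one_smul] at a2
  have a3 := hu2 i
  linarith
end Envelope

end Part4

section Part5

/-! ## Periodic potentials -/
section PeriodicPot
variable {n : ℕ} {U V : Type*} [NormedAddCommGroup U] [NormedSpace ℝ U]
  [NormedAddCommGroup V] [NormedSpace ℝ V]
variable {B : (Fin n → ℕ) → (U →L[ℝ] V)} {l : ℕ} {F : V → ℝ} {K : NNReal}

lemma periodic_scale {h : Dom n → ℝ} (hh : Continuous h) (hp : ZPeriodic h) {N : ℕ} (hN : 0 < N) :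
    ∫ x in unitCube n, h ((N:ℝ) • x) = ∫ x in unitCube n, h x := by
  have hN' : (0 : ℝ) < N := by exact_mod_cast hN
  rw [tile_integral hN (h := fun x => h ((N:ℝ) • x)) (by fun_prop)]
  simp_rw [smul_smul, mul_inv_cancel₀ hN'.ne', one_smul, periodic_shift hp]
  simp
  field_simp

lemma iter_periodic {w : Dom n → U} (hp : ZPeriodic w) (j : ℕ) :
    ZPeriodic (iteratedFDeriv ℝ j w) := by
  intro x m
  rw [← iteratedFDeriv_comp_add_right]
  congr 1
  funext x
  exact hp x m

lemma cutoff_bound {η : Dom n → ℝ} (hη : ContDiff ℝ (⊤ : ℕ∞) η) (hηc : HasCompactSupport η)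
    (hη1 : ∀ x, ‖η x‖ ≤ 1) {w : Dom n → U} (hw : ContDiff ℝ (⊤ : ℕ∞) w) {M : ℕ → ℝ}
    (hM0 : ∀ j, 0 ≤ M j) (hM : ∀ j x, ‖iteratedFDeriv ℝ j w x‖ ≤ M j) (l : ℕ) :
    ∃ N : ℕ, 0 < N ∧ ∀ x, ‖iteratedFDeriv ℝ l
      (fun x => η x • (((N:ℝ)^l)⁻¹ • w ((N:ℝ) • x - 0))) x‖ ≤ M l + 1 := by
  have hE : ∀ j, ∃ E : ℝ, ∀ x, ‖iteratedFDeriv ℝ j η x‖ ≤ E := fun j =>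
    (hη.continuous_iteratedFDeriv (by exact_mod_cast le_top)).bounded_above_of_compact_support
      (hηc.iteratedFDeriv j)
  choose E hE using hE
  set C := ∑ j ∈ Finset.range l, ((l.choose (j+1) : ℝ) * E (j+1) * M (l - (j+1))) with hC
  obtain ⟨N, hN⟩ := exists_nat_ge C
  refine ⟨N + 1, Nat.succ_pos _, fun x => ?_⟩
  set N' := N + 1 with hN'
  have hN1 : (1:ℝ) ≤ N' := by rw [hN']; push_cast; linarith [(Nat.cast_nonneg N : (0:ℝ) ≤ N)]
  have hN0 : (0:ℝ) < N' := by linarith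
  have hsc := smooth_comp_aff (N':ℝ) 0 hw
  have hb := norm_iteratedFDeriv_smul_le (𝕜 := ℝ) (f := η)
    (g := fun x => (((N':ℝ)^l)⁻¹ • w ((N':ℝ) • x - 0))) (N := (⊤ : ℕ∞))
    hη (hsc.const_smul _) x (n := l) (by exact_mod_cast le_top)
  refine hb.trans ?_
  have hg : ∀ j ≤ l, ‖iteratedFDeriv ℝ (l - j) (fun x => (((N':ℝ)^l)⁻¹ • w ((N':ℝ) • x - 0))) x‖ ≤
      ((N':ℝ)^j)⁻¹ * M (l - j) := by
    intro j hj
    have hlt : ((l - j : ℕ) : WithTop ℕ∞) ≤ ((⊤ : ℕ∞) : WithTop ℕ∞) :=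
      WithTop.coe_le_coe.2 le_top
    rw [iteratedFDeriv_const_smul_apply' ((hsc.of_le hlt).contDiffAt),
      iter_scale _ _ _ hw, norm_smul, norm_smul, ← mul_assoc]
    refine mul_le_mul ?_ (hM _ _) (norm_nonneg _) (by positivity)
    rw [norm_inv, norm_pow, norm_pow, Real.norm_natCast]
    have : (N':ℝ)^l = (N':ℝ)^j * (N':ℝ)^(l-j) := by rw [← pow_add]; congr 1; omega
    rw [this, mul_inv, mul_assoc, inv_mul_cancel₀ (by positivity), mul_one]
  rw [Finset.sum_range_succ']
  have h0 : (l.choose 0 : ℝ) * ‖iteratedFDeriv ℝ 0 η x‖ *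
      ‖iteratedFDeriv ℝ (l - 0) (fun x => (((N':ℝ)^l)⁻¹ • w ((N':ℝ) • x - 0))) x‖ ≤ M l := by
    have := hg 0 (Nat.zero_le _)
    simp only [pow_zero, inv_one, one_mul, Nat.sub_zero] at this
    rw [Nat.choose_zero_right, norm_iteratedFDeriv_zero, Nat.sub_zero, Nat.cast_one, one_mul]
    calc _ ≤ 1 * M l := mul_le_mul (hη1 x) this (norm_nonneg _) zero_le_one
      _ = M l := one_mul _
  have h1 : ∑ j ∈ Finset.range l, (l.choose (j+1) : ℝ) * ‖iteratedFDeriv ℝ (j+1) η x‖ *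
      ‖iteratedFDeriv ℝ (l - (j+1)) (fun x => (((N':ℝ)^l)⁻¹ • w ((N':ℝ) • x - 0))) x‖ ≤
      (N':ℝ)⁻¹ * C := by
    rw [hC, Finset.mul_sum]
    refine Finset.sum_le_sum fun j hj => ?_
    have hjl : j + 1 ≤ l := Finset.mem_range.1 hj
    have hE0 : 0 ≤ E (j+1) := (norm_nonneg _).trans (hE _ x)
    calc _ ≤ (l.choose (j+1) : ℝ) * E (j+1) * (((N':ℝ)^(j+1))⁻¹ * M (l - (j+1))) := by
          gcongr
          · exact hE _ _
          · exact hg _ hjl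
      _ ≤ (l.choose (j+1) : ℝ) * E (j+1) * ((N':ℝ)⁻¹ * M (l - (j+1))) := by
          have := hM0 (l - (j+1))
          gcongr
          exact le_self_pow₀ hN1 (by omega)
      _ = _ := by ring
  have h2 : (N':ℝ)⁻¹ * C ≤ 1 := by
    rw [inv_mul_le_iff₀ hN0, mul_one, hN']; push_cast; linarith
  linarith

lemma claimA (hF : LipschitzWith K F)
    (hA1 : ∀ (y : V) (φ : Dom n → U), CcSmooth (unitCube n) φ →
      F y ≤ ∫ x in unitCube n, F (y + opApply B l φ x))
    (y : V) {w : Dom n → U} (hw : ContDiff ℝ (⊤ : ℕ∞) w) (hp : ZPeriodic w) :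
    F y ≤ ∫ x in unitCube n, F (y + opApply B l w x) := by
  have hMex : ∀ j, ∃ M : ℝ, 0 ≤ M ∧ ∀ x, ‖iteratedFDeriv ℝ j w x‖ ≤ M := fun j =>
    periodic_bdd (hw.continuous_iteratedFDeriv (by exact_mod_cast le_top)) (iter_periodic hp j)
  choose M hM0 hM using hMex
  obtain ⟨C, hC0, hC⟩ := opApply_norm_le B l
  set D := C * (M l + 1) with hD
  have hD0 : 0 ≤ D := mul_nonneg hC0 (by linarith [hM0 l])
  set v := opApply B l w with hv
  have hvc : Continuous v := (opApply_smooth B l hw).continuous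
  have hvp : ZPeriodic v := opApply_periodic B l hp
  have hvD : ∀ x, ‖v x‖ ≤ D := fun x => (hC w hw x).trans (by rw [hD]; gcongr; linarith [hM l x])
  have main : ∀ δ : ℝ, 0 < δ → δ < 1/4 → F y ≤ (∫ x in unitCube n, F (y + v x)) +
      K * (2 * D) * (4 * δ * n) := by
    intro δ hδ hδ4
    let η : ContDiffBump (0 : Dom n) := ⟨1/2 - 2 * δ, 1/2 - δ, by linarith, by linarith⟩
    have hηin : η.rIn = 1/2 - 2 * δ := rfl
    have hηout : η.rOut = 1/2 - δ := rfl
    obtain ⟨N, hN, hbd⟩ := cutoff_bound (η := η) η.contDiff η.hasCompactSupport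
      (fun x => by rw [Real.norm_of_nonneg η.nonneg]; exact η.le_one) hw hM0 hM l
    have hNr : (0:ℝ) < N := by exact_mod_cast hN
    set φ : Dom n → U := fun x => η x • (((N:ℝ)^l)⁻¹ • w ((N:ℝ) • x - 0)) with hφ
    have hsc := smooth_comp_aff (N:ℝ) 0 hw
    have hφs : ContDiff ℝ (⊤ : ℕ∞) φ := η.contDiff.smul (hsc.const_smul _)
    have hφc : CcSmooth (unitCube n) φ := by
      refine ccSmooth_of hφs (K := Metric.closedBall 0 (1/2 - δ)) Metric.isClosed_closedBall ?_ ?_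
      · intro x hx
        have h1 : x ∈ Function.support η := fun h => hx (by simp [hφ, h])
        rw [η.support_eq] at h1
        exact Metric.ball_subset_closedBall h1
      · rw [unitCube_eq_ball]; exact Metric.closedBall_subset_ball (by linarith)
    have hφD : ∀ x, ‖opApply B l φ x‖ ≤ D := fun x => (hC φ hφs x).trans (by
      rw [hD]; gcongr; exact hbd x)
    have hin : ∀ x ∈ Metric.ball (0 : Dom n) (1/2 - 2*δ), opApply B l φ x = v ((N:ℝ) • x) := by
      intro x hx
      have heq : φ =ᶠ[𝓝 x] fun x => ((N:ℝ)^l)⁻¹ • w ((N:ℝ) • x - 0) := by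
        filter_upwards [Metric.isOpen_ball.mem_nhds hx] with x' hx'
        rw [hφ]
        simp only
        rw [η.one_of_mem_closedBall (Metric.ball_subset_closedBall hx'), one_smul]
      rw [opApply_congr B l heq, opApply_smul B l _ hsc, opApply_scale B l _ _ hw, smul_smul,
        inv_mul_cancel₀ (by positivity), one_smul, sub_zero]
    have hφoc := cc_op_cont (B := B) (l := l) hφc
    refine (hA1 y φ hφc).trans ?_
    rw [← periodic_scale (h := fun x => F (y + v x)) (hF.continuous.comp (by fun_prop))
      (fun x m => by simp only; rw [hvp]) hN]
    set S : Set (Dom n) := unitCube n \ Metric.ball (0 : Dom n) (1/2 - 2*δ) with hS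
    have hSm : MeasurableSet S := cube_meas.diff measurableSet_ball
    have hSvol : (volume.restrict (unitCube n)).real S ≤ 4 * δ * n := by
      rw [measureReal_restrict_apply hSm, Set.inter_eq_left.2 Set.sdiff_subset, unitCube_eq_ball,
        measureReal_sdiff (Metric.ball_subset_ball (by linarith)) measurableSet_ball,
        Measure.real, Measure.real, Real.volume_pi_ball _ (by norm_num),
        Real.volume_pi_ball _ (by linarith), ENNReal.toReal_ofReal (by positivity),
        ENNReal.toReal_ofReal (pow_nonneg (by linarith) _)]
      have := one_add_mul_le_pow (a := -(4 * δ)) (by linarith) n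
      simp only [Fintype.card_fin]
      norm_num
      have e : 2 * (1/2 - 2 * δ) = 1 + -(4*δ) := by ring
      rw [e]; linarith
    have hint : Integrable (S.indicator fun _ => K * (2 * D)) (volume.restrict (unitCube n)) :=
      (integrable_const _).indicator hSm
    have hi2 : Integrable (fun x => F (y + v ((N:ℝ) • x))) (volume.restrict (unitCube n)) :=
      cube_int (hF.continuous.comp (by fun_prop))
    calc ∫ x in unitCube n, F (y + opApply B l φ x)
        ≤ ∫ x in unitCube n, (F (y + v ((N:ℝ) • x)) + S.indicator (fun _ => K * (2 * D)) x) := by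
          refine setIntegral_mono_on (cube_int (hF.continuous.comp (by fun_prop)))
            (hi2.add hint) cube_meas fun x hx => ?_
          by_cases hxS : x ∈ S
          · rw [Set.indicator_of_mem hxS]
            have h1 := lip_le hF (y + opApply B l φ x) (y + v ((N:ℝ) • x))
            rw [add_sub_add_left_eq_sub] at h1
            have h2 : ‖opApply B l φ x - v ((N:ℝ) • x)‖ ≤ 2 * D :=
              (norm_sub_le _ _).trans (by linarith [hφD x, hvD ((N:ℝ) • x)])
            have := mul_le_mul_of_nonneg_left h2 K.2
            simp only [NNReal.val_eq_coe] at this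
            linarith
          · rw [Set.indicator_of_notMem hxS, add_zero, hin x]
            by_contra h
            exact hxS ⟨hx, h⟩
      _ = (∫ x in unitCube n, F (y + v ((N:ℝ) • x))) +
            (volume.restrict (unitCube n)).real S * (K * (2 * D)) := by
          rw [integral_add hi2 hint, integral_indicator_const _ hSm, smul_eq_mul]
      _ ≤ _ := by
          have : (volume.restrict (unitCube n)).real S * (K * (2 * D)) ≤
            (4 * δ * n) * (K * (2 * D)) := by gcongr
          linarith
  have hlim : Tendsto (fun δ : ℝ => (∫ x in unitCube n, F (y + v x)) +
      K * (2 * D) * (4 * δ * n)) (𝓝[>] 0) (𝓝 ((∫ x in unitCube n, F (y + v x)) +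
      K * (2 * D) * (4 * 0 * n))) := by
    apply Tendsto.mono_left _ nhdsWithin_le_nhds
    apply Continuous.tendsto
    fun_prop
  have hle := ge_of_tendsto hlim (by
    filter_upwards [Ioo_mem_nhdsGT (show (0:ℝ) < 1/4 by norm_num)] with δ hδ
    exact main δ hδ.1 hδ.2)
  simpa using hle
end PeriodicPot

end Part5

section Part6

/-! ## Plane waves -/
section Waves
variable {n : ℕ} {U V W : Type*} [NormedAddCommGroup U] [NormedSpace ℝ U]
  [NormedAddCommGroup V] [NormedSpace ℝ V] [NormedAddCommGroup W] [NormedSpace ℝ W]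

def pw (ξ : Dom n) (θ : ℝ) (x : Dom n) : ℝ := Real.cos (2 * Real.pi * (∑ i, ξ i * x i) + θ)

def icast (m : Fin n → ℤ) : Dom n := fun i => (m i : ℝ)

lemma pw_smooth (ξ : Dom n) (θ : ℝ) : ContDiff ℝ (⊤ : ℕ∞) (pw ξ θ) := by
  unfold pw; fun_prop

lemma pw_cont (ξ : Dom n) (θ : ℝ) : Continuous (pw ξ θ) := (pw_smooth ξ θ).continuous

lemma pw_periodic (m : Fin n → ℤ) (θ : ℝ) : ZPeriodic (pw (icast m) θ) := by
  intro x p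
  unfold pw icast
  have : 2 * Real.pi * (∑ i, (m i : ℝ) * (x + fun i => (p i : ℝ)) i) + θ =
      (2 * Real.pi * (∑ i, (m i : ℝ) * x i) + θ) + ((∑ i, m i * p i : ℤ) : ℝ) * (2 * Real.pi) := by
    simp only [Pi.add_apply, mul_add, Finset.sum_add_distrib]
    push_cast
    ring
  rw [this, Real.cos_add_int_mul_two_pi]

lemma pw_fderiv (ξ : Dom n) (θ : ℝ) (x : Dom n) (j : Fin n) :
    fderiv ℝ (pw ξ θ) x (Pi.single j 1) = 2 * Real.pi * ξ j * pw ξ (θ + Real.pi / 2) x := by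
  have h1 : HasFDerivAt (fun x : Dom n => 2 * Real.pi * (∑ i, ξ i * x i) + θ)
      ((2 * Real.pi) • ∑ i, ξ i • (ContinuousLinearMap.proj i : Dom n →L[ℝ] ℝ)) x := by
    refine HasFDerivAt.add_const _ (HasFDerivAt.const_mul ?_ _)
    refine HasFDerivAt.fun_sum fun i _ => ?_
    exact ((ContinuousLinearMap.proj i : Dom n →L[ℝ] ℝ).hasFDerivAt).const_mul _
  have h2 := h1.cos
  have h3 : fderiv ℝ (pw ξ θ) x = _ := h2.fderiv
  rw [h3]
  unfold pw
  rw [← add_assoc, Real.cos_add_pi_div_two]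
  simp [ContinuousLinearMap.sum_apply, Pi.single_apply]
  ring

lemma pw_pderiv (ξ : Dom n) (θ : ℝ) (b : V) (j : Fin n) :
    pderivDir j (fun x => pw ξ θ x • b) =
      fun x => (2 * Real.pi * ξ j) • (pw ξ (θ + Real.pi / 2) x • b) := by
  funext x
  unfold pderivDir
  rw [fderiv_smul_const (sm_diff (pw_smooth ξ θ) x)]
  rw [ContinuousLinearMap.smulRight_apply, pw_fderiv, mul_smul]

lemma pw_Ddir (ξ : Dom n) (b : V) (L : List (Fin n)) : ∀ θ : ℝ,
    Ddir L (fun x => pw ξ θ x • b) = fun x => ((L.map fun j => 2 * Real.pi * ξ j).prod) •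
      (pw ξ (θ + L.length * (Real.pi / 2)) x • b) := by
  induction L with
  | nil => intro θ; simp [Ddir_nil]
  | cons j L ih =>
    intro θ
    rw [Ddir_cons, ih]
    have h := Ddir_smul [j] ((L.map fun j => 2 * Real.pi * ξ j).prod)
      (u := fun x => pw ξ (θ + L.length * (Real.pi / 2)) x • b) ((pw_smooth _ _).smul contDiff_const)
    simp only [Ddir_cons, Ddir_nil] at h
    rw [h, pw_pderiv]
    funext x
    simp only [List.map_cons, List.prod_cons, List.length_cons, smul_smul]
    congr 1
    push_cast
    rw [show θ + ((L.length:ℝ) + 1) * (Real.pi/2) = θ + L.length * (Real.pi/2) + Real.pi/2 by ring]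
    ring

lemma dirs_prod (f : Fin n → ℝ) (α : Fin n → ℕ) : ((dirs α).map f).prod = ∏ i, f i ^ α i := by
  rw [Finset.prod_list_map_count]
  simp_rw [dirs_count]
  refine Finset.prod_subset (Finset.subset_univ _) fun i _ hi => ?_
  have : α i = 0 := by
    rw [← dirs_count α i]
    exact List.count_eq_zero_of_not_mem (fun h => hi (List.mem_toFinset.2 h))
  rw [this, pow_zero]

lemma dirs_prod' (c : ℝ) (ξ : Dom n) {k : ℕ} {α : Fin n → ℕ} (hα : α ∈ degSet n k) :
    ((dirs α).map fun j => c * ξ j).prod = c ^ k * ∏ i, ξ i ^ α i := by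
  rw [dirs_prod]
  simp_rw [mul_pow]
  rw [Finset.prod_mul_distrib, Finset.prod_pow_eq_pow_sum, mem_degSet.1 hα]

lemma pw_op (A : (Fin n → ℕ) → (V →L[ℝ] W)) (k : ℕ) (ξ : Dom n) (θ : ℝ) (b : V) (x : Dom n) :
    opApply A k (fun x => pw ξ θ x • b) x =
      ((2 * Real.pi) ^ k * pw ξ (θ + k * (Real.pi / 2)) x) • opSymbol A k ξ b := by
  unfold opApply opSymbol
  rw [ContinuousLinearMap.sum_apply, Finset.smul_sum]
  refine Finset.sum_congr rfl fun α hα => ?_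
  rw [mderiv_eq_Ddir, pw_Ddir, dirs_length, mem_degSet.1 hα, dirs_prod' _ _ hα]
  rw [map_smul, map_smul, ContinuousLinearMap.smul_apply, smul_smul, smul_smul]
  congr 1
  ring

lemma zper_smul {f : Dom n → ℝ} {g : Dom n → V} (hf : ZPeriodic f) (hg : ZPeriodic g) :
    ZPeriodic (fun x => f x • g x) := by
  intro x m
  simp only
  rw [hf, hg]

lemma ibp1 (m : Fin n → ℤ) (θ : ℝ) {v : Dom n → V} (hv : ContDiff ℝ (⊤ : ℕ∞) v)
    (hp : ZPeriodic v) (j : Fin n) :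
    ∫ x in unitCube n, pw (icast m) θ x • pderivDir j v x =
      (-(2 * Real.pi) * icast m j) • ∫ x in unitCube n, pw (icast m) (θ + Real.pi / 2) x • v x := by
  have h0 := periodic_int_deriv (g := fun x => pw (icast m) θ x • v x)
    ((pw_smooth _ _).smul hv) (zper_smul (pw_periodic m θ) hp) j
  have h1 : ∀ x, pderivDir j (fun x => pw (icast m) θ x • v x) x =
      pw (icast m) θ x • pderivDir j v x +
      (2 * Real.pi * icast m j) • (pw (icast m) (θ + Real.pi/2) x • v x) := by
    intro x
    unfold pderivDir
    rw [fderiv_fun_smul (sm_diff (pw_smooth _ _) x) (sm_diff hv x)]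
    simp only [ContinuousLinearMap.add_apply, ContinuousLinearMap.smul_apply,
      ContinuousLinearMap.smulRight_apply]
    rw [pw_fderiv, mul_smul]
  simp_rw [h1] at h0
  rw [integral_add, integral_smul] at h0
  · rw [neg_mul, neg_smul]
    exact eq_neg_of_add_eq_zero_left h0
  · exact cube_int ((pw_cont _ _).smul (pderivDir_smooth j hv).continuous)
  · exact cube_int (continuous_const.smul ((pw_cont _ _).smul hv.continuous))

lemma ibpL (m : Fin n → ℤ) {v : Dom n → V} (hv : ContDiff ℝ (⊤ : ℕ∞) v)
    (hp : ZPeriodic v) (L : List (Fin n)) : ∀ θ : ℝ,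
    ∫ x in unitCube n, pw (icast m) θ x • Ddir L v x =
      ((L.map fun j => -(2 * Real.pi) * icast m j).prod) •
        ∫ x in unitCube n, pw (icast m) (θ + L.length * (Real.pi / 2)) x • v x := by
  induction L with
  | nil => intro θ; simp [Ddir_nil]
  | cons j L ih =>
    intro θ
    rw [Ddir_cons, ibp1 m θ (Ddir_smooth L hv) (Ddir_periodic L hp), ih, smul_smul]
    simp only [List.map_cons, List.prod_cons, List.length_cons]
    congr 3
    funext x
    congr 2
    push_cast
    ring

lemma fourier_ker [CompleteSpace V] [CompleteSpace W]
    (A : (Fin n → ℕ) → (V →L[ℝ] W)) (k : ℕ) (m : Fin n → ℤ) (θ : ℝ)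
    {v : Dom n → V} (hv : ContDiff ℝ (⊤ : ℕ∞) v) (hp : ZPeriodic v)
    (hA : ∀ x, opApply A k v x = 0) :
    opSymbol A k (icast m) (∫ x in unitCube n, pw (icast m) θ x • v x) = 0 := by
  set θ' := θ - k * (Real.pi / 2) with hθ'
  have h0 : ∫ x in unitCube n, pw (icast m) θ' x • opApply A k v x = 0 := by
    simp [hA]
  unfold opApply at h0
  simp_rw [Finset.smul_sum, ← map_smul] at h0
  have hint : ∀ α : Fin n → ℕ, Integrable (fun x => pw (icast m) θ' x • mderiv α v x)
      (volume.restrict (unitCube n)) := fun α => by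
    rw [mderiv_eq_Ddir]
    exact cube_int ((pw_cont _ _).smul (Ddir_smooth _ hv).continuous)
  rw [integral_finsetSum _ fun α _ => (A α).integrable_comp (hint α)] at h0
  have h1 : ∀ α ∈ degSet n k, ∫ x in unitCube n, A α (pw (icast m) θ' x • mderiv α v x) =
      (-(2 * Real.pi)) ^ k • ((∏ i, icast m i ^ α i) • A α
        (∫ x in unitCube n, pw (icast m) θ x • v x)) := by
    intro α hα
    rw [(A α).integral_comp_comm (hint α), mderiv_eq_Ddir, ibpL m hv hp, dirs_prod' _ _ hα,
      dirs_length, mem_degSet.1 hα, map_smul, mul_smul, hθ', sub_add_cancel]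
  rw [Finset.sum_congr rfl h1, ← Finset.smul_sum] at h0
  have hne : (-(2 * Real.pi)) ^ k ≠ 0 := pow_ne_zero _ (by simp [Real.pi_ne_zero])
  unfold opSymbol
  rw [ContinuousLinearMap.sum_apply]
  exact (smul_eq_zero.1 h0).resolve_left hne

end Waves

end Part6

section Part7

/-! ## Fejér-type approximation -/
section Fejer
variable {n : ℕ} {U V W : Type*} [NormedAddCommGroup U] [NormedSpace ℝ U]
  [NormedAddCommGroup V] [NormedSpace ℝ V] [NormedAddCommGroup W] [NormedSpace ℝ W]

def fk (y : Dom n) : ℝ := ∏ i, ((1 + Real.cos (2 * Real.pi * y i)) / 2)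

lemma fk_cont : Continuous (fk : Dom n → ℝ) := by
  unfold fk; fun_prop

lemma fk_factor (s : ℝ) : 0 ≤ (1 + Real.cos s) / 2 ∧ (1 + Real.cos s) / 2 ≤ 1 :=
  ⟨by linarith [Real.neg_one_le_cos s], by linarith [Real.cos_le_one s]⟩

lemma fk_nonneg (y : Dom n) : 0 ≤ fk y := Finset.prod_nonneg fun _ _ => (fk_factor _).1

lemma fk_zero : fk (0 : Dom n) = 1 := by simp [fk]

lemma fk_lt {y : Dom n} (hy : ∀ i, |y i| < 1) (h0 : y ≠ 0) : fk y < 1 := by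
  obtain ⟨i, hi⟩ := Function.ne_iff.1 h0
  have hi1 : (1 + Real.cos (2 * Real.pi * y i)) / 2 < 1 := by
    refine lt_of_le_of_ne (fk_factor _).2 fun h => hi ?_
    have hc : Real.cos (2 * Real.pi * y i) = 1 := by linarith
    obtain ⟨q, hq⟩ := (Real.cos_eq_one_iff _).1 hc
    have hq' : (q : ℝ) = y i := by
      have := Real.pi_pos
      have h2 : (q : ℝ) * (2 * Real.pi) = y i * (2 * Real.pi) := by linarith
      exact mul_right_cancel₀ (by positivity) h2
    have h3 := hy i
    rw [← hq'] at h3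
    have h4 : |q| < 1 := by exact_mod_cast h3
    rw [Int.abs_lt_one_iff] at h4
    simp [← hq', h4]
  unfold fk
  rw [← Finset.mul_prod_erase _ _ (Finset.mem_univ i)]
  refine lt_of_le_of_lt (mul_le_of_le_one_right (fk_factor _).1 ?_) hi1
  exact Finset.prod_le_one (fun _ _ => (fk_factor _).1) fun _ _ => (fk_factor _).2

lemma fk_periodic : ZPeriodic (fk : Dom n → ℝ) := by
  intro x m
  unfold fk
  refine Finset.prod_congr rfl fun i _ => ?_
  have : 2 * Real.pi * (x + fun i => (m i : ℝ)) i = 2 * Real.pi * x i + (m i : ℝ) * (2 * Real.pi) := by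
    simp; ring
  rw [this, Real.cos_add_int_mul_two_pi]

variable (n) in
def pwSpan : Submodule ℝ (Dom n → ℝ) :=
  Submodule.span ℝ (Set.range fun p : (Fin n → ℤ) × ℝ => pw (icast p.1) p.2)

lemma pwSpan_cos {f : Dom n → ℝ} (hf : f ∈ pwSpan n) (i : Fin n) :
    (fun x => Real.cos (2 * Real.pi * x i) * f x) ∈ pwSpan n := by
  induction hf using Submodule.span_induction with
  | mem f hf =>
    obtain ⟨⟨m, θ⟩, rfl⟩ := hf
    have key : (fun x : Dom n => Real.cos (2 * Real.pi * x i) * pw (icast m) θ x) =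
        (1/2 : ℝ) • pw (icast (m - Pi.single i 1)) θ + (1/2 : ℝ) • pw (icast (m + Pi.single i 1)) θ := by
      funext x
      have h := Real.two_mul_cos_mul_cos (2 * Real.pi * (∑ j, (m j : ℝ) * x j) + θ) (2 * Real.pi * x i)
      have e1 : ∑ j, ((m - Pi.single i 1 : Fin n → ℤ) j : ℝ) * x j = (∑ j, (m j : ℝ) * x j) - x i := by
        simp [sub_mul, Finset.sum_sub_distrib, Pi.single_apply]
      have e2 : ∑ j, ((m + Pi.single i 1 : Fin n → ℤ) j : ℝ) * x j = (∑ j, (m j : ℝ) * x j) + x i := by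
        simp [add_mul, Finset.sum_add_distrib, Pi.single_apply]
      simp only [Pi.add_apply, Pi.smul_apply, smul_eq_mul]
      unfold pw icast
      rw [e1, e2]
      rw [show 2 * Real.pi * ((∑ j, (m j : ℝ) * x j) - x i) + θ =
        2 * Real.pi * (∑ j, (m j : ℝ) * x j) + θ - 2 * Real.pi * x i by ring,
        show 2 * Real.pi * ((∑ j, (m j : ℝ) * x j) + x i) + θ =
        2 * Real.pi * (∑ j, (m j : ℝ) * x j) + θ + 2 * Real.pi * x i by ring]
      linarith
    show (fun x : Dom n => Real.cos (2 * Real.pi * x i) * pw (icast m) θ x) ∈ pwSpan n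
    rw [key]
    exact Submodule.add_mem _ (Submodule.smul_mem _ _ (Submodule.subset_span ⟨(_, _), rfl⟩))
      (Submodule.smul_mem _ _ (Submodule.subset_span ⟨(_, _), rfl⟩))
  | zero => simp only [Pi.zero_apply, mul_zero]; exact Submodule.zero_mem _
  | add f g _ _ h1 h2 =>
    simp only [Pi.add_apply, mul_add]
    exact Submodule.add_mem _ h1 h2
  | smul a f _ h1 =>
    have := Submodule.smul_mem _ a h1
    convert this using 1
    funext x
    simp only [Pi.smul_apply, smul_eq_mul]
    ring

lemma pwSpan_fk {f : Dom n → ℝ} (hf : f ∈ pwSpan n) : (fun x => fk x * f x) ∈ pwSpan n := by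
  unfold fk
  suffices h : ∀ s : Finset (Fin n), (fun x : Dom n => (∏ i ∈ s,
      ((1 + Real.cos (2 * Real.pi * x i)) / 2)) * f x) ∈ pwSpan n from h _
  intro s
  induction s using Finset.cons_induction with
  | empty => simpa using hf
  | cons a s ha ih =>
    have h1 := Submodule.add_mem _ (Submodule.smul_mem _ (1/2 : ℝ) ih)
      (Submodule.smul_mem _ (1/2 : ℝ) (pwSpan_cos ih a))
    convert h1 using 1
    funext x
    simp only [Finset.prod_cons, Pi.add_apply, Pi.smul_apply, smul_eq_mul]
    ring

lemma fk_pow_mem (N : ℕ) : (fun x : Dom n => fk x ^ N) ∈ pwSpan n := by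
  induction N with
  | zero =>
    have : (fun x : Dom n => fk x ^ 0) = pw (icast 0) 0 := by
      funext x; simp [pw, icast]
    rw [this]
    exact Submodule.subset_span ⟨(_, _), rfl⟩
  | succ N ih =>
    have := pwSpan_fk ih
    simpa [pow_succ, mul_comm] using this

variable {A : (Fin n → ℕ) → (V →L[ℝ] W)} {k : ℕ} {B : (Fin n → ℕ) → (U →L[ℝ] V)} {l : ℕ}

lemma pw_zero_freq (θ : ℝ) (x : Dom n) : pw (icast 0) θ x = Real.cos θ := by simp [pw, icast]

lemma coef_range [CompleteSpace V] [CompleteSpace W] (hex : ExactPotential A k B l)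
    {v : Dom n → V} (hv : ContDiff ℝ (⊤ : ℕ∞) v) (hp : ZPeriodic v)
    (hm : ∫ x in unitCube n, v x = 0) (hA : ∀ x, opApply A k v x = 0) (m : Fin n → ℤ) (θ : ℝ) :
    ∃ a, opSymbol B l (icast m) a = ∫ x in unitCube n, pw (icast m) θ x • v x := by
  by_cases h : m = 0
  · refine ⟨0, ?_⟩
    subst h
    simp_rw [pw_zero_freq]
    rw [integral_smul, hm, smul_zero, map_zero]
  · have hne : icast m ≠ 0 := by
      intro h0
      apply h
      funext i
      have := congrFun h0 i
      simpa [icast] using this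
    have h1 := fourier_ker A k m θ hv hp hA
    have h2 : (∫ x in unitCube n, pw (icast m) θ x • v x) ∈
        LinearMap.ker (opSymbol A k (icast m) : V →ₗ[ℝ] W) := h1
    rw [hex _ hne] at h2
    exact h2

lemma wave_pot (m : Fin n → ℤ) (θ : ℝ) (a : U) :
    ∃ w : Dom n → U, ContDiff ℝ (⊤ : ℕ∞) w ∧ ZPeriodic w ∧
      ∀ x, opApply B l w x = pw (icast m) θ x • opSymbol B l (icast m) a := by
  refine ⟨fun x => pw (icast m) (θ - l * (Real.pi/2)) x • (((2 * Real.pi)^l)⁻¹ • a),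
    (pw_smooth _ _).smul contDiff_const, zper_smul (pw_periodic _ _) (fun _ _ => rfl), fun x => ?_⟩
  have := Real.pi_pos
  rw [pw_op, map_smul, smul_smul, sub_add_cancel]
  congr 1
  field_simp

lemma conv_pot [CompleteSpace V] [CompleteSpace W] (hex : ExactPotential A k B l)
    {v : Dom n → V} (hv : ContDiff ℝ (⊤ : ℕ∞) v) (hp : ZPeriodic v)
    (hm : ∫ x in unitCube n, v x = 0) (hA : ∀ x, opApply A k v x = 0)
    {κ : Dom n → ℝ} (hκ : κ ∈ pwSpan n) : Continuous κ ∧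
    ∃ w : Dom n → U, ContDiff ℝ (⊤ : ℕ∞) w ∧ ZPeriodic w ∧
      ∀ x, opApply B l w x = ∫ y in unitCube n, κ (x - y) • v y := by
  unfold pwSpan at hκ
  refine Submodule.span_induction (p := fun κ _ => Continuous κ ∧
    ∃ w : Dom n → U, ContDiff ℝ (⊤ : ℕ∞) w ∧ ZPeriodic w ∧
      ∀ x, opApply B l w x = ∫ y in unitCube n, κ (x - y) • v y) ?_ ?_ ?_ ?_ hκ
  · rintro _ ⟨⟨m, θ⟩, rfl⟩
    refine ⟨pw_cont _ _, ?_⟩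
    obtain ⟨a, ha⟩ := coef_range hex hv hp hm hA m (-θ)
    obtain ⟨b, hb⟩ := coef_range hex hv hp hm hA m (Real.pi/2 - θ)
    obtain ⟨w1, h1, h1p, h1e⟩ := wave_pot (B := B) (l := l) m 0 a
    obtain ⟨w2, h2, h2p, h2e⟩ := wave_pot (B := B) (l := l) m (Real.pi/2) b
    refine ⟨fun x => w1 x + w2 x, h1.add h2, fun x p => by simp only; rw [h1p, h2p], fun x => ?_⟩
    rw [opApply_add B l h1 h2, h1e, h2e, ha, hb, ← integral_smul, ← integral_smul, ← integral_add]
    · congr 1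
      funext y
      rw [smul_smul, smul_smul, ← add_smul]
      congr 1
      dsimp only
      unfold pw
      have e : ∑ i, icast m i * (x - y) i = (∑ i, icast m i * x i) - ∑ i, icast m i * y i := by
        simp [mul_sub, Finset.sum_sub_distrib]
      rw [e]
      set p := 2 * Real.pi * ∑ i, icast m i * x i
      set q := 2 * Real.pi * ∑ i, icast m i * y i
      rw [show 2 * Real.pi * ((∑ i, icast m i * x i) - ∑ i, icast m i * y i) + θ = p - (q + -θ) by
        simp only [p, q]; ring, add_zero, Real.cos_add_pi_div_two,
        show q + (Real.pi/2 - θ) = (q + -θ) + Real.pi/2 by ring, Real.cos_add_pi_div_two,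
        Real.cos_sub]
      ring
    · exact cube_int (continuous_const.smul ((pw_cont _ _).smul hv.continuous))
    · exact cube_int (continuous_const.smul ((pw_cont _ _).smul hv.continuous))
  · refine ⟨continuous_const, fun _ => 0, contDiff_const, fun _ _ => rfl, fun x => ?_⟩
    simp [opApply_zero]
  · rintro f g _ _ ⟨hf, w1, h1, h1p, h1e⟩ ⟨hg, w2, h2, h2p, h2e⟩
    refine ⟨hf.add hg, fun x => w1 x + w2 x, h1.add h2, fun x p => by simp only; rw [h1p, h2p],
      fun x => ?_⟩
    rw [opApply_add B l h1 h2, h1e, h2e, ← integral_add]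
    · simp [add_smul]
    · exact cube_int ((hf.comp (by fun_prop)).smul hv.continuous)
    · exact cube_int ((hg.comp (by fun_prop)).smul hv.continuous)
  · rintro c f _ ⟨hf, w1, h1, h1p, h1e⟩
    refine ⟨continuous_const.smul hf, fun x => c • w1 x, contDiff_const.smul h1,
      fun x p => by simp only; rw [h1p], fun x => ?_⟩
    rw [opApply_smul B l c h1, h1e, ← integral_smul]
    simp [smul_smul]

lemma fejer_tendsto [CompleteSpace V] {v : Dom n → V} (hv : Continuous v)
    {x : Dom n} (hx : x ∈ unitCube n) :
    Tendsto (fun N : ℕ => (∫ y in unitCube n, fk (x - y) ^ N)⁻¹ •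
      ∫ y in unitCube n, fk (x - y) ^ N • v y) atTop (𝓝 (v x)) := by
  rw [show volume.restrict (unitCube n) = volume.restrict (closedUnitCube n) from
    Measure.restrict_congr_set cube_ae_closed]
  refine tendsto_setIntegral_pow_smul_of_unique_maximum_of_isCompact_of_continuousOn
    (c := fun y => fk (x - y)) ?_ ?_ ?_ ?_ ?_ ?_ ?_
  · rw [closedUnitCube_eq]; exact isCompact_closedBall _ _
  · exact (fk_cont.comp (by fun_prop)).continuousOn
  · intro y hy hne
    simp only [sub_self, fk_zero]
    refine fk_lt (fun i => ?_) (sub_ne_zero.2 hne.symm)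
    have h1 := mem_cube_iff.1 hx i
    have h2 := hy i (Set.mem_univ i)
    rw [abs_lt] at h1 ⊢
    simp only [Set.mem_Icc, Pi.sub_apply] at h2 ⊢
    constructor <;> linarith [h1.1, h1.2, h2.1, h2.2]
  · intro y _; exact fk_nonneg _
  · simp only [sub_self, fk_zero]; exact one_pos
  · apply subset_closure
    refine interior_maximal ?_ cube_open hx
    rw [unitCube_eq_ball, closedUnitCube_eq]; exact Metric.ball_subset_closedBall
  · exact hv.continuousOn

lemma fejer_mass (N : ℕ) (x : Dom n) :
    ∫ y in unitCube n, fk (x - y) ^ N = ∫ y in unitCube n, fk (-y) ^ N := by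
  have hp : ZPeriodic (fun y : Dom n => fk (-y) ^ N) := by
    intro y m
    simp only
    have := fk_periodic.sub (-y) m
    rw [neg_add, ← sub_eq_add_neg, this]
  rw [← periodic_shift hp (-x)]
  congr 1
  funext y
  congr 2
  abel

lemma claimB [CompleteSpace V] [CompleteSpace W] (hex : ExactPotential A k B l)
    {F : V → ℝ} {K : NNReal} (hF : LipschitzWith K F)
    (hA1 : ∀ (y : V) (φ : Dom n → U), CcSmooth (unitCube n) φ →
      F y ≤ ∫ x in unitCube n, F (y + opApply B l φ x)) : AQuasiconvex A k F := by
  refine ⟨hF.continuous, fun z v hv hp hm hA => ?_⟩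
  obtain ⟨M, hM0, hM⟩ := periodic_bdd hv.continuous hp
  choose w hw hwp hwe using fun N : ℕ =>
    (conv_pot (B := B) (l := l) hex hv hp hm hA (fk_pow_mem (n := n) N)).2
  set Z : ℕ → ℝ := fun N => ∫ y in unitCube n, fk (-y) ^ N with hZ
  set vN : ℕ → Dom n → V := fun N => opApply B l (fun x => (Z N)⁻¹ • w N x) with hvN
  have hsm : ∀ N, ContDiff ℝ (⊤ : ℕ∞) (fun x => (Z N)⁻¹ • w N x) := fun N =>
    contDiff_const.smul (hw N)
  have hvNe : ∀ N x, vN N x = (∫ y in unitCube n, fk (x - y) ^ N)⁻¹ •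
      ∫ y in unitCube n, fk (x - y) ^ N • v y := by
    intro N x
    rw [hvN]
    simp only
    rw [opApply_smul B l _ (hw N), hwe, fejer_mass]
  have hbound : ∀ N x, ‖vN N x‖ ≤ M := by
    intro N x
    rw [hvNe, norm_smul, norm_inv]
    have h0 : 0 ≤ ∫ y in unitCube n, fk (x - y) ^ N :=
      integral_nonneg fun y => pow_nonneg (fk_nonneg _) _
    rw [Real.norm_of_nonneg h0]
    have hc : Continuous fun y : Dom n => fk (x - y) ^ N := (fk_cont.comp (by fun_prop)).pow N
    have h1 : ‖∫ y in unitCube n, fk (x - y) ^ N • v y‖ ≤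
        (∫ y in unitCube n, fk (x - y) ^ N) * M := by
      rw [← integral_mul_const]
      refine norm_integral_le_of_norm_le (cube_int (hc.mul continuous_const))
        (Eventually.of_forall fun y => ?_)
      rw [norm_smul, Real.norm_of_nonneg (pow_nonneg (fk_nonneg _) _)]
      exact mul_le_mul_of_nonneg_left (hM y) (pow_nonneg (fk_nonneg _) _)
    calc _ ≤ (∫ y in unitCube n, fk (x - y) ^ N)⁻¹ * ((∫ y in unitCube n, fk (x - y) ^ N) * M) :=
          mul_le_mul_of_nonneg_left h1 (inv_nonneg.2 h0)
      _ = ((∫ y in unitCube n, fk (x - y) ^ N)⁻¹ * (∫ y in unitCube n, fk (x - y) ^ N)) * M := by ring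
      _ ≤ 1 * M := mul_le_mul_of_nonneg_right inv_mul_le_one hM0
      _ = M := one_mul M
  have hvNc : ∀ N, Continuous (vN N) := fun N => (opApply_smooth B l (hsm N)).continuous
  have hlim : Tendsto (fun N => ∫ x in unitCube n, F (z + vN N x)) atTop
      (𝓝 (∫ x in unitCube n, F (z + v x))) := by
    refine tendsto_integral_of_dominated_convergence (fun _ => |F z| + K * M) ?_ ?_ ?_ ?_
    · intro N
      exact (hF.continuous.comp (continuous_const.add (hvNc N))).aestronglyMeasurable
    · exact integrable_const _
    · intro N
      refine Eventually.of_forall fun x => ?_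
      have h1 := hF.dist_le_mul (z + vN N x) z
      rw [Real.dist_eq, dist_eq_norm, add_sub_cancel_left] at h1
      have h2 : (K:ℝ) * ‖vN N x‖ ≤ K * M := mul_le_mul_of_nonneg_left (hbound N x) K.2
      rw [Real.norm_eq_abs]
      have := abs_sub_abs_le_abs_sub (F (z + vN N x)) (F z)
      linarith
    · rw [ae_restrict_iff' cube_meas]
      refine Eventually.of_forall fun x hx => ?_
      have h1 := fejer_tendsto hv.continuous hx
      simp_rw [← hvNe] at h1
      exact (hF.continuous.tendsto _).comp (h1.const_add z)
  refine ge_of_tendsto hlim (Eventually.of_forall fun N => ?_)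
  exact claimA hF hA1 z (hsm N) (fun x m => by
    show (Z N)⁻¹ • w N _ = (Z N)⁻¹ • w N _
    rw [hwp N])

lemma Q_qc [CompleteSpace V] [CompleteSpace W] (hex : ExactPotential A k B l) {Φ : V → ℝ}
    {K : NNReal} (hΦ : LipschitzWith K Φ) (hb : QBdd B l Φ) :
    AQuasiconvex A k (Qenv B l Φ) :=
  claimB hex (Q_lip hΦ hb) fun y _ hφ => Q_A1 hΦ hb y hφ

end Fejer

end Part7

section Part8

/-! ## Lipschitz functions and the set of derivatives -/
section LipDer
variable {V : Type*} [NormedAddCommGroup V] [InnerProductSpace ℝ V] [FiniteDimensional ℝ V]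
  [MeasurableSpace V] [BorelSpace V] {F : V → ℝ} {K : NNReal}

lemma derivSet_nonempty (hF : LipschitzWith K F) : (derivSet F).Nonempty := by
  have h := (hF.ae_differentiableAt (μ := (Measure.addHaar : Measure V))).exists
  obtain ⟨x, hx⟩ := h
  refine ⟨(InnerProductSpace.toDual ℝ V).symm (fderiv ℝ F x), x, ?_⟩
  rw [LinearIsometryEquiv.apply_symm_apply]
  exact hx.hasFDerivAt

lemma derivSet_bdd (hF : LipschitzWith K F) (w : V) :
    BddAbove ((fun ζ => (inner ℝ ζ w : ℝ)) '' derivSet F) := by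
  refine ⟨K * ‖w‖, ?_⟩
  rintro _ ⟨ζ, ⟨x, hx⟩, rfl⟩
  have h1 := hx.le_of_lipschitz hF
  rw [LinearIsometryEquiv.norm_map] at h1
  exact (real_inner_le_norm ζ w).trans (mul_le_mul_of_nonneg_right h1 (norm_nonneg _))

lemma fderiv_le_supp (hF : LipschitzWith K F) {x : V} (hx : DifferentiableAt ℝ F x) (w : V) :
    fderiv ℝ F x w ≤ suppFn (derivSet F) w := by
  refine le_csSup (derivSet_bdd hF w) ⟨(InnerProductSpace.toDual ℝ V).symm (fderiv ℝ F x), ⟨x, ?_⟩, ?_⟩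
  · rw [LinearIsometryEquiv.apply_symm_apply]
    exact hx.hasFDerivAt
  · simp

lemma lip_increment (hF : LipschitzWith K F) (a w : V) {t : ℝ} (ht : 0 ≤ t) :
    F (a + t • w) ≤ F a + t * suppFn (derivSet F) w := by
  set s := suppFn (derivSet F) w with hs
  set μ : Measure V := Measure.addHaar with hμ
  suffices h : ∀ r : ℝ, 0 < r → F (a + t • w) ≤ F a + t * s + 2 * K * r by
    have hlim : Tendsto (fun r : ℝ => F a + t * s + 2 * K * r) (𝓝[>] 0)
        (𝓝 (F a + t * s + 2 * K * 0)) :=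
      Tendsto.mono_left (Continuous.tendsto (by fun_prop) _) nhdsWithin_le_nhds
    have := ge_of_tendsto hlim (by
      filter_upwards [self_mem_nhdsWithin] with r hr using h r hr)
    simpa using this
  intro r hr
  set b := Metric.ball (0 : V) r with hb
  have hbfin : μ b < ⊤ := measure_ball_lt_top
  have hbpos : 0 < μ.real b := by
    rw [Measure.real, ENNReal.toReal_pos_iff]
    exact ⟨Metric.measure_ball_pos μ 0 hr, hbfin⟩
  have : IsFiniteMeasure (μ.restrict b) := ⟨by simpa using hbfin⟩
  have hbd : ∀ p : V, ∀ h ∈ b, |F (p + h) - F p| ≤ K * r := by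
    intro p h hh
    have h1 := hF.dist_le_mul (p + h) p
    rw [Real.dist_eq, dist_eq_norm, add_sub_cancel_left] at h1
    have h2 : ‖h‖ < r := by simpa [hb] using hh
    exact h1.trans (mul_le_mul_of_nonneg_left h2.le K.2)
  have hFi : ∀ p : V, Integrable (fun h => F (p + h)) (μ.restrict b) := by
    intro p
    refine Integrable.of_bound (hF.continuous.comp (by fun_prop)).aestronglyMeasurable
      (|F p| + K * r) ?_
    rw [ae_restrict_iff' measurableSet_ball]
    refine Eventually.of_forall fun h hh => ?_
    rw [Real.norm_eq_abs]
    linarith [hbd p h hh, abs_sub_abs_le_abs_sub (F (p+h)) (F p)]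
  set G : ℝ → ℝ := fun τ => ∫ h in b, F ((a + τ • w) + h) ∂μ with hG
  have hdiff : ∀ τ : ℝ, ∀ᵐ h ∂(μ.restrict b), DifferentiableAt ℝ F ((a + τ • w) + h) := fun τ =>
    ae_restrict_of_ae ((eventually_add_left_iff μ (a + τ • w)).2 hF.ae_differentiableAt)
  have hder : ∀ τ : ℝ, Integrable (fun h => fderiv ℝ F ((a + τ • w) + h) w) (μ.restrict b) ∧
      HasDerivAt G (∫ h in b, fderiv ℝ F ((a + τ • w) + h) w ∂μ) τ := by
    intro τ
    refine hasDerivAt_integral_of_dominated_loc_of_lip (bound := fun _ => K * ‖w‖)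
      (s := Set.univ) (F := fun τ h => F ((a + τ • w) + h)) univ_mem ?_ (hFi _) ?_ ?_ ?_ ?_
    · exact Eventually.of_forall fun τ => (hFi _).1
    · exact ((measurable_fderiv_apply_const ℝ F w).comp
        (measurable_const_add _)).aestronglyMeasurable
    · refine Eventually.of_forall fun h => LipschitzWith.lipschitzOnWith ?_
      refine LipschitzWith.of_dist_le_mul fun x y => ?_
      refine (hF.dist_le_mul _ _).trans_eq ?_
      rw [dist_eq_norm, Real.dist_eq,
        show a + x • w + h - (a + y • w + h) = (x - y) • w by rw [sub_smul]; abel, norm_smul,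
        Real.norm_eq_abs, Real.coe_nnabs,
        abs_of_nonneg (show 0 ≤ (K:ℝ) * ‖w‖ by positivity)]
      ring
    · exact integrable_const _
    · filter_upwards [hdiff τ] with h hh
      have h1 : HasDerivAt (fun τ : ℝ => a + τ • w + h) w τ := by
        have := (((hasDerivAt_id τ).smul_const w).const_add a).add_const h
        simpa using this
      exact hh.hasFDerivAt.comp_hasDerivAt τ h1
  have hle : ∀ τ, deriv G τ ≤ s * μ.real b := by
    intro τ
    rw [(hder τ).2.deriv]
    calc _ ≤ ∫ h in b, s ∂μ := by
          refine integral_mono_ae (hder τ).1 (integrable_const _) ?_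
          filter_upwards [hdiff τ] with h hh
          exact fderiv_le_supp hF hh w
      _ = s * μ.real b := by rw [setIntegral_const, smul_eq_mul, mul_comm]
  have hGd : Differentiable ℝ G := fun τ => (hder τ).2.differentiableAt
  have hmv := image_sub_le_mul_sub_of_deriv_le hGd hle ht
  have h0 : G 0 ≤ (F a + K * r) * μ.real b := by
    calc G 0 ≤ ∫ h in b, (F a + K * r) ∂μ := by
          refine setIntegral_mono_on (hFi _) (integrable_const _) measurableSet_ball fun h hh => ?_
          simp only [zero_smul, add_zero]
          linarith [le_abs_self (F (a + h) - F a), hbd a h hh]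
      _ = _ := by rw [setIntegral_const, smul_eq_mul, mul_comm]
  have h1 : (F (a + t • w) - K * r) * μ.real b ≤ G t := by
    calc _ = ∫ h in b, (F (a + t • w) - K * r) ∂μ := by rw [setIntegral_const, smul_eq_mul, mul_comm]
      _ ≤ G t := by
          refine setIntegral_mono_on (integrable_const _) (hFi _) measurableSet_ball fun h hh => ?_
          linarith [neg_abs_le (F (a + t • w + h) - F (a + t • w)), hbd (a + t • w) h hh]
  have h2 : (F (a + t • w) - K * r) * μ.real b ≤ (F a + K * r + s * t) * μ.real b := by
    nlinarith
  have := le_of_mul_le_mul_right h2 hbpos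
  linarith
end LipDer

end Part8

section Part9

/-! ## The class of integrands and functions on the closed ball -/
section Integrands
variable {V : Type*} [NormedAddCommGroup V] [NormedSpace ℝ V]

lemma hasRec_tendsto {Φ g : V → ℝ} (h : HasRec Φ g) (z : V) :
    Tendsto (fun t : ℝ => Φ (t • z) / t) atTop (𝓝 (g z)) :=
  TendstoLocallyUniformlyOn.tendsto_at (tendstoLocallyUniformlyOn_univ.2 h) (Set.mem_univ z)

lemma hasRec_rrec {Φ g : V → ℝ} (h : HasRec Φ g) (z : V) : rrec Φ z = g z :=
  (hasRec_tendsto h z).limsup_eq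

lemma hasRec_cont {Φ g : V → ℝ} (h : HasRec Φ g) (hΦ : Continuous Φ) : Continuous g := by
  refine TendstoLocallyUniformly.continuous h (Eventually.frequently (Eventually.of_forall fun t => ?_))
  exact (hΦ.comp (by fun_prop)).div_const t

variable (V) in
abbrev UBall := Metric.closedBall (0 : V) 1

def bpt (c : NNReal) (z : V) : UBall V :=
  ⟨((c:ℝ) + ‖z‖)⁻¹ • z, by
    rw [mem_closedBall_zero_iff, norm_smul, norm_inv, Real.norm_of_nonneg (by positivity)]
    rw [inv_mul_eq_div]
    exact div_le_one_of_le₀ (by linarith [c.2, NNReal.coe_nonneg c]) (by positivity)⟩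

lemma bpt_smul (c : NNReal) (z : V) : ((c:ℝ) + ‖z‖) • (bpt c z : V) = z := by
  unfold bpt
  simp only
  by_cases h : (c:ℝ) + ‖z‖ = 0
  · have : ‖z‖ = 0 := by linarith [NNReal.coe_nonneg c, norm_nonneg z]
    rw [norm_eq_zero.1 this]; simp
  · rw [smul_smul, mul_inv_cancel₀ h, one_smul]

lemma bpt_norm (c : NNReal) (z : V) : ‖(bpt c z : V)‖ ≤ 1 := mem_closedBall_zero_iff.1 (bpt c z).2

/-- The integrand associated with a function on the closed ball. -/
def Sop (c : NNReal) (f : UBall V → ℝ) (z : V) : ℝ := ((c:ℝ) + ‖z‖) * f (bpt c z)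

lemma Sop_lip (c : NNReal) {f : UBall V → ℝ} {K M : NNReal} (hf : LipschitzWith K f)
    (hM : ∀ x, |f x| ≤ M) : LipschitzWith (M + 2 * K) (Sop c f) := by
  refine LipschitzWith.of_dist_le_mul fun z z' => ?_
  rw [Real.dist_eq, dist_eq_norm]
  have hnn := abs_norm_sub_norm_le z z'
  have e1 : Sop c f z - Sop c f z' = (‖z‖ - ‖z'‖) * f (bpt c z) +
      ((c:ℝ) + ‖z'‖) * (f (bpt c z) - f (bpt c z')) := by unfold Sop; ring
  have h1 : |(‖z‖ - ‖z'‖) * f (bpt c z)| ≤ M * ‖z - z'‖ := by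
    rw [abs_mul, mul_comm]
    exact mul_le_mul (hM _) hnn (abs_nonneg _) M.2
  have h2 : ((c:ℝ) + ‖z'‖) * dist (bpt c z) (bpt c z') ≤ 2 * ‖z - z'‖ := by
    have e2 : ((c:ℝ) + ‖z'‖) • ((bpt c z : V) - bpt c z') =
        (z - z') + (‖z'‖ - ‖z‖) • (bpt c z : V) := by
      rw [smul_sub, bpt_smul]
      have h3 : ((c:ℝ) + ‖z'‖) • (bpt c z : V) = ((c:ℝ) + ‖z‖) • (bpt c z : V) +
          (‖z'‖ - ‖z‖) • (bpt c z : V) := by rw [← add_smul]; congr 1; ring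
      rw [h3, bpt_smul]; abel
    rw [Subtype.dist_eq, dist_eq_norm]
    calc ((c:ℝ) + ‖z'‖) * ‖(bpt c z : V) - bpt c z'‖ = ‖((c:ℝ) + ‖z'‖) • ((bpt c z : V) - bpt c z')‖ := by
          rw [norm_smul, Real.norm_of_nonneg (by positivity)]
      _ ≤ ‖z - z'‖ + |‖z'‖ - ‖z‖| * ‖(bpt c z : V)‖ := by
          rw [e2]; exact (norm_add_le _ _).trans (by rw [norm_smul, Real.norm_eq_abs])
      _ ≤ ‖z - z'‖ + ‖z - z'‖ * 1 := by
          rw [abs_sub_comm]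
          gcongr
          exact bpt_norm c z
      _ = 2 * ‖z - z'‖ := by ring
  have h3 : |((c:ℝ) + ‖z'‖) * (f (bpt c z) - f (bpt c z'))| ≤ K * (2 * ‖z - z'‖) := by
    rw [abs_mul, abs_of_nonneg (by positivity)]
    have h4 := hf.dist_le_mul (bpt c z) (bpt c z')
    rw [Real.dist_eq] at h4
    calc _ ≤ ((c:ℝ) + ‖z'‖) * (K * dist (bpt c z) (bpt c z')) := by gcongr
      _ = K * (((c:ℝ) + ‖z'‖) * dist (bpt c z) (bpt c z')) := by ring
      _ ≤ _ := by gcongr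
  rw [e1]
  refine (abs_add_le _ _).trans ?_
  push_cast
  linarith

lemma Sop_diff {f : UBall V → ℝ} {K M : NNReal} (hf : LipschitzWith K f)
    (hM : ∀ x, |f x| ≤ M) (z : V) : |Sop 1 f z - Sop 0 f z| ≤ M + K := by
  have e1 : Sop 1 f z - Sop 0 f z = f (bpt 1 z) + ‖z‖ * (f (bpt 1 z) - f (bpt 0 z)) := by
    unfold Sop; push_cast; ring
  have h2 : ‖z‖ * dist (bpt 1 z) (bpt 0 z) ≤ 1 := by
    have e2 : ‖z‖ • ((bpt 1 z : V) - bpt 0 z) = - (bpt 1 z : V) := by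
      have h1 := bpt_smul 1 z
      have h0 := bpt_smul 0 z
      simp only [NNReal.coe_one, NNReal.coe_zero, zero_add, add_smul, one_smul] at h1 h0
      rw [smul_sub, h0]
      rw [← sub_eq_zero] at h1 ⊢
      rw [← h1]; abel
    rw [Subtype.dist_eq, dist_eq_norm]
    calc ‖z‖ * ‖(bpt 1 z : V) - bpt 0 z‖ = ‖‖z‖ • ((bpt 1 z : V) - bpt 0 z)‖ := by
          rw [norm_smul, norm_norm]
      _ ≤ 1 := by rw [e2, norm_neg]; exact bpt_norm 1 z
  have h4 := hf.dist_le_mul (bpt 1 z) (bpt 0 z)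
  rw [Real.dist_eq] at h4
  rw [e1]
  refine (abs_add_le _ _).trans (add_le_add (hM _) ?_)
  rw [abs_mul, abs_norm]
  calc _ ≤ ‖z‖ * (K * dist (bpt 1 z) (bpt 0 z)) := by gcongr
    _ = K * (‖z‖ * dist (bpt 1 z) (bpt 0 z)) := by ring
    _ ≤ K * 1 := by gcongr
    _ = K := mul_one _

lemma Sop_hom (f : UBall V → ℝ) {s : ℝ} (hs : 0 < s) (z : V) : Sop 0 f (s • z) = s * Sop 0 f z := by
  unfold Sop
  have : bpt 0 (s • z) = bpt 0 z := by
    apply Subtype.ext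
    unfold bpt
    simp only [NNReal.coe_zero, zero_add]
    rw [norm_smul, Real.norm_of_nonneg hs.le, smul_smul]
    congr 1
    rw [mul_inv, mul_comm s⁻¹, mul_assoc, inv_mul_cancel₀ hs.ne', mul_one]
  rw [this, norm_smul, Real.norm_of_nonneg hs.le, NNReal.coe_zero]
  ring

lemma Sop_sphere (f : UBall V → ℝ) (w : Metric.sphere (0:V) 1) :
    Sop 0 f (w : V) = f ⟨w, Metric.sphere_subset_closedBall w.2⟩ := by
  have hw : ‖(w:V)‖ = 1 := by simpa using w.2
  unfold Sop bpt
  simp [hw]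

lemma Sop_le (f : UBall V → ℝ) {M : ℝ} (hM : ∀ x, |f x| ≤ M) (z : V) :
    |Sop 1 f z| ≤ M * (1 + ‖z‖) := by
  unfold Sop
  rw [abs_mul, abs_of_nonneg (by positivity), mul_comm, NNReal.coe_one]
  exact mul_le_mul_of_nonneg_right (hM _) (by positivity)

lemma bpt_cont : Continuous (bpt (1 : NNReal) : V → UBall V) := by
  refine Continuous.subtype_mk ?_ _
  refine Continuous.smul (Continuous.inv₀ (by fun_prop) fun z => ?_) continuous_id
  have : (0:ℝ) < ((1:NNReal):ℝ) + ‖z‖ := by rw [NNReal.coe_one]; positivity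
  exact this.ne'

lemma Sop_cont {f : UBall V → ℝ} (hf : Continuous f) : Continuous (Sop 1 f) := by
  unfold Sop
  exact (by fun_prop : Continuous fun z : V => ((1:NNReal):ℝ) + ‖z‖).mul (hf.comp bpt_cont)

/-- every integrand in the class comes from a continuous function on the closed ball -/
lemma memH_repr {Φ : V → ℝ} (h : MemH Φ) : ∃ f : C(UBall V, ℝ), (∀ z, Sop 1 f z = Φ z) ∧
    ∀ w : Metric.sphere (0:V) 1, f ⟨w, Metric.sphere_subset_closedBall w.2⟩ = rrec Φ (w:V) := by
  obtain ⟨hc, -, g, hg⟩ := h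
  have hgc := hasRec_cont hg hc
  have hcont : Continuous (fun x : UBall V => Tfun Φ (x:V)) := by
    rw [continuous_iff_continuousAt]
    intro x
    by_cases hx : ‖(x:V)‖ < 1
    · have heq : (fun x : UBall V => Tfun Φ (x:V)) =ᶠ[𝓝 x] fun x => transf Φ (x:V) := by
        have : ∀ᶠ y : UBall V in 𝓝 x, ‖(y:V)‖ < 1 :=
          (by fun_prop : Continuous fun y : UBall V => ‖(y:V)‖).continuousAt.eventually_lt
            continuousAt_const hx
        filter_upwards [this] with y hy
        simp [Tfun, hy]
      refine ContinuousAt.congr ?_ heq.symm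
      unfold transf
      have h1 : ContinuousAt (fun y : UBall V => 1 - ‖(y:V)‖) x := by fun_prop
      refine h1.mul (hc.continuousAt.comp' ?_)
      exact (h1.inv₀ (by linarith)).smul continuous_subtype_val.continuousAt
    · have hx1 : ‖(x:V)‖ = 1 := le_antisymm (mem_closedBall_zero_iff.1 x.2) (not_lt.1 hx)
      have hTx : Tfun Φ (x:V) = g x := by simp [Tfun, hx, hasRec_rrec hg]
      rw [Metric.continuousAt_iff']
      intro e he
      obtain ⟨s, hs, hev⟩ := Metric.tendstoLocallyUniformly_iff.1 hg (e/2) (by linarith) (x:V)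
      have hv := continuous_subtype_val.continuousAt (x := x)
      have hsn : ∀ᶠ y : UBall V in 𝓝 x, (y:V) ∈ s := hv hs
      have hgn : ∀ᶠ y : UBall V in 𝓝 x, dist (g y) (g x) < e/2 :=
        Metric.continuousAt_iff'.1 ((hgc.comp continuous_subtype_val).continuousAt (x := x)) (e/2)
          (by linarith)
      obtain ⟨T, hT⟩ := eventually_atTop.1 hev
      have hnn : ∀ᶠ y : UBall V in 𝓝 x, 1 - ‖(y:V)‖ < (|T| + 1)⁻¹ := by
        have : Continuous fun y : UBall V => 1 - ‖(y:V)‖ := by fun_prop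
        refine this.continuousAt.eventually_lt continuousAt_const ?_
        rw [hx1, sub_self]; positivity
      filter_upwards [hsn, hgn, hnn] with y hy1 hy2 hy3
      rw [hTx]
      by_cases hy : ‖(y:V)‖ < 1
      · have hpos : 0 < 1 - ‖(y:V)‖ := by linarith
        have hTle : T ≤ (1 - ‖(y:V)‖)⁻¹ := by
          have := (lt_inv_comm₀ hpos (by positivity)).1 hy3
          linarith [le_abs_self T]
        have h1 := hT _ hTle y hy1
        have h2 : Tfun Φ (y:V) = Φ ((1 - ‖(y:V)‖)⁻¹ • (y:V)) / (1 - ‖(y:V)‖)⁻¹ := by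
          simp only [Tfun, hy, if_true, transf]
          rw [div_inv_eq_mul, mul_comm]
        rw [h2]
        have := dist_triangle_left (Φ ((1 - ‖(y:V)‖)⁻¹ • (y:V)) / (1 - ‖(y:V)‖)⁻¹) (g x) (g y)
        linarith
      · have h2 : Tfun Φ (y:V) = g y := by simp [Tfun, hy, hasRec_rrec hg]
        rw [h2]; linarith
  refine ⟨⟨_, hcont⟩, fun z => ?_, fun w => ?_⟩
  · have hz : ‖(bpt 1 z : V)‖ = ‖z‖ / (1 + ‖z‖) := by
      unfold bpt
      simp only [NNReal.coe_one]
      rw [norm_smul, norm_inv, Real.norm_of_nonneg (by positivity), inv_mul_eq_div]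
    have h1 : 0 < 1 + ‖z‖ := by positivity
    have h2 : 1 - ‖(bpt 1 z : V)‖ = (1 + ‖z‖)⁻¹ := by rw [hz]; field_simp; ring
    have h3 : ‖(bpt 1 z : V)‖ < 1 := by
      have := inv_pos.2 h1
      linarith
    have h4 := bpt_smul 1 z
    rw [NNReal.coe_one] at h4
    simp only [Sop, ContinuousMap.coe_mk, Tfun, h3, if_true, transf, h2, inv_inv, NNReal.coe_one, h4]
    rw [← mul_assoc, mul_inv_cancel₀ h1.ne', one_mul]
  · have hw : ‖(w:V)‖ = 1 := by simpa using w.2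
    simp [Tfun, hw]

variable [FiniteDimensional ℝ V]

variable (V) in
instance uball_compact : CompactSpace (UBall V) := by
  have : ProperSpace V := FiniteDimensional.proper_real V
  exact isCompact_iff_compactSpace.1 (isCompact_closedBall _ _)

lemma cm_bdd (f : C(UBall V, ℝ)) : ∀ x, |f x| ≤ ‖f‖₊ := fun x => by
  have := f.norm_coe_le_norm x
  simpa using this

variable (V) in
def lipAlg : Subalgebra ℝ C(UBall V, ℝ) where
  carrier := {f | ∃ K : NNReal, LipschitzWith K f}
  mul_mem' := by
    rintro f g ⟨K, hf⟩ ⟨L, hg⟩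
    refine ⟨‖f‖₊ * L + ‖g‖₊ * K, LipschitzWith.of_dist_le_mul fun x y => ?_⟩
    have h1 := hf.dist_le_mul x y
    have h2 := hg.dist_le_mul x y
    rw [Real.dist_eq] at h1 h2 ⊢
    have e : (f * g) x - (f * g) y = f x * (g x - g y) + g y * (f x - f y) := by
      simp only [ContinuousMap.mul_apply]; ring
    rw [e]
    refine (abs_add_le _ _).trans ?_
    rw [abs_mul, abs_mul]
    have h3 := mul_le_mul (cm_bdd f x) h2 (abs_nonneg _) (NNReal.coe_nonneg _)
    have h4 := mul_le_mul (cm_bdd g y) h1 (abs_nonneg _) (NNReal.coe_nonneg _)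
    push_cast at *
    linarith
  add_mem' := by
    rintro f g ⟨K, hf⟩ ⟨L, hg⟩
    exact ⟨K + L, hf.add hg⟩
  algebraMap_mem' := fun r => ⟨0, LipschitzWith.of_dist_le_mul fun x y => by simp⟩

variable (V) in
lemma lip_dense : ∃ f : ℕ → C(UBall V, ℝ), (∀ i, ∃ K : NNReal, LipschitzWith K (f i)) ∧
    ∀ (g : C(UBall V, ℝ)) (e : ℝ), 0 < e → ∃ i, ‖g - f i‖ < e := by
  have hsep : (lipAlg V).SeparatesPoints := by
    intro x y hxy
    refine ⟨fun z => dist z x, ⟨⟨fun z => dist z x, by fun_prop⟩, ⟨1, ?_⟩, rfl⟩, ?_⟩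
    · exact LipschitzWith.dist_left x
    · simp only [dist_self]; exact (dist_pos.2 (Ne.symm hxy)).ne
  have htop := ContinuousMap.subalgebra_topologicalClosure_eq_top_of_separatesPoints (lipAlg V) hsep
  have hne : Nonempty (lipAlg V) := ⟨0⟩
  refine ⟨fun i => (TopologicalSpace.denseSeq (lipAlg V) i : C(UBall V, ℝ)),
    fun i => (TopologicalSpace.denseSeq (lipAlg V) i).2, fun g e he => ?_⟩
  have hg : g ∈ closure ((lipAlg V : Subalgebra ℝ C(UBall V, ℝ)) : Set C(UBall V, ℝ)) := by
    rw [← Subalgebra.topologicalClosure_coe, htop]; trivial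
  obtain ⟨h, hh, hd⟩ := Metric.mem_closure_iff.1 hg (e/2) (by linarith)
  have hdr := TopologicalSpace.denseRange_denseSeq (lipAlg V)
  obtain ⟨i, hi⟩ := Metric.denseRange_iff.1 hdr ⟨h, hh⟩ (e/2) (by linarith)
  refine ⟨i, ?_⟩
  rw [← dist_eq_norm]
  have := dist_triangle g h (TopologicalSpace.denseSeq (lipAlg V) i : C(UBall V, ℝ))
  rw [Subtype.dist_eq] at hi
  simp only at hi
  linarith

end Integrands

end Part9

section Part10

section P10

lemma convex_of_mid {E : Type*} [NormedAddCommGroup E] [NormedSpace ℝ E] {C : Set E}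
    (hc : IsClosed C) (hm : ∀ x ∈ C, ∀ y ∈ C, (1/2:ℝ) • x + (1/2:ℝ) • y ∈ C) : Convex ℝ C := by
  rw [convex_iff_segment_subset]
  intro x hx y hy
  rw [segment_eq_image_lineMap]
  rintro _ ⟨s, hs, rfl⟩
  by_contra hns
  set L : ℝ → E := fun s => AffineMap.lineMap x y s with hL
  have hLc : Continuous L := AffineMap.lineMap_continuous
  have hLm : ∀ a b : ℝ, (1/2:ℝ) • L a + (1/2:ℝ) • L b = L ((a+b)/2) := by
    intro a b
    simp only [hL, AffineMap.lineMap_apply_module]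
    module
  have hcl : IsClosed (L ⁻¹' C) := hc.preimage hLc
  have c1 : IsCompact (L ⁻¹' C ∩ Set.Icc 0 s) := isCompact_Icc.inter_left hcl
  have c2 : IsCompact (L ⁻¹' C ∩ Set.Icc s 1) := isCompact_Icc.inter_left hcl
  obtain ⟨a, ha, ha'⟩ := c1.exists_isGreatest ⟨0, by simpa [hL] using hx, le_rfl, hs.1⟩
  obtain ⟨b, hb, hb'⟩ := c2.exists_isLeast ⟨1, by simpa [hL] using hy, hs.2, le_rfl⟩
  have hm' : L ((a+b)/2) ∈ C := hLm a b ▸ hm _ ha.1 _ hb.1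
  have has : a ≠ s := fun h => hns (h ▸ ha.1)
  have hbs : b ≠ s := fun h => hns (h ▸ hb.1)
  have has' := lt_of_le_of_ne ha.2.2 has
  have hbs' := lt_of_le_of_ne hb.2.1 hbs.symm
  rcases le_total ((a+b)/2) s with h | h
  · have := ha' ⟨hm', by linarith [ha.2.1, hb.2.1, hs.1], h⟩
    linarith
  · have := hb' ⟨hm', h, by linarith [ha.2.1, hb.2.2, hs.1]⟩
    linarith

variable {n : ℕ} {U V : Type*} [NormedAddCommGroup U] [NormedSpace ℝ U]
  [NormedAddCommGroup V] [NormedSpace ℝ V]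

lemma card_half {n : ℕ} (a : Fin n) :
    ((Finset.univ.filter fun i : Fin n → Fin 2 => i a = 0).card : ℝ) = 2^n / 2 := by
  classical
  have h1 : (Finset.univ.filter fun i : Fin n → Fin 2 => i a = 0).card =
      (Finset.univ.filter fun i : Fin n → Fin 2 => ¬ i a = 0).card := by
    refine Finset.card_bij (fun i _ => Function.update i a 1) ?_ ?_ ?_
    · intro i hi; simp
    · intro i hi j hj h
      simp only [Finset.mem_filter, Finset.mem_univ, true_and] at hi hj
      funext b
      by_cases hb : b = a
      · rw [hb, hi, hj]
      · have := congrFun h b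
        simpa [Function.update_of_ne hb] using this
    · intro j hj
      simp only [Finset.mem_filter, Finset.mem_univ, true_and] at hj
      refine ⟨Function.update j a 0, by simp, ?_⟩
      have : j a = 1 := by omega
      rw [Function.update_idem, ← this, Function.update_eq_self]
  have h2 := Finset.card_filter_add_card_filter_not (s := (Finset.univ : Finset (Fin n → Fin 2)))
    (fun i => i a = 0)
  rw [← h1] at h2
  simp at h2
  have h3 : ((Finset.univ.filter fun i : Fin n → Fin 2 => i a = 0).card : ℝ) +
    (Finset.univ.filter fun i : Fin n → Fin 2 => i a = 0).card = 2^n := by exact_mod_cast h2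
  linarith

lemma mid_tile (hn : 0 < n) (B : (Fin n → ℕ) → (U →L[ℝ] V)) (l : ℕ) {u u' : Dom n → U}
    (hu : CcSmooth (unitCube n) u) (hu' : CcSmooth (unitCube n) u') :
    ∃ v : Dom n → U, CcSmooth (unitCube n) v ∧ ∀ H : V → ℝ, Continuous H →
      ∫ x in unitCube n, H (opApply B l v x) = (1/2) * (∫ x in unitCube n, H (opApply B l u x)) +
        (1/2) * (∫ x in unitCube n, H (opApply B l u' x)) := by
  classical
  have hw : ∀ i : Fin n → Fin 2, CcSmooth (unitCube n) (if i ⟨0, hn⟩ = 0 then u else u') := by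
    intro i; split_ifs <;> assumption
  refine ⟨tileFn 2 l fun i => if i ⟨0, hn⟩ = 0 then u else u', tileFn_cc two_pos l hw, ?_⟩
  intro H hH
  rw [tile_main two_pos B l hw (H := fun _ => H) (hH.comp continuous_snd)]
  rw [← Finset.mul_sum, ← Finset.sum_filter_add_sum_filter_not Finset.univ
    (fun i : Fin n → Fin 2 => i ⟨0, hn⟩ = 0)]
  rw [Finset.sum_congr rfl (g := fun _ => ∫ x in unitCube n, H (opApply B l u x)) (fun i hi => by
    rw [if_pos (Finset.mem_filter.1 hi).2])]
  rw [Finset.sum_congr (s₁ := Finset.univ.filter fun i : Fin n → Fin 2 => ¬ i ⟨0, hn⟩ = 0) rfl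
    (g := fun _ => ∫ x in unitCube n, H (opApply B l u' x)) (fun i hi => by
    rw [if_neg (Finset.mem_filter.1 hi).2])]
  have h0 := card_half (⟨0, hn⟩ : Fin n)
  have h2 := Finset.card_filter_add_card_filter_not (s := (Finset.univ : Finset (Fin n → Fin 2)))
    (fun i => i ⟨0, hn⟩ = 0)
  simp at h2
  have h3 : ((Finset.univ.filter fun i : Fin n → Fin 2 => i ⟨0,hn⟩ = 0).card : ℝ) +
    (Finset.univ.filter fun i : Fin n → Fin 2 => ¬ i ⟨0, hn⟩ = 0).card = 2^n := by exact_mod_cast h2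
  have h4 : ((Finset.univ.filter fun i : Fin n → Fin 2 => ¬ i ⟨0, hn⟩ = 0).card : ℝ) = 2^n/2 := by
    linarith
  rw [Finset.sum_const, Finset.sum_const, nsmul_eq_mul, nsmul_eq_mul, h0, h4]
  have : (2:ℝ)^n ≠ 0 := by positivity
  push_cast
  field_simp

variable [FiniteDimensional ℝ V]

lemma Sop_sum {m : ℕ} (c : NNReal) (f : Fin m → C(UBall V, ℝ)) (a : Fin m → ℝ) (z : V) :
    Sop c (⇑(∑ i, a i • f i)) z = ∑ i, a i * Sop c (f i) z := by
  unfold Sop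
  rw [ContinuousMap.coe_sum, Finset.sum_apply, Finset.mul_sum]
  refine Finset.sum_congr rfl fun i _ => ?_
  simp; ring

/-- finite-dimensional separation -/
lemma approx_fin (hn : 0 < n) (B : (Fin n → ℕ) → (U →L[ℝ] V)) (l : ℕ) (z : V)
    (T : C(UBall V, ℝ) →ₗ[ℝ] ℝ)
    (hT : ∀ g : C(UBall V, ℝ), (∃ K : NNReal, LipschitzWith K g) → ∀ r : ℝ,
      (∀ u : Dom n → U, CcSmooth (unitCube n) u →
        r ≤ ∫ x in unitCube n, Sop 1 g (z + opApply B l u x)) → r ≤ T g)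
    {m : ℕ} (f : Fin m → C(UBall V, ℝ)) (hf : ∀ i, ∃ K : NNReal, LipschitzWith K (f i))
    {e : ℝ} (he : 0 < e) :
    ∃ u : Dom n → U, CcSmooth (unitCube n) u ∧
      ∀ i, |(∫ x in unitCube n, Sop 1 (f i) (z + opApply B l u x)) - T (f i)| < e := by
  set S : Set (Fin m → ℝ) := {y | ∃ u : Dom n → U, CcSmooth (unitCube n) u ∧
    y = fun i => ∫ x in unitCube n, Sop 1 (f i) (z + opApply B l u x)} with hS
  have hmid : ∀ x ∈ S, ∀ y ∈ S, (1/2:ℝ) • x + (1/2:ℝ) • y ∈ S := by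
    rintro _ ⟨u, hu, rfl⟩ _ ⟨u', hu', rfl⟩
    obtain ⟨v, hv, h⟩ := mid_tile hn B l hu hu'
    refine ⟨v, hv, ?_⟩
    funext i
    have := h (fun y => Sop 1 (f i) (z + y))
      ((Sop_cont (f i).continuous).comp (by fun_prop))
    simp only [Pi.add_apply, Pi.smul_apply, smul_eq_mul]
    exact this.symm
  have hconv : Convex ℝ (closure S) := by
    refine convex_of_mid isClosed_closure fun x hx y hy => ?_
    exact map_mem_closure₂ (f := fun x y : Fin m → ℝ => (1/2:ℝ) • x + (1/2:ℝ) • y) (by fun_prop) hx hy hmid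
  by_cases hmem : (fun i => T (f i)) ∈ closure S
  · obtain ⟨_, ⟨u, hu, rfl⟩, hd⟩ := Metric.mem_closure_iff.1 hmem e he
    refine ⟨u, hu, fun i => ?_⟩
    have := (dist_pi_lt_iff he).1 hd i
    rwa [dist_comm, Real.dist_eq] at this
  · exfalso
    obtain ⟨φ, r, h1, h2⟩ := geometric_hahn_banach_point_closed hconv isClosed_closure hmem
    set a : Fin m → ℝ := fun i => φ (Pi.single i 1) with ha
    have hφ : ∀ y : Fin m → ℝ, φ y = ∑ i, a i * y i := by
      intro y
      conv_lhs => rw [← Finset.univ_sum_single y]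
      rw [map_sum]
      refine Finset.sum_congr rfl fun i _ => ?_
      have : Pi.single i (y i) = y i • (Pi.single i 1 : Fin m → ℝ) := by
        rw [← Pi.single_smul]; simp
      rw [this, map_smul, smul_eq_mul, mul_comm]
    have hlip : ∃ K : NNReal, LipschitzWith K (⇑(∑ i, a i • f i)) :=
      (lipAlg V).toSubmodule.sum_mem (t := Finset.univ) (f := fun i => a i • f i)
        fun i _ => (lipAlg V).toSubmodule.smul_mem (a i) (hf i)
    have h3 := hT (∑ i, a i • f i) hlip r fun u hu => by
      have := h2 _ (subset_closure ⟨u, hu, rfl⟩)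
      rw [hφ] at this
      refine this.le.trans_eq ?_
      simp only [Sop_sum]
      rw [integral_finset_sum]
      · refine Finset.sum_congr rfl fun i _ => ?_
        rw [integral_const_mul]
      · intro i _
        exact (int_cont_sub (Sop_cont (f i).continuous) z (cc_op_cont hu)).const_mul (a i)
    rw [hφ] at h1
    rw [map_sum] at h3
    simp only [map_smul, smul_eq_mul] at h3
    linarith

end P10

end Part10

section Part11

section P11

section a
variable {V : Type*} [NormedAddCommGroup V] [NormedSpace ℝ V]

lemma hasRec_of_hom {F G : V → ℝ} {C : ℝ} (hC : ∀ z, |F z - G z| ≤ C)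
    (hG : ∀ s : ℝ, 0 < s → ∀ z, G (s • z) = s * G z) : HasRec F G := by
  refine TendstoUniformly.tendstoLocallyUniformly ?_
  rw [Metric.tendstoUniformly_iff]
  intro e he
  filter_upwards [eventually_gt_atTop 0, eventually_gt_atTop (C / e)] with s hs hs2 z
  rw [dist_comm, Real.dist_eq]
  have : F (s • z) / s - G z = (F (s • z) - G (s • z)) / s := by
    rw [hG s hs]; field_simp
  rw [this, abs_div, abs_of_pos hs, div_lt_iff₀ hs]
  rw [div_lt_iff₀ he] at hs2
  linarith [hC (s • z)]

lemma lip_growth {F : V → ℝ} {K : NNReal} (hF : LipschitzWith K F) (z : V) :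
    |F z| ≤ (|F 0| + K) * (1 + ‖z‖) := by
  have h := hF.dist_le_mul z 0
  rw [Real.dist_eq, dist_zero_right] at h
  have h1 : |F z| ≤ |F 0| + |F z - F 0| := by
    have := abs_add_le (F 0) (F z - F 0)
    simpa using this
  have := abs_nonneg (F 0)
  have := norm_nonneg z
  have := K.2
  nlinarith [mul_nonneg (abs_nonneg (F 0)) (norm_nonneg z), NNReal.coe_nonneg K]

lemma memH_of {F G : V → ℝ} {C : ℝ} {K : NNReal} (hF : LipschitzWith K F)
    (hC : ∀ z, |F z - G z| ≤ C)
    (hG : ∀ s : ℝ, 0 < s → ∀ z, G (s • z) = s * G z) : MemH F :=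
  ⟨hF.continuous, ⟨_, lip_growth hF⟩, G, hasRec_of_hom hC hG⟩

variable [MeasurableSpace V] [BorelSpace V] [SecondCountableTopology V]

lemma growth_int {nu0 : Measure V} [IsProbabilityMeasure nu0]
    (hmom : Integrable (fun v : V => ‖v‖) nu0) {F : V → ℝ} (hF : Continuous F) {c : ℝ}
    (h : ∀ z, |F z| ≤ c * (1 + ‖z‖)) : Integrable F nu0 := by
  refine Integrable.mono' (((integrable_const (1:ℝ)).add hmom).const_mul c)
    hF.aestronglyMeasurable (Eventually.of_forall fun z => ?_)
  rw [Real.norm_eq_abs]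
  exact h z

lemma sphere_int [FiniteDimensional ℝ V] {nuInf : Measure (Metric.sphere (0:V) 1)} [IsFiniteMeasure nuInf]
    {g : Metric.sphere (0:V) 1 → ℝ} (hg : Continuous g) : Integrable g nuInf := by
  have : ProperSpace V := FiniteDimensional.proper_real V
  have : CompactSpace (Metric.sphere (0:V) 1) := inferInstance
  exact hg.integrable_of_hasCompactSupport (HasCompactSupport.of_compactSpace g)

/-- the target functional -/
def tgt [FiniteDimensional ℝ V] (nu0 : Measure V) [IsProbabilityMeasure nu0]
    (hmom : Integrable (fun v : V => ‖v‖) nu0)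
    (nuInf : Measure (Metric.sphere (0:V) 1)) [IsFiniteMeasure nuInf] (t : ℝ) :
    C(UBall V, ℝ) →ₗ[ℝ] ℝ where
  toFun g := (∫ v, Sop 1 g v ∂nu0) +
    t * ∫ w, g ⟨w, Metric.sphere_subset_closedBall w.2⟩ ∂nuInf
  map_add' f g := by
    have h1 : ∀ v, Sop 1 (⇑(f + g)) v = Sop 1 f v + Sop 1 g v := by
      intro v; unfold Sop; simp; ring
    have i1 : ∀ f : C(UBall V, ℝ), Integrable (fun v => Sop 1 f v) nu0 := fun f =>
      growth_int hmom (Sop_cont f.continuous) (Sop_le f (cm_bdd f))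
    have i2 : ∀ f : C(UBall V, ℝ), Integrable (fun w : Metric.sphere (0:V) 1 =>
      f ⟨w, Metric.sphere_subset_closedBall w.2⟩) nuInf := fun f =>
        sphere_int (f.continuous.comp (by fun_prop))
    simp only [h1, ContinuousMap.add_apply]
    rw [integral_add (i1 f) (i1 g), integral_add (i2 f) (i2 g)]
    ring
  map_smul' c f := by
    have h1 : ∀ v, Sop 1 (⇑(c • f)) v = c * Sop 1 f v := by
      intro v; unfold Sop; simp; ring
    simp only [h1, ContinuousMap.smul_apply, smul_eq_mul, RingHom.id_apply, integral_const_mul]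
    ring
end a

variable {n k l : ℕ} {V W U : Type*} [NormedAddCommGroup V] [InnerProductSpace ℝ V]
    [FiniteDimensional ℝ V] [MeasurableSpace V] [BorelSpace V]
    [NormedAddCommGroup W] [InnerProductSpace ℝ W] [FiniteDimensional ℝ W]
    [NormedAddCommGroup U] [InnerProductSpace ℝ U] [FiniteDimensional ℝ U]
    {A : (Fin n → ℕ) → (V →L[ℝ] W)} {B : (Fin n → ℕ) → (U →L[ℝ] V)}

lemma Qbdd_of_near {Φ Ψ : V → ℝ} {C : ℝ} (hΦc : Continuous Φ) (hΨc : Continuous Ψ)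
    (h : ∀ z, |Φ z - Ψ z| ≤ C) (hb : QBdd B l Φ) : QBdd B l Ψ := by
  obtain ⟨z, r, hr⟩ := hb
  refine ⟨z, r - C, fun u hu => ?_⟩
  have h1 := hr u hu
  have h2 : ∫ x in unitCube n, Φ (z + opApply B l u x) ≤
      ∫ x in unitCube n, (Ψ (z + opApply B l u x) + C) :=
    integral_mono (int_cont_sub hΦc z (cc_op_cont hu))
      ((int_cont_sub hΨc z (cc_op_cont hu)).add (integrable_const C))
      fun x => by linarith [(abs_le.1 (h (z + opApply B l u x))).2]
  rw [integral_add (int_cont_sub hΨc z (cc_op_cont hu)) (integrable_const C)] at h2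
  simp at h2
  linarith

lemma Q_mono_near {Φ Ψ : V → ℝ} {C : ℝ} {K : NNReal} (hΦ : LipschitzWith K Φ) (hΨc : Continuous Ψ)
    (h : ∀ z, |Φ z - Ψ z| ≤ C) (hb : QBdd B l Φ) (y : V) :
    Qenv B l Φ y ≤ Qenv B l Ψ y + C := by
  rw [← sub_le_iff_le_add]
  refine Q_ge y fun u hu => ?_
  have h1 := Q_le hΦ hb y hu
  have h2 : ∫ x in unitCube n, Φ (y + opApply B l u x) ≤
      ∫ x in unitCube n, (Ψ (y + opApply B l u x) + C) :=
    integral_mono (int_cont_sub hΦ.continuous y (cc_op_cont hu))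
      ((int_cont_sub hΨc y (cc_op_cont hu)).add (integrable_const C))
      fun x => by linarith [(abs_le.1 (h (y + opApply B l u x))).2]
  rw [integral_add (int_cont_sub hΨc y (cc_op_cont hu)) (integrable_const C)] at h2
  simp at h2
  linarith

lemma Q_hom {Ψ : V → ℝ} {K : NNReal} (hΨ : LipschitzWith K Ψ) (hb : QBdd B l Ψ)
    (hh : ∀ s : ℝ, 0 < s → ∀ z, Ψ (s • z) = s * Ψ z) :
    ∀ s : ℝ, 0 < s → ∀ z, Qenv B l Ψ (s • z) = s * Qenv B l Ψ z := by
  have key : ∀ s : ℝ, 0 < s → ∀ z, Qenv B l Ψ (s • z) ≤ s * Qenv B l Ψ z := by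
    intro s hs z
    have : s⁻¹ * Qenv B l Ψ (s • z) ≤ Qenv B l Ψ z := by
      refine Q_ge z fun u hu => ?_
      have h1 := Q_le hΨ hb (s • z) (cc_smul s hu)
      have h2 : ∀ x, Ψ (s • z + opApply B l (fun x => s • u x) x) =
          s * Ψ (z + opApply B l u x) := by
        intro x
        rw [← hh s hs, opApply_smul B l s hu.1, smul_add]
      simp only [h2] at h1
      rw [integral_const_mul] at h1
      rw [inv_mul_le_iff₀ hs]
      exact h1
    rwa [inv_mul_le_iff₀ hs] at this
  intro s hs z
  refine le_antisymm (key s hs z) ?_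
  have := key s⁻¹ (inv_pos.2 hs) (s • z)
  rw [smul_smul, inv_mul_cancel₀ hs.ne', one_smul, le_inv_mul_iff₀ hs] at this
  exact this

lemma dual_ineq (hexact : ExactPotential A k B l) {t : ℝ} (ht : 0 < t)
    (nu0 : Measure V) (nuInf : Measure (Metric.sphere (0:V) 1))
    [IsProbabilityMeasure nu0] (hmom : Integrable (fun v : V => ‖v‖) nu0)
    [IsProbabilityMeasure nuInf]
    (hJensen : ∀ F : V → ℝ, MemH F → AQuasiconvex A k F →
      F (∫ v, v ∂nu0) ≤ ∫ v, F v ∂nu0)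
    (hG : ∀ F : V → ℝ, MemH F → AQuasiconvex A k F →
        suppFn (derivSet F) (∫ w, (w : V) ∂nuInf) ≤ ∫ w, rrec F (w : V) ∂nuInf)
    (g : C(UBall V, ℝ)) (hg : ∃ K : NNReal, LipschitzWith K g) (r : ℝ)
    (hr : ∀ u : Dom n → U, CcSmooth (unitCube n) u →
        r ≤ ∫ x in unitCube n, Sop 1 g
          (((∫ v, v ∂nu0) + t • ∫ w, (w : V) ∂nuInf) + opApply B l u x)) :
    r ≤ tgt nu0 hmom nuInf t g := by
  obtain ⟨K, hK⟩ := hg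
  have l1 := Sop_lip 1 hK (cm_bdd g)
  have l0 := Sop_lip 0 hK (cm_bdd g)
  have hd := Sop_diff hK (cm_bdd g)
  have hd' : ∀ z : V, |Sop 0 g z - Sop 1 g z| ≤ ‖g‖₊ + K := fun z => by
    rw [abs_sub_comm]; exact hd z
  have hb1 : QBdd B l (Sop 1 g) := ⟨_, r, hr⟩
  have hb0 : QBdd B l (Sop 0 g) := Qbdd_of_near l1.continuous l0.continuous hd hb1
  set F := Qenv B l (Sop 1 g) with hF
  set G := Qenv B l (Sop 0 g) with hGd
  have hFG : ∀ z, |F z - G z| ≤ ‖g‖₊ + K := fun z => by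
    rw [abs_le]
    have a1 := Q_mono_near l1 l0.continuous hd hb1 z
    have a2 := Q_mono_near l0 l1.continuous hd' hb0 z
    constructor <;> linarith
  have hhom := Q_hom l0 hb0 (fun s hs z => Sop_hom g hs z)
  have hFl := Q_lip l1 hb1
  have hGl := Q_lip l0 hb0
  have hFH : MemH F := memH_of hFl hFG hhom
  have hrec : ∀ w, rrec F w = G w := hasRec_rrec (hasRec_of_hom hFG hhom)
  have hqc : AQuasiconvex A k F := Q_qc hexact l1 hb1
  have s1 : r ≤ F ((∫ v, v ∂nu0) + t • ∫ w, (w : V) ∂nuInf) := Q_ge _ hr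
  have s2 := lip_increment hFl (∫ v, v ∂nu0) (∫ w, (w : V) ∂nuInf) ht.le
  have s3 := hJensen F hFH hqc
  have s4 := hG F hFH hqc
  have s5 : ∫ v, F v ∂nu0 ≤ ∫ v, Sop 1 g v ∂nu0 :=
    integral_mono (growth_int hmom hFl.continuous (lip_growth hFl))
      (growth_int hmom (Sop_cont g.continuous) (Sop_le g (cm_bdd g)))
      fun v => Q_le_self l1 hb1 v
  have s6 : ∫ w, rrec F (w:V) ∂nuInf ≤
      ∫ w, g ⟨w, Metric.sphere_subset_closedBall w.2⟩ ∂nuInf := by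
    simp only [hrec]
    refine integral_mono (sphere_int (hGl.continuous.comp continuous_subtype_val))
      (sphere_int (g.continuous.comp (by fun_prop))) fun w => ?_
    have := Q_le_self l0 hb0 (w:V)
    rwa [Sop_sphere] at this
  have s7 := mul_le_mul_of_nonneg_left (s4.trans s6) ht.le
  show r ≤ (∫ v, Sop 1 g v ∂nu0) +
    t * ∫ w, g ⟨w, Metric.sphere_subset_closedBall w.2⟩ ∂nuInf
  linarith

end P11

end Part11

section Part12

section P12

lemma conv_dense {X : Type*} [TopologicalSpace X] [CompactSpace X] {f : ℕ → C(X, ℝ)}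
    (hf : ∀ (g : C(X, ℝ)) (e : ℝ), 0 < e → ∃ i, ‖g - f i‖ < e)
    {J : ℕ → C(X, ℝ) →ₗ[ℝ] ℝ} {T : C(X, ℝ) →ₗ[ℝ] ℝ}
    (hJ : ∀ j g h, (∀ x, g x ≤ h x) → J j g ≤ J j h) (hT : ∀ g h, (∀ x, g x ≤ h x) → T g ≤ T h)
    (hlim : ∀ i, Tendsto (fun j => J j (f i)) atTop (𝓝 (T (f i)))) (g : C(X, ℝ)) :
    Tendsto (fun j => J j g) atTop (𝓝 (T g)) := by
  have hpt : ∀ (a b : C(X, ℝ)) x, |a x - b x| ≤ ‖a - b‖ := fun a b x => by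
    have := (a - b).norm_coe_le_norm x
    simpa using this
  have key : ∀ (L : C(X, ℝ) →ₗ[ℝ] ℝ), (∀ g h, (∀ x, g x ≤ h x) → L g ≤ L h) →
      ∀ a b : C(X, ℝ), |L a - L b| ≤ ‖a - b‖ * L 1 := by
    intro L hL a b
    have h1 : L (a - b) ≤ L (‖a - b‖ • (1 : C(X, ℝ))) := hL _ _ fun x => by
      simpa using (abs_le.1 (hpt a b x)).2
    have h2 : L ((-‖a - b‖) • (1 : C(X, ℝ))) ≤ L (a - b) := hL _ _ fun x => by
      simpa using (abs_le.1 (hpt a b x)).1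
    rw [map_smul, map_sub, smul_eq_mul] at h1 h2
    rw [abs_le]; constructor <;> linarith
  obtain ⟨i0, hi0⟩ := hf 1 (1/2) (by norm_num)
  have one_le : ∀ (L : C(X, ℝ) →ₗ[ℝ] ℝ), (∀ g h, (∀ x, g x ≤ h x) → L g ≤ L h) →
      L 1 ≤ 2 * L (f i0) := by
    intro L hL
    have := hL 1 ((2:ℝ) • f i0) fun x => by
      have := (abs_le.1 ((hpt 1 (f i0) x).trans hi0.le)).2
      simp at this ⊢
      linarith
    rwa [map_smul, smul_eq_mul] at this
  have hT1 := one_le T hT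
  have hT0 : 0 ≤ T 1 := by
    have := hT 0 1 fun x => by simp
    rwa [map_zero] at this
  set M := 2 * (T (f i0) + 1) with hM
  have hMpos : 0 < M := by linarith
  rw [Metric.tendsto_atTop']
  intro e he
  obtain ⟨i, hi⟩ := hf g (e / (3 * M)) (by positivity)
  have e1 : ∀ᶠ j in atTop, J j (f i0) < T (f i0) + 1 :=
    (hlim i0).eventually_lt_const (by linarith)
  have e2 : ∀ᶠ j in atTop, dist (J j (f i)) (T (f i)) < e / 3 :=
    (hlim i) (Metric.ball_mem_nhds _ (by positivity))
  obtain ⟨N, hN⟩ := eventually_atTop.1 (e1.and e2)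
  refine ⟨N, fun j hj => ?_⟩
  obtain ⟨a1, a2⟩ := hN j hj.le
  have b1 := key (J j) (hJ j) g (f i)
  have b2 := key T hT g (f i)
  have b3 := one_le (J j) (hJ j)
  have hJ0 : 0 ≤ J j 1 := by
    have := hJ j 0 1 fun x => by simp
    rwa [map_zero] at this
  have c1 : ‖g - f i‖ * J j 1 ≤ e / (3 * M) * M :=
    mul_le_mul hi.le (by linarith) hJ0 (by positivity)
  have c2 : ‖g - f i‖ * T 1 ≤ e / (3 * M) * M :=
    mul_le_mul hi.le (by linarith) hT0 (by positivity)
  have c3 : e / (3 * M) * M = e / 3 := by field_simp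
  rw [Real.dist_eq] at a2 ⊢
  rw [abs_le] at b1 b2
  rw [abs_lt] at a2 ⊢
  constructor <;> linarith

section a
variable {n : ℕ} {U V : Type*} [NormedAddCommGroup U] [NormedSpace ℝ U]
  [NormedAddCommGroup V] [NormedSpace ℝ V] [FiniteDimensional ℝ V]

/-- shrink the Sobolev norm while preserving the integrals -/
lemma shrink (B : (Fin n → ℕ) → (U →L[ℝ] V)) (l : ℕ) {u : Dom n → U}
    (hu : CcSmooth (unitCube n) u) {e : ℝ} (he : 0 < e) :
    ∃ v : Dom n → U, CcSmooth (unitCube n) v ∧ sobNorm l v < e ∧ ∀ H : V → ℝ, Continuous H →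
      ∫ x in unitCube n, H (opApply B l v x) = ∫ x in unitCube n, H (opApply B l u x) := by
  obtain ⟨N, hN⟩ := exists_nat_gt (sobNorm l u / e)
  have hs : 0 ≤ sobNorm l u := Finset.sum_nonneg fun j _ => integral_nonneg fun x => norm_nonneg _
  have hN0 : (0:ℝ) < N := lt_of_le_of_lt (by positivity) hN
  have hN1 : 0 < N := by exact_mod_cast hN0
  refine ⟨tileFn N l fun _ => u, tileFn_cc hN1 l fun _ => hu, ?_, ?_⟩
  · refine (tileFn_sob hN1 l hu).trans_lt ?_
    rw [inv_mul_lt_iff₀ hN0]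
    rw [div_lt_iff₀ he] at hN
    linarith
  · intro H hH
    rw [tile_main hN1 B l (fun _ => hu) (H := fun _ => H) (hH.comp continuous_snd)]
    simp
    field_simp

def Jfun (B : (Fin n → ℕ) → (U →L[ℝ] V)) (l : ℕ) (z : V) {u : Dom n → U}
    (hu : CcSmooth (unitCube n) u) : C(UBall V, ℝ) →ₗ[ℝ] ℝ where
  toFun g := ∫ x in unitCube n, Sop 1 g (z + opApply B l u x)
  map_add' f g := by
    have h1 : ∀ v, Sop 1 (⇑(f + g)) v = Sop 1 f v + Sop 1 g v := by
      intro v; unfold Sop; simp; ring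
    simp only [h1]
    exact integral_add (int_cont_sub (Sop_cont f.continuous) z (cc_op_cont hu))
      (int_cont_sub (Sop_cont g.continuous) z (cc_op_cont hu))
  map_smul' c f := by
    have h1 : ∀ v, Sop 1 (⇑(c • f)) v = c * Sop 1 f v := by
      intro v; unfold Sop; simp; ring
    simp only [h1, smul_eq_mul, RingHom.id_apply, integral_const_mul]

lemma Sop_mono {f g : UBall V → ℝ} (h : ∀ x, f x ≤ g x) (z : V) : Sop 1 f z ≤ Sop 1 g z :=
  mul_le_mul_of_nonneg_left (h _) (by positivity)
end a

variable {n k l : ℕ} {V W U : Type*} [NormedAddCommGroup V] [InnerProductSpace ℝ V]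
    [FiniteDimensional ℝ V] [MeasurableSpace V] [BorelSpace V]
    [NormedAddCommGroup W] [InnerProductSpace ℝ W] [FiniteDimensional ℝ W]
    [NormedAddCommGroup U] [InnerProductSpace ℝ U] [FiniteDimensional ℝ U]
    {A : (Fin n → ℕ) → (V →L[ℝ] W)} {B : (Fin n → ℕ) → (U →L[ℝ] V)}

lemma suff_dir (hn : 0 < n) (hexact : ExactPotential A k B l) {t : ℝ} (ht : 0 < t)
    (nu0 : Measure V) (nuInf : Measure (Metric.sphere (0:V) 1))
    [IsProbabilityMeasure nu0] (hmom : Integrable (fun v : V => ‖v‖) nu0)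
    [IsProbabilityMeasure nuInf]
    (hJensen : ∀ F : V → ℝ, MemH F → AQuasiconvex A k F →
      F (∫ v, v ∂nu0) ≤ ∫ v, F v ∂nu0)
    (hG : ∀ F : V → ℝ, MemH F → AQuasiconvex A k F →
        suppFn (derivSet F) (∫ w, (w : V) ∂nuInf) ≤ ∫ w, rrec F (w : V) ∂nuInf) :
    memY B l ((∫ v, v ∂nu0) + t • ∫ w, (w : V) ∂nuInf) nu0 (ENNReal.ofReal t • nuInf) := by
  set z := (∫ v, v ∂nu0) + t • ∫ w, (w : V) ∂nuInf with hz
  obtain ⟨f, hfl, hfd⟩ := lip_dense V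
  set T := tgt nu0 hmom nuInf t with hT
  have hstep : ∀ j : ℕ, ∃ u : Dom n → U, CcSmooth (unitCube n) u ∧ sobNorm l u < 1 / ((j:ℝ) + 1) ∧
      ∀ i, i < j → |(∫ x in unitCube n, Sop 1 (f i) (z + opApply B l u x)) - T (f i)|
        < 1 / ((j:ℝ) + 1) := by
    intro j
    have hj : 0 < 1 / ((j:ℝ) + 1) := Nat.one_div_pos_of_nat
    obtain ⟨u, hu, h⟩ := approx_fin hn B l z T
      (dual_ineq hexact ht nu0 nuInf hmom hJensen hG) (fun i : Fin j => f i) (fun i => hfl i) hj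
    obtain ⟨v, hv, hs, h2⟩ := shrink B l hu hj
    refine ⟨v, hv, hs, fun i hi => ?_⟩
    rw [h2 (fun y => Sop 1 (f i) (z + y)) ((Sop_cont (f i).continuous).comp (by fun_prop))]
    exact h ⟨i, hi⟩
  choose u hu hsob hint using hstep
  have h0 : Tendsto (fun j : ℕ => 1 / ((j:ℝ) + 1)) atTop (𝓝 0) :=
    tendsto_one_div_add_atTop_nhds_zero_nat
  refine ⟨u, hu, ?_, fun Φ hΦ => ?_⟩
  · refine squeeze_zero (fun j => ?_) (fun j => (hsob j).le) h0
    exact Finset.sum_nonneg fun j _ => integral_nonneg fun x => norm_nonneg _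
  · obtain ⟨g, hg1, hg2⟩ := memH_repr hΦ
    have := conv_dense hfd (J := fun j => Jfun B l z (hu j)) (T := T) ?_ ?_ ?_ g
    · have e1 : T g = (∫ v, Φ v ∂nu0) + ∫ w, rrec Φ (w : V) ∂(ENNReal.ofReal t • nuInf) := by
        rw [integral_smul_measure, ENNReal.toReal_ofReal ht.le, smul_eq_mul]
        show (∫ v, Sop 1 g v ∂nu0) +
          t * ∫ w, g ⟨w, Metric.sphere_subset_closedBall w.2⟩ ∂nuInf = _
        simp only [hg1, hg2]
      rw [← e1]
      refine this.congr fun j => ?_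
      show ∫ x in unitCube n, Sop 1 g (z + opApply B l (u j) x) = _
      simp only [hg1]
    · intro j a b hab
      exact integral_mono (int_cont_sub (Sop_cont a.continuous) z (cc_op_cont (hu j)))
        (int_cont_sub (Sop_cont b.continuous) z (cc_op_cont (hu j))) fun x => Sop_mono hab _
    · intro a b hab
      refine add_le_add ?_ (mul_le_mul_of_nonneg_left ?_ ht.le)
      · exact integral_mono (growth_int hmom (Sop_cont a.continuous) (Sop_le a (cm_bdd a)))
          (growth_int hmom (Sop_cont b.continuous) (Sop_le b (cm_bdd b))) fun v => Sop_mono hab v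
      · exact integral_mono (sphere_int (a.continuous.comp (by fun_prop)))
          (sphere_int (b.continuous.comp (by fun_prop))) fun w => hab _
    · intro i
      rw [tendsto_iff_dist_tendsto_zero]
      refine squeeze_zero' (Eventually.of_forall fun j => dist_nonneg) ?_ h0
      filter_upwards [eventually_gt_atTop i] with j hj
      rw [Real.dist_eq]
      exact (hint j i hj).le

end P12

end Part12

section Part13

section P13

section a
variable {n k l : ℕ} {V W U : Type*} [NormedAddCommGroup V] [NormedSpace ℝ V]
    [NormedAddCommGroup W] [InnerProductSpace ℝ W]
    [NormedAddCommGroup U] [NormedSpace ℝ U]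
    {A : (Fin n → ℕ) → (V →L[ℝ] W)} {B : (Fin n → ℕ) → (U →L[ℝ] V)}

lemma symb_zero (hk : 0 < k) : opSymbol A k 0 = 0 := by
  unfold opSymbol
  refine Finset.sum_eq_zero fun α hα => ?_
  rw [mem_degSet] at hα
  obtain ⟨i, hi⟩ : ∃ i, α i ≠ 0 := by
    by_contra h
    push Not at h
    simp [h] at hα
    omega
  rw [Finset.prod_eq_zero (Finset.mem_univ i) (by simp [hi]), zero_smul]

lemma coeff_zero (hk : 0 < k) (hex : ExactPotential A k B l) (γ : Fin n → ℕ) (b : U) :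
    ∑ p ∈ (degSet n k ×ˢ degSet n l).filter (fun p => p.1 + p.2 = γ), A p.1 (B p.2 b) = 0 := by
  classical
  refine ext_inner_left ℝ fun w => ?_
  rw [inner_zero_right, inner_sum]
  set P : MvPolynomial (Fin n) ℝ := ∑ p ∈ degSet n k ×ˢ degSet n l,
    MvPolynomial.monomial (Finsupp.equivFunOnFinite.symm (p.1 + p.2))
      (inner ℝ w (A p.1 (B p.2 b))) with hP
  have hP0 : P = 0 := by
    apply MvPolynomial.funext
    intro ξ
    rw [map_zero, hP, map_sum]
    have hsym : opSymbol A k ξ (opSymbol B l ξ b) = 0 := by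
      by_cases hξ : ξ = 0
      · rw [hξ, symb_zero hk]; rfl
      · have : opSymbol B l ξ b ∈ LinearMap.ker (opSymbol A k ξ : V →ₗ[ℝ] W) := by
          rw [hex ξ hξ]; exact ⟨b, rfl⟩
        exact this
    have h2 : (inner ℝ w (opSymbol A k ξ (opSymbol B l ξ b)) : ℝ) = 0 := by
      rw [hsym, inner_zero_right]
    rw [← h2]
    unfold opSymbol
    simp only [ContinuousLinearMap.sum_apply, ContinuousLinearMap.smul_apply, map_sum, map_smul,
      Finset.smul_sum, inner_sum, inner_smul_right]
    rw [Finset.sum_product, Finset.sum_comm]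
    refine Finset.sum_congr rfl fun β _ => ?_
    refine Finset.sum_congr rfl fun α _ => ?_
    rw [MvPolynomial.eval_monomial, Finsupp.prod_fintype _ _ (by simp)]
    simp only [Finsupp.equivFunOnFinite_symm_apply_apply, Pi.add_apply, pow_add, Finset.prod_mul_distrib]
    ring
  have h3 : MvPolynomial.coeff (Finsupp.equivFunOnFinite.symm γ) P = 0 := by rw [hP0]; simp
  rw [hP, MvPolynomial.coeff_sum] at h3
  simp only [MvPolynomial.coeff_monomial, EmbeddingLike.apply_eq_iff_eq] at h3
  rw [← h3, Finset.sum_filter]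

lemma op_op (hk : 0 < k) (hex : ExactPotential A k B l) {u : Dom n → U}
    (hu : ContDiff ℝ (⊤ : ℕ∞) u) (x : Dom n) : opApply A k (opApply B l u) x = 0 := by
  classical
  have h1 : ∀ α, mderiv α (opApply B l u) x = ∑ β ∈ degSet n l, B β (mderiv (α + β) u x) := by
    intro α
    have hsm : ∀ β, ContDiff ℝ (⊤ : ℕ∞) (mderiv β u) := fun β => by
      rw [mderiv_eq_Ddir]; exact Ddir_smooth _ hu
    have hs : ∀ s : Finset (Fin n → ℕ), mderiv α (fun x => ∑ β ∈ s, B β (mderiv β u x)) =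
        fun x => ∑ β ∈ s, B β (mderiv (α + β) u x) := by
      intro s
      induction s using Finset.induction_on with
      | empty => simp only [Finset.sum_empty]; rw [mderiv_eq_Ddir]; exact funext fun x => by rw [Ddir_zero]
      | insert β s hβ ih =>
        simp only [Finset.sum_insert hβ]
        have q1 : ∀ β, ContDiff ℝ (⊤ : ℕ∞) (fun x => B β (mderiv β u x)) :=
          fun β => (B β).contDiff.comp (hsm β)
        rw [mderiv_eq_Ddir, Ddir_add _ (q1 β)
          (ContDiff.sum fun β _ => q1 β), Ddir_clm _ _ (hsm β),
          ← mderiv_eq_Ddir, mderiv_mderiv _ _ hu, ← mderiv_eq_Ddir, ih]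
    exact congrFun (hs _) x
  unfold opApply at h1 ⊢
  simp only [h1, map_sum]
  rw [← Finset.sum_product' (f := fun α β => A α (B β (mderiv (α + β) u x)))]
  rw [← Finset.sum_fiberwise_of_maps_to (t := (degSet n k ×ˢ degSet n l).image fun p => p.1 + p.2)
    (g := fun p => p.1 + p.2) (fun p hp => Finset.mem_image_of_mem _ hp)]
  refine Finset.sum_eq_zero fun γ _ => ?_
  rw [← coeff_zero hk hex γ (mderiv γ u x)]
  refine Finset.sum_congr rfl fun p hp => ?_
  rw [(Finset.mem_filter.1 hp).2]

end a

section b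
variable {n l : ℕ} {V U : Type*} [NormedAddCommGroup V] [NormedSpace ℝ V]
    [NormedAddCommGroup U] [NormedSpace ℝ U] 

def rd (x : Dom n) : Fin n → ℤ := fun i => round (x i)

def perz (u : Dom n → U) (x : Dom n) : U := u (x - fun i => ((rd x i : ℤ) : ℝ))

lemma rd_eq {x : Dom n} {m : Fin n → ℤ} (h : (x - fun i => (m i : ℝ)) ∈ unitCube n) : rd x = m := by
  rw [mem_cube_iff] at h
  funext i
  have := h i
  simp only [Pi.sub_apply] at this
  rw [abs_lt] at this
  unfold rd
  rw [round_eq, Int.floor_eq_iff]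
  constructor <;> linarith

lemma perz_periodic (u : Dom n → U) : ZPeriodic (perz u) := by
  intro x m
  unfold perz rd
  congr 1
  funext i
  simp only [Pi.sub_apply, Pi.add_apply, round_add_intCast]
  push_cast; ring

lemma perz_local {u : Dom n → U} (hu : CcSmooth (unitCube n) u) (x0 : Dom n) :
    perz u =ᶠ[𝓝 x0] fun x => u (x - fun i => ((rd x0 i : ℤ) : ℝ)) := by
  obtain ⟨δ, hδ, hδs⟩ := hu.2.1.isCompact.exists_thickening_subset_open cube_open hu.2.2
  filter_upwards [Metric.ball_mem_nhds x0 hδ] with x hx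
  by_cases h : rd x = rd x0
  · unfold perz; rw [h]
  · have h1 : perz u x = 0 := by
      by_contra h0
      apply h
      have hm : (x - fun i => ((rd x i : ℤ) : ℝ)) ∈ tsupport u := subset_tsupport u h0
      have : (x0 - fun i => ((rd x i : ℤ) : ℝ)) ∈ unitCube n := by
        apply hδs
        rw [Metric.mem_thickening_iff]
        refine ⟨_, hm, ?_⟩
        rw [dist_sub_right, dist_comm]
        exact hx
      exact (rd_eq this).symm
    rw [h1]
    by_contra h0
    apply h
    have hm : (x - fun i => ((rd x0 i : ℤ) : ℝ)) ∈ tsupport u := subset_tsupport u (Ne.symm h0)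
    exact rd_eq (hu.2.2 hm)

lemma perz_smooth {u : Dom n → U} (hu : CcSmooth (unitCube n) u) : ContDiff ℝ (⊤ : ℕ∞) (perz u) := by
  rw [contDiff_iff_contDiffAt]
  intro x
  refine ContDiffAt.congr_of_eventuallyEq ?_ (perz_local hu x)
  exact (hu.1.comp (contDiff_id.sub contDiff_const)).contDiffAt

lemma perz_cube {u : Dom n → U} (hu : CcSmooth (unitCube n) u) {x : Dom n} (hx : x ∈ unitCube n) :
    perz u =ᶠ[𝓝 x] u := by
  have h : rd x = 0 := rd_eq (by convert hx using 1; funext i; simp)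
  have := perz_local hu x
  rw [h] at this
  filter_upwards [this] with y hy
  rw [hy]; congr 1; funext i; simp

lemma op_mean_zero (hl : 0 < l) (B : (Fin n → ℕ) → (U →L[ℝ] V)) [CompleteSpace U]
    [CompleteSpace V] {u : Dom n → U}
    (hu : ContDiff ℝ (⊤ : ℕ∞) u) (hp : ZPeriodic u) :
    ∫ x in unitCube n, opApply B l u x = 0 := by
  unfold opApply
  have hsm : ∀ β, ContDiff ℝ (⊤ : ℕ∞) (mderiv β u) := fun β => by
    rw [mderiv_eq_Ddir]; exact Ddir_smooth _ hu
  have q1 : ∀ β, Integrable (fun x => B β (mderiv β u x)) (volume.restrict (unitCube n)) :=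
    fun β => cube_int ((B β).continuous.comp (hsm β).continuous)
  rw [integral_finset_sum _ fun β _ => q1 β]
  refine Finset.sum_eq_zero fun β hβ => ?_
  rw [ContinuousLinearMap.integral_comp_comm _ (cube_int (hsm β).continuous)]
  have h0 : ∫ x in unitCube n, mderiv β u x = 0 := by
    rw [mderiv_eq_Ddir]
    have hlen := dirs_length β
    rw [mem_degSet.1 hβ] at hlen
    obtain ⟨j, L, hjL⟩ : ∃ j L, dirs β = j :: L := by
      cases h : dirs β with
      | nil => rw [h] at hlen; simp at hlen; omega
      | cons j L => exact ⟨j, L, rfl⟩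
    rw [hjL, Ddir_cons]
    exact periodic_int_deriv (Ddir_smooth L hu) (Ddir_periodic L hp) j
  rw [h0, map_zero]
end b

variable {n k l : ℕ} {V W U : Type*} [NormedAddCommGroup V] [NormedSpace ℝ V]
    [NormedAddCommGroup W] [InnerProductSpace ℝ W]
    [NormedAddCommGroup U] [NormedSpace ℝ U] 
    {A : (Fin n → ℕ) → (V →L[ℝ] W)} {B : (Fin n → ℕ) → (U →L[ℝ] V)}

lemma qc_cc [CompleteSpace U] [CompleteSpace V] (hk : 0 < k) (hl : 0 < l)
    (hex : ExactPotential A k B l) {F : V → ℝ} (hF : AQuasiconvex A k F)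
    {u : Dom n → U} (hu : CcSmooth (unitCube n) u) (y : V) :
    F y ≤ ∫ x in unitCube n, F (y + opApply B l u x) := by
  have hs := perz_smooth hu
  refine (hF.2 y (opApply B l (perz u)) (opApply_smooth B l hs)
    (opApply_periodic B l (perz_periodic u)) (op_mean_zero hl B hs (perz_periodic u))
    (op_op hk hex hs)).trans_eq ?_
  refine setIntegral_congr_fun cube_meas fun x hx => ?_
  show F _ = F _
  rw [opApply_congr B l (perz_cube hu hx)]

end P13

end Part13

section Part14

section P14

section a
variable {V : Type*} [NormedAddCommGroup V] [NormedSpace ℝ V]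

lemma hasRec_affine {F g : V → ℝ} {K : NNReal} (hF : LipschitzWith K F) (hg : HasRec F g)
    {R : ℝ} (hR : 0 < R) (c : V) : HasRec (fun y => R⁻¹ * F (c + R • y)) g := by
  have hg' : TendstoLocallyUniformly (fun (t : ℝ) (z : V) => F (t • z) / t) g atTop := hg
  rw [Metric.tendstoLocallyUniformly_iff] at hg'
  show TendstoLocallyUniformly (fun (t : ℝ) (z : V) => (R⁻¹ * F (c + R • t • z)) / t) g atTop
  rw [Metric.tendstoLocallyUniformly_iff]
  intro e he x
  obtain ⟨s, hs, h⟩ := hg' (e/2) (by positivity) x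
  refine ⟨s, hs, ?_⟩
  have hlim : Tendsto (fun t : ℝ => R * t) atTop atTop := tendsto_id.const_mul_atTop hR
  filter_upwards [hlim.eventually h, hlim.eventually_gt_atTop (2 * (K * ‖c‖) / e),
    eventually_gt_atTop 0] with t h1 h2 h3 y hy
  have h4 := h1 y hy
  have hRt : 0 < R * t := by positivity
  have h5 := hF.dist_le_mul (c + (R * t) • y) ((R * t) • y)
  rw [Real.dist_eq] at h4 h5 ⊢
  rw [dist_eq_norm, add_sub_cancel_right] at h5
  have e1 : R⁻¹ * F (c + R • t • y) / t = F (c + (R*t) • y) / (R * t) := by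
    rw [smul_smul]; field_simp
  rw [e1]
  have e2 : |F (c + (R*t) • y) / (R * t) - F ((R*t) • y) / (R * t)| < e / 2 := by
    rw [← sub_div, abs_div, abs_of_pos hRt, div_lt_iff₀ hRt]
    rw [div_lt_iff₀ he] at h2
    linarith
  rw [abs_lt] at h4 e2 ⊢
  constructor <;> linarith

lemma lip_affine {F : V → ℝ} {K : NNReal} (hF : LipschitzWith K F) {R : ℝ} (hR : 0 < R) (c : V) :
    LipschitzWith K (fun y => R⁻¹ * F (c + R • y)) := by
  refine LipschitzWith.of_dist_le_mul fun x y => ?_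
  have h := hF.dist_le_mul (c + R • x) (c + R • y)
  rw [dist_add_left, dist_smul₀, Real.norm_of_nonneg hR.le, Real.dist_eq] at h
  rw [Real.dist_eq, ← mul_sub, abs_mul, abs_of_pos (inv_pos.2 hR), inv_mul_le_iff₀ hR]
  linarith

lemma memH_affine {F : V → ℝ} {K : NNReal} (hF : LipschitzWith K F) (hH : MemH F)
    {R : ℝ} (hR : 0 < R) (c : V) : MemH (fun y => R⁻¹ * F (c + R • y)) := by
  obtain ⟨-, -, g, hg⟩ := hH
  exact ⟨(lip_affine hF hR c).continuous, ⟨_, lip_growth (lip_affine hF hR c)⟩, g,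
    hasRec_affine hF hg hR c⟩

lemma rrec_affine {F : V → ℝ} {K : NNReal} (hF : LipschitzWith K F) (hH : MemH F)
    {R : ℝ} (hR : 0 < R) (c : V) (w : V) : rrec (fun y => R⁻¹ * F (c + R • y)) w = rrec F w := by
  obtain ⟨-, -, g, hg⟩ := hH
  rw [hasRec_rrec hg, hasRec_rrec (hasRec_affine hF hg hR c)]

variable {n k : ℕ} {W : Type*} [NormedAddCommGroup W] [NormedSpace ℝ W]
    {A : (Fin n → ℕ) → (V →L[ℝ] W)}

lemma qc_affine {F : V → ℝ} (hF : AQuasiconvex A k F)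
    {R : ℝ} (hR : 0 < R) (c : V) : AQuasiconvex A k (fun y => R⁻¹ * F (c + R • y)) := by
  have hFc := hF.1
  refine ⟨by fun_prop, fun z v hv hp hm hA => ?_⟩
  rw [integral_const_mul]
  refine mul_le_mul_of_nonneg_left ?_ (inv_pos.2 hR).le
  have := hF.2 (c + R • z) (fun x => R • v x) (contDiff_const.smul hv)
    (fun x m => by simp only; rw [hp x m])
    (by rw [integral_smul, hm, smul_zero])
    (fun x => by rw [opApply_smul A k R hv, hA, smul_zero])
  refine this.trans_eq ?_
  simp only [smul_add, add_assoc]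
end a

variable {n k l : ℕ} {V W U : Type*} [NormedAddCommGroup V] [InnerProductSpace ℝ V]
    [FiniteDimensional ℝ V] [MeasurableSpace V] [BorelSpace V]
    [NormedAddCommGroup W] [InnerProductSpace ℝ W] [FiniteDimensional ℝ W]
    [NormedAddCommGroup U] [InnerProductSpace ℝ U] [FiniteDimensional ℝ U]
    {A : (Fin n → ℕ) → (V →L[ℝ] W)} {B : (Fin n → ℕ) → (U →L[ℝ] V)}

lemma nec_dir (hk : 0 < k) (hl : 0 < l) (hexact : ExactPotential A k B l) {t : ℝ} (ht : 0 < t)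
    (nu0 : Measure V) (nuInf : Measure (Metric.sphere (0:V) 1))
    [IsProbabilityMeasure nu0] (hmom : Integrable (fun v : V => ‖v‖) nu0)
    [IsProbabilityMeasure nuInf]
    (hY : memY B l ((∫ v, v ∂nu0) + t • ∫ w, (w : V) ∂nuInf) nu0 (ENNReal.ofReal t • nuInf))
    {F : V → ℝ} {K : NNReal} (hFl : LipschitzWith K F) (hFH : MemH F) (hF : AQuasiconvex A k F) :
    suppFn (derivSet F) (∫ w, (w : V) ∂nuInf) ≤ ∫ w, rrec F (w : V) ∂nuInf := by
  set a := ∫ v, v ∂nu0 with ha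
  set b := ∫ w, (w : V) ∂nuInf with hb
  set I := ∫ w, rrec F (w : V) ∂nuInf with hI
  have stepA : ∀ f : V → ℝ, MemH f → AQuasiconvex A k f →
      f (a + t • b) ≤ (∫ v, f v ∂nu0) + t * ∫ w, rrec f (w : V) ∂nuInf := by
    intro f hfH hf
    obtain ⟨u, hu, -, hlim⟩ := hY
    have := ge_of_tendsto (hlim f hfH) (Eventually.of_forall fun j =>
      qc_cc hk hl hexact hf (hu j) (a + t • b))
    rwa [integral_smul_measure, ENNReal.toReal_ofReal ht.le, smul_eq_mul] at this
  unfold suppFn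
  refine csSup_le ((derivSet_nonempty hFl).image _) ?_
  rintro _ ⟨ζ, ⟨z₀, hz⟩, rfl⟩
  show inner ℝ ζ b ≤ I
  have hidm : Integrable (fun v : V => v) nu0 :=
    (integrable_norm_iff aestronglyMeasurable_id).1 hmom
  have stepB : ∀ R : ℝ, 0 < R → R⁻¹ • (F (z₀ + R • (t • b)) - F z₀) ≤
      (∫ v, R⁻¹ • (F (z₀ + R • (v - a)) - F z₀) ∂nu0) + t * I := by
    intro R hR
    have h1 := stepA _ (memH_affine hFl hFH hR (z₀ - R • a)) (qc_affine hF hR (z₀ - R • a))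
    simp only [rrec_affine hFl hFH hR] at h1
    have e1 : ∀ v : V, z₀ - R • a + R • v = z₀ + R • (v - a) := fun v => by module
    simp only [e1, add_sub_cancel_left] at h1
    have i1 : Integrable (fun v => R⁻¹ * F (z₀ + R • (v - a))) nu0 := by
      have := growth_int hmom (lip_affine hFl hR (z₀ - R • a)).continuous
        (lip_growth (lip_affine hFl hR (z₀ - R • a)))
      simpa only [e1] using this
    have e2 : ∫ v, R⁻¹ • (F (z₀ + R • (v - a)) - F z₀) ∂nu0 =
        (∫ v, R⁻¹ * F (z₀ + R • (v - a)) ∂nu0) - R⁻¹ * F z₀ := by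
      simp only [smul_eq_mul, mul_sub]
      rw [integral_sub i1 (integrable_const _)]
      simp
    rw [e2, smul_eq_mul, mul_sub]
    linarith
  have hdir : ∀ v : V, Tendsto (fun R : ℝ => R⁻¹ • (F (z₀ + R • v) - F z₀)) (𝓝[>] 0)
      (𝓝 (inner ℝ ζ v)) := by
    intro v
    have := (hz.hasLineDerivAt v).tendsto_slope_zero_right
    simpa using this
  have hL := hdir (t • b)
  have hRt : Tendsto (fun R : ℝ => ∫ v, R⁻¹ • (F (z₀ + R • (v - a)) - F z₀) ∂nu0) (𝓝[>] 0)
      (𝓝 (∫ v, inner ℝ ζ (v - a) ∂nu0)) := by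
    refine tendsto_integral_filter_of_dominated_convergence (fun v => K * ‖v - a‖) ?_ ?_ ?_ ?_
    · have := hFl.continuous
      exact Eventually.of_forall fun R => Continuous.aestronglyMeasurable (by fun_prop)
    · filter_upwards [self_mem_nhdsWithin] with R hR
      have hR' : 0 < R := hR
      refine Eventually.of_forall fun v => ?_
      have h := hFl.dist_le_mul (z₀ + R • (v - a)) z₀
      rw [dist_eq_norm, dist_eq_norm, add_sub_cancel_left, norm_smul, Real.norm_of_nonneg hR'.le] at h
      rw [norm_smul, norm_inv, Real.norm_of_nonneg hR'.le, inv_mul_le_iff₀ hR']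
      linarith
    · exact ((hidm.sub (integrable_const a)).norm).const_mul _
    · exact Eventually.of_forall fun v => hdir (v - a)
  have hzero : ∫ v, (inner ℝ ζ (v - a) : ℝ) ∂nu0 = 0 := by
    have hi : Integrable (fun v => v - a) nu0 := hidm.sub (integrable_const a)
    rw [integral_inner hi, integral_sub hidm (integrable_const a)]
    simp [ha]
  rw [hzero] at hRt
  have hfin := le_of_tendsto_of_tendsto hL (hRt.add_const (t * I))
    (by filter_upwards [self_mem_nhdsWithin] with R hR using stepB R hR)
  rw [inner_smul_right, zero_add] at hfin
  exact le_of_mul_le_mul_left hfin ht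

end P14

end Part14

section Part15

section P15

section a
variable {n : ℕ}

lemma oneD {g : ℝ → ℝ} (hg : Continuous g) {φ : Dom n → ℝ} (hφ : Continuous φ)
    (h1 : ∀ x, |φ x| ≤ 1) (h0 : φ 0 = -1) (hm : ∫ x in unitCube n, φ x = 0)
    (hav : ∀ p a : ℝ, g p ≤ ∫ x in unitCube n, g (p + a * φ x)) {s : ℝ} (hs : s ∈ Set.Icc (0:ℝ) 1) :
    g s ≤ (1 - s) * g 0 + s * g 1 := by
  by_contra hcon
  push Not at hcon
  set h : ℝ → ℝ := fun s => g s - ((1 - s) * g 0 + s * g 1) with hh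
  have hc : Continuous h := by fun_prop
  have hh0 : h 0 = 0 := by simp [hh]
  have hh1 : h 1 = 0 := by simp [hh]
  have hhs : 0 < h s := by simp only [hh]; linarith
  obtain ⟨p1, hp1, hmax⟩ := isCompact_Icc.exists_isMaxOn ⟨s, hs⟩ hc.continuousOn
  have hM : ∀ q ∈ Set.Icc (0:ℝ) 1, h q ≤ h p1 := fun q hq => hmax hq
  have hcomp : IsCompact (h ⁻¹' {h p1} ∩ Set.Icc (0:ℝ) 1) :=
    isCompact_Icc.inter_left (isClosed_singleton.preimage hc)
  obtain ⟨p, ⟨hpM, hp⟩, hleast⟩ := hcomp.exists_isLeast ⟨p1, rfl, hp1⟩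
  have hpM' : h p = h p1 := hpM
  have hpos : 0 < h p := by rw [hpM']; exact hhs.trans_le (hM s hs)
  have hp0 : 0 < p := lt_of_le_of_ne hp.1 (fun he => by rw [← he, hh0] at hpos; exact lt_irrefl _ hpos)
  have hp2 : p < 1 := lt_of_le_of_ne hp.2 (fun he => by rw [he, hh1] at hpos; exact lt_irrefl _ hpos)
  set a := min p (1 - p) with ha
  have ha0 : 0 < a := lt_min hp0 (by linarith)
  have hin : ∀ x, p + a * φ x ∈ Set.Icc (0:ℝ) 1 := fun x => by
    have q1 := abs_le.1 (h1 x)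
    have q2 : a ≤ p := min_le_left _ _
    have q3 : a ≤ 1 - p := min_le_right _ _
    constructor <;> nlinarith
  have hint : h p ≤ ∫ x in unitCube n, h (p + a * φ x) := by
    have e1 : ∫ x in unitCube n, h (p + a * φ x) = (∫ x in unitCube n, g (p + a * φ x)) -
        ((1 - p) * g 0 + p * g 1) := by
      have e2 : ∀ x, h (p + a * φ x) = g (p + a * φ x) - (((1 - p) * g 0 + p * g 1) +
          (a * (g 1 - g 0)) * φ x) := fun x => by simp only [hh]; ring
      simp only [e2]
      have i1 : Integrable (fun x => g (p + a * φ x)) (volume.restrict (unitCube n)) :=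
        cube_int (by fun_prop)
      have i2 : Integrable (fun x => (a * (g 1 - g 0)) * φ x) (volume.restrict (unitCube n)) :=
        cube_int (by fun_prop)
      have i3 : Integrable (fun x => ((1 - p) * g 0 + p * g 1) + (a * (g 1 - g 0)) * φ x)
          (volume.restrict (unitCube n)) := cube_int (by fun_prop)
      rw [integral_sub i1 i3, integral_add (integrable_const _) i2,
        integral_const_mul, hm]
      simp
    rw [e1]
    have := hav p a
    simp only [hh]
    linarith
  have hcd : Continuous fun x => h p - h (p + a * φ x) := by fun_prop
  have hnn : ∀ x, 0 ≤ h p - h (p + a * φ x) := fun x => by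
    rw [hpM']; linarith [hM _ (hin x)]
  have hz : ∫ x in unitCube n, (h p - h (p + a * φ x)) = 0 := by
    have i1 : Integrable (fun x => h (p + a * φ x)) (volume.restrict (unitCube n)) :=
      cube_int (by fun_prop)
    refine le_antisymm ?_ (integral_nonneg hnn)
    rw [integral_sub (integrable_const _) i1]
    simp
    exact hint
  rw [setIntegral_eq_zero_iff_of_nonneg_ae (Eventually.of_forall hnn) (cube_int hcd)] at hz
  have h0m : (0 : Dom n) ∈ unitCube n := by rw [unitCube_eq_ball]; simp
  have := Measure.eqOn_open_of_ae_eq hz cube_open hcd.continuousOn continuousOn_const h0m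
  simp only [h0, Pi.zero_apply] at this
  have hle : p ≤ p + a * (-1) := by
    refine hleast ⟨?_, ?_⟩
    · show h _ = h p1
      linarith
    · have := hin 0
      rwa [h0] at this
  linarith

lemma pw_mean {m : Fin n → ℤ} (hm : m ≠ 0) (θ : ℝ) :
    ∫ x in unitCube n, pw (icast m) θ x = 0 := by
  obtain ⟨j, hj⟩ := Function.ne_iff.1 hm
  have hj' : (m j : ℝ) ≠ 0 := by exact_mod_cast hj
  have h := periodic_shift (pw_periodic m θ) (Pi.single j (1 / (2 * (m j : ℝ))))
  have e : ∀ y : Dom n, pw (icast m) θ (Pi.single j (1 / (2 * (m j : ℝ))) + y) =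
      - pw (icast m) θ y := by
    intro y
    unfold pw icast
    rw [← Real.cos_add_pi]
    congr 1
    simp only [Pi.add_apply, mul_add, Finset.sum_add_distrib, Pi.single_apply, mul_ite, mul_zero,
      Finset.sum_ite_eq', Finset.mem_univ, if_true, Finset.sum_ite_eq]
    field_simp
    ring
  simp only [e] at h
  rw [integral_neg] at h
  linarith
end a

section b
variable {n k l : ℕ} {V W U : Type*} [NormedAddCommGroup V] [NormedSpace ℝ V]
    [NormedAddCommGroup W] [NormedSpace ℝ W]
    [NormedAddCommGroup U] [NormedSpace ℝ U]
    {A : (Fin n → ℕ) → (V →L[ℝ] W)} {B : (Fin n → ℕ) → (U →L[ℝ] V)}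

/-- directions of convexity -/
def cvxDir (F : V → ℝ) : Set V := {b | ∀ (z : V) (y s : ℝ), s ∈ Set.Icc (0:ℝ) 1 →
  F (z + (s * y) • b) ≤ (1 - s) * F z + s * F (z + y • b)}

lemma cvxDir_closed {F : V → ℝ} (hF : Continuous F) : IsClosed (cvxDir F) := by
  unfold cvxDir
  simp only [Set.setOf_forall]
  refine isClosed_iInter fun z => isClosed_iInter fun y => isClosed_iInter fun s =>
    isClosed_iInter fun _ => ?_
  exact isClosed_le (by fun_prop) (by fun_prop)

lemma cvxDir_int [CompleteSpace V] {F : V → ℝ} (hF : AQuasiconvex A k F) {m : Fin n → ℤ} (hm : m ≠ 0) {b : V}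
    (hb : opSymbol A k (icast m) b = 0) : b ∈ cvxDir F := by
  intro z y s hs
  have hFc := hF.1
  have := oneD (g := fun s => F (z + (s * y) • b)) (by fun_prop) (pw_cont (icast m) Real.pi)
    (fun x => Real.abs_cos_le_one _) (by simp [pw]) (pw_mean hm Real.pi) ?_ hs
  · simpa using this
  · intro p a
    have h := hF.2 (z + (p * y) • b) (fun x => pw (icast m) Real.pi x • ((a * y) • b))
      ((pw_smooth _ _).smul contDiff_const)
      (zper_smul (pw_periodic m _) (fun _ _ => rfl))
      (by rw [integral_smul_const, pw_mean hm, zero_smul])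
      (fun x => by rw [pw_op, map_smul, hb, smul_zero, smul_zero])
    refine h.trans_eq ?_
    refine integral_congr_ae (Eventually.of_forall fun x => ?_)
    show F _ = F _
    congr 1
    module

lemma symb_hom (c : ℝ) (ξ : Dom n) : opSymbol A k (c • ξ) = c ^ k • opSymbol A k ξ := by
  unfold opSymbol
  rw [Finset.smul_sum]
  refine Finset.sum_congr rfl fun α hα => ?_
  rw [smul_smul]
  congr 1
  simp only [Pi.smul_apply, smul_eq_mul, mul_pow, Finset.prod_mul_distrib]
  rw [Finset.prod_pow_eq_pow_sum, mem_degSet.1 hα]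

lemma symb_cont (b : V) : Continuous fun ξ : Dom n => opSymbol A k ξ b := by
  unfold opSymbol
  simp only [ContinuousLinearMap.sum_apply, ContinuousLinearMap.smul_apply]
  fun_prop

lemma wave_cvx [CompleteSpace V] {F : V → ℝ} (hF : AQuasiconvex A k F) (hex : ExactPotential A k B l) {b : V}
    (hb : b ∈ waveCone A k) : b ∈ cvxDir F := by
  obtain ⟨ξ, hξ, hAb⟩ := hb
  have hb' : b ∈ LinearMap.ker (opSymbol A k ξ : V →ₗ[ℝ] W) := hAb
  rw [hex ξ hξ] at hb'
  obtain ⟨w, hw⟩ := hb'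
  have hw' : opSymbol B l ξ w = b := hw
  set m : ℕ → Fin n → ℤ := fun j i => round (((j:ℝ) + 1) * ξ i) with hm
  set η : ℕ → Dom n := fun j => ((j:ℝ) + 1)⁻¹ • icast (m j) with hη
  have hlim : Tendsto η atTop (𝓝 ξ) := by
    rw [tendsto_pi_nhds]
    intro i
    rw [tendsto_iff_dist_tendsto_zero]
    refine squeeze_zero (fun j => dist_nonneg) (fun j => ?_) tendsto_one_div_add_atTop_nhds_zero_nat
    have hj : (0:ℝ) < (j:ℝ) + 1 := by positivity
    have h1 := abs_sub_round (((j:ℝ) + 1) * ξ i)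
    rw [dist_comm, Real.dist_eq]
    have e : ξ i - η j i = (((j:ℝ) + 1) * ξ i - round (((j:ℝ) + 1) * ξ i)) / ((j:ℝ) + 1) := by
      simp only [hη, hm, icast, Pi.smul_apply, smul_eq_mul]
      field_simp
    rw [e, abs_div, abs_of_pos hj]
    gcongr
    linarith
  have hlim2 : Tendsto (fun j => opSymbol B l (η j) w) atTop (𝓝 b) := by
    rw [← hw']
    exact ((symb_cont (A := B) w).tendsto ξ).comp hlim
  refine (cvxDir_closed hF.1).mem_of_tendsto hlim2 ?_
  filter_upwards [hlim.eventually_ne hξ] with j hj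
  have hj' : (0:ℝ) < (j:ℝ) + 1 := by positivity
  have hm0 : m j ≠ 0 := by
    intro h0
    apply hj
    simp only [hη, h0]
    funext i
    simp [icast]
  refine cvxDir_int hF hm0 ?_
  have h2 : opSymbol B l (η j) w ∈ LinearMap.ker (opSymbol A k (η j) : V →ₗ[ℝ] W) := by
    rw [hex _ hj]; exact ⟨w, rfl⟩
  have h3 : opSymbol A k (η j) (opSymbol B l (η j) w) = 0 := h2
  have h4 : icast (m j) = ((j:ℝ) + 1) • η j := by
    simp only [hη]; rw [smul_smul, mul_inv_cancel₀ hj'.ne', one_smul]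
  rw [h4, symb_hom, ContinuousLinearMap.smul_apply, h3, smul_zero]

lemma cvx_lip {F : V → ℝ} {c : ℝ} (hg : ∀ z, |F z| ≤ c * (1 + ‖z‖)) {b : V} (hb : b ∈ cvxDir F)
    (z : V) (y : ℝ) : F (z + y • b) - F z ≤ (c * ‖b‖) * |y| := by
  have key : ∀ T : ℝ, 1 ≤ T → F (z + y • b) ≤ F z + (c * (2 + 2 * ‖z‖)) * T⁻¹ + (c * ‖b‖) * |y| := by
    intro T hT
    have hT0 : 0 < T := by linarith
    have hT1 : T⁻¹ ≤ 1 := inv_le_one_of_one_le₀ hT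
    have hTp : 0 < T⁻¹ := inv_pos.2 hT0
    have h := hb z (T * y) T⁻¹ ⟨hTp.le, hT1⟩
    rw [← mul_assoc, inv_mul_cancel₀ hT0.ne', one_mul] at h
    have h1 := (abs_le.1 (hg z)).1
    have h2 := (abs_le.1 (hg (z + (T * y) • b))).2
    have hc : 0 ≤ c := by
      have := (abs_nonneg _).trans (hg 0)
      simpa using this
    have h3 : ‖z + (T * y) • b‖ ≤ ‖z‖ + T * |y| * ‖b‖ := by
      refine (norm_add_le _ _).trans_eq ?_
      rw [norm_smul, norm_mul, Real.norm_of_nonneg hT0.le, Real.norm_eq_abs]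
    have h4 : F (z + (T * y) • b) - F z ≤ c * (2 + 2 * ‖z‖) + c * (T * |y| * ‖b‖) := by
      nlinarith
    have h5 := mul_le_mul_of_nonneg_left h4 hTp.le
    have h6 : T⁻¹ * (c * (2 + 2 * ‖z‖) + c * (T * |y| * ‖b‖)) =
      (c * (2 + 2 * ‖z‖)) * T⁻¹ + (c * ‖b‖) * |y| := by field_simp
    rw [h6] at h5
    linarith
  have hlim : Tendsto (fun T : ℝ => F z + (c * (2 + 2 * ‖z‖)) * T⁻¹ + (c * ‖b‖) * |y|) atTop
      (𝓝 (F z + (c * (2 + 2 * ‖z‖)) * 0 + (c * ‖b‖) * |y|)) :=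
    ((tendsto_inv_atTop_zero.const_mul _).const_add _).add_const _
  have := ge_of_tendsto hlim (by filter_upwards [eventually_ge_atTop 1] with T hT using key T hT)
  linarith

/-- Lipschitz directions -/
def lipDir (F : V → ℝ) : Submodule ℝ V where
  carrier := {b | ∃ C : ℝ, 0 ≤ C ∧ ∀ (z : V) (y : ℝ), F (z + y • b) - F z ≤ C * |y|}
  zero_mem' := ⟨0, le_rfl, fun z y => by simp⟩
  add_mem' := by
    rintro a b ⟨C, hC, h⟩ ⟨D, hD, h'⟩
    refine ⟨C + D, by positivity, fun z y => ?_⟩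
    have h1 := h z y
    have h2 := h' (z + y • a) y
    rw [smul_add, ← add_assoc]
    linarith
  smul_mem' := by
    rintro c b ⟨C, hC, h⟩
    refine ⟨C * |c|, by positivity, fun z y => ?_⟩
    have h1 := h z (y * c)
    rw [abs_mul] at h1
    rw [smul_smul]
    linarith

lemma lip_of_dirs [FiniteDimensional ℝ V] {F : V → ℝ} (h : lipDir F = ⊤) :
    ∃ K : NNReal, LipschitzWith K F := by
  set e := Module.finBasis ℝ V
  have he : ∀ i, ∃ C : ℝ, 0 ≤ C ∧ ∀ (z : V) (y : ℝ), F (z + y • e i) - F z ≤ C * |y| := by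
    intro i
    have : e i ∈ lipDir F := by rw [h]; trivial
    exact this
  choose C hC hCl using he
  set L := fun i => LinearMap.toContinuousLinearMap (e.coord i) with hL
  have hsum : ∀ (s : Finset (Fin (Module.finrank ℝ V))) (r : Fin (Module.finrank ℝ V) → ℝ) (z : V),
      F (z + ∑ i ∈ s, r i • e i) - F z ≤ ∑ i ∈ s, C i * |r i| := by
    intro s r
    induction s using Finset.induction_on with
    | empty => intro z; simp
    | insert i s hi ih =>
      intro z
      rw [Finset.sum_insert hi, Finset.sum_insert hi, ← add_assoc]
      have h1 := hCl i z (r i)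
      have h2 := ih (z + r i • e i)
      linarith
  have hKn : 0 ≤ ∑ i, C i * ‖L i‖ := Finset.sum_nonneg fun i _ => mul_nonneg (hC i) (norm_nonneg _)
  refine ⟨⟨∑ i, C i * ‖L i‖, hKn⟩, LipschitzWith.of_le_add_mul _ fun x y => ?_⟩
  have h1 := hsum Finset.univ (fun i => e.repr (x - y) i) y
  rw [e.sum_repr, add_sub_cancel] at h1
  have h2 : ∑ i, C i * |e.repr (x - y) i| ≤ (∑ i, C i * ‖L i‖) * dist x y := by
    rw [Finset.sum_mul]
    refine Finset.sum_le_sum fun i _ => ?_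
    rw [mul_assoc, dist_eq_norm]
    exact mul_le_mul_of_nonneg_left ((L i).le_opNorm (x - y)) (hC i)
  show F x ≤ F y + (∑ i, C i * ‖L i‖) * dist x y
  linarith

lemma qc_lip [FiniteDimensional ℝ V] (hspan : SpanningCone A k)
    (hex : ExactPotential A k B l) {F : V → ℝ} (hF : AQuasiconvex A k F) (hH : LinearGrowth F) :
    ∃ K : NNReal, LipschitzWith K F := by
  have : CompleteSpace V := FiniteDimensional.complete ℝ V
  obtain ⟨c, hc⟩ := hH
  have hc0 : 0 ≤ c := by
    have := (abs_nonneg _).trans (hc 0)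
    simpa using this
  refine lip_of_dirs (eq_top_iff.2 ?_)
  rw [← hspan, Submodule.span_le]
  intro b hb
  exact ⟨c * ‖b‖, by positivity, fun z y => cvx_lip hc (wave_cvx hF hex hb) z y⟩
end b

end P15

end Part15

/-! ## Statement 19: characterization of diffuse concentration under a Jensen condition -/

theorem stmt19 {n k l : ℕ} (hn : 0 < n) (hk : 0 < k) (hl : 0 < l)
    {V W U : Type*} [NormedAddCommGroup V] [InnerProductSpace ℝ V] [FiniteDimensional ℝ V]
    [MeasurableSpace V] [BorelSpace V]
    [NormedAddCommGroup W] [InnerProductSpace ℝ W] [FiniteDimensional ℝ W]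
    [NormedAddCommGroup U] [InnerProductSpace ℝ U] [FiniteDimensional ℝ U]
    (A : (Fin n → ℕ) → (V →L[ℝ] W)) (B : (Fin n → ℕ) → (U →L[ℝ] V))
    (hspan : SpanningCone A k) (hexact : ExactPotential A k B l)
    (t : ℝ) (ht : 0 < t)
    (nu0 : Measure V) (nuInf : Measure (Metric.sphere (0:V) 1))
    (hprob : IsProbabilityMeasure nu0) (hmom : Integrable (fun v : V => ‖v‖) nu0)
    (hprobInf : IsProbabilityMeasure nuInf)
    (hJensen : ∀ F : V → ℝ, MemH F → AQuasiconvex A k F →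
      F (∫ v, v ∂nu0) ≤ ∫ v, F v ∂nu0) :
    memY B l ((∫ v, v ∂nu0) + t • ∫ w, (w : V) ∂nuInf) nu0 (ENNReal.ofReal t • nuInf) ↔
      ∀ F : V → ℝ, MemH F → AQuasiconvex A k F →
        suppFn (derivSet F) (∫ w, (w : V) ∂nuInf) ≤ ∫ w, rrec F (w : V) ∂nuInf := by
  haveI := hprob
  haveI := hprobInf
  constructor
  · intro hY F hFH hF
    obtain ⟨K, hK⟩ := qc_lip hspan hexact hF hFH.2.1
    exact nec_dir hk hl hexact ht nu0 nuInf hmom hY hK hFH hF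
  · intro hG
    exact suff_dir hn hexact ht nu0 nuInf hmom hJensen hG

end
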